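/- arXiv:1609.09151 — 2 statements merged into one kernel-verified Lean document; each statement's English description precedes it below -/
import Mathlib

section
/- Let n₁, n₂ ≥ 1 be integers and μ₁, μ₂ ∈ ℝ. Let u₁ be a positive minimal C² solution of −Δ₁u₁ = μ₁u₁ on ℝ^{n₁}×(0,∞) and u₂ a positive minimal C² solution of −Δ₂u₂ = μ₂u₂ on ℝ^{n₂}×(0,∞). Then the product u(x₁,y₁,x₂,y₂) = u₁(x₁,y₁)·u₂(x₂,y₂) is a positive minimal C² solution of −(Δ₁ + Δ₂)u = (μ₁+μ₂)u on ℝ^{n₁}×(0,∞)×ℝ^{n₂}×(0,∞): every C² solution v of −(Δ₁+Δ₂)v = (μ₁+μ₂)v with 0 ≤ v ≤ u equals C·u for some constant C ∈ [0,1]. -/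
open Real Topology

noncomputable def lapX {n : ℕ} (u : EuclideanSpace ℝ (Fin n) → ℝ → ℝ)
    (x : EuclideanSpace ℝ (Fin n)) (y : ℝ) : ℝ :=
  ∑ i : Fin n, iteratedDeriv 2 (fun t : ℝ => u (x + t • EuclideanSpace.single i (1:ℝ)) y) 0

noncomputable def hypLap (n : ℕ) (u : EuclideanSpace ℝ (Fin n) → ℝ → ℝ)
    (x : EuclideanSpace ℝ (Fin n)) (y : ℝ) : ℝ :=
  y ^ 2 * (lapX u x y + iteratedDeriv 2 (u x) y) - ((n : ℝ) - 1) * y * deriv (u x) y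

noncomputable def hypLap1 (n₁ n₂ : ℕ)
    (u : EuclideanSpace ℝ (Fin n₁) → ℝ → EuclideanSpace ℝ (Fin n₂) → ℝ → ℝ)
    (x₁ : EuclideanSpace ℝ (Fin n₁)) (y₁ : ℝ)
    (x₂ : EuclideanSpace ℝ (Fin n₂)) (y₂ : ℝ) : ℝ :=
  hypLap n₁ (fun x y => u x y x₂ y₂) x₁ y₁

noncomputable def hypLap2 (n₁ n₂ : ℕ)
    (u : EuclideanSpace ℝ (Fin n₁) → ℝ → EuclideanSpace ℝ (Fin n₂) → ℝ → ℝ)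
    (x₁ : EuclideanSpace ℝ (Fin n₁)) (y₁ : ℝ)
    (x₂ : EuclideanSpace ℝ (Fin n₂)) (y₂ : ℝ) : ℝ :=
  hypLap n₂ (u x₁ y₁) x₂ y₂

/-- `w` is a positive minimal C² `μ`-harmonic function on the half-space model `ℍ^{n+1}`. -/
def MinimalHarmonic (n : ℕ) (μ : ℝ) (w : EuclideanSpace ℝ (Fin n) → ℝ → ℝ) : Prop :=
  (∀ x, ∀ y : ℝ, 0 < y → 0 < w x y) ∧
  ContDiffOn ℝ 2 (fun p : EuclideanSpace ℝ (Fin n) × ℝ => w p.1 p.2)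
    {p : EuclideanSpace ℝ (Fin n) × ℝ | 0 < p.2} ∧
  (∀ x, ∀ y : ℝ, 0 < y → -(hypLap n w x y) = μ * w x y) ∧
  ∀ v : EuclideanSpace ℝ (Fin n) → ℝ → ℝ,
    ContDiffOn ℝ 2 (fun p : EuclideanSpace ℝ (Fin n) × ℝ => v p.1 p.2)
      {p : EuclideanSpace ℝ (Fin n) × ℝ | 0 < p.2} →
    (∀ x, ∀ y : ℝ, 0 < y → -(hypLap n v x y) = μ * v x y) →
    (∀ x, ∀ y : ℝ, 0 < y → 0 ≤ v x y ∧ v x y ≤ w x y) →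
    ∃ C : ℝ, C ∈ Set.Icc (0:ℝ) 1 ∧ ∀ x, ∀ y : ℝ, 0 < y → v x y = C * w x y

/-!
Let `0 ≤ v ≤ u = u₁u₂` be as in the theorem. It is enough to show that `(Δ₁ + μ₁)v = 0`, hence also
`(Δ₂ + μ₂)v = 0`: minimality of `u₁` then makes `v` a multiple of `u₁` on each slice
`(x₂, y₂) = const`, and minimality of `u₂` on the slice over one point of the first factor makes the
multiplier proportional to `u₂`.

Convolution with a compactly supported kernel depending only on the hyperbolic distances in the two
factors commutes with `Δ₁` and `Δ₂`, so it preserves the space of solutions of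
`(Δ₁ + Δ₂ + μ₁ + μ₂)w = 0`. If the kernel lives close to the diagonal, a weak Harnack inequality
bounds the convolution of a nonnegative solution `w` by a multiple of `w`; after rescaling, the
convolution operator `A` is such that `1 + A` and `1 - A` both preserve nonnegativity. Positive
multiples of `1 + n A ^ 2` are polynomials with nonnegative coefficients in `1 + A` and `1 - A`, so
`A ^ 2` preserves nonnegativity as well; with `A u = 0` this gives first `A ^ 2 v = 0` and then
`A v = 0`. Applied to convolution with `(Δ₁ + μ₁)F` for bumps `F` concentrating at the diagonal,
this says that `(Δ₁ + μ₁)v = 0`.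

The Harnack inequality comes from testing the equation against a smooth approximation of
`(z ^ 2) ^ (-a)`, where `z` is the sum of `cosh d - 1` over the two factors and `a` is a quarter of
the dimension, cut off so steeply that the cutoff dominates all lower-order terms.
-/

open MeasureTheory
open scoped ContDiff

section DirectionalDerivative

variable {V : Type*} [NormedAddCommGroup V] [NormedSpace ℝ V]

/-- The derivative of `φ` in the direction `e`, as a function on the whole space so that it can be
iterated. Being defined through `fderiv`, it is `0` wherever `φ` is not differentiable. -/
noncomputable def dirDeriv (e : V) (φ : V → ℝ) (q : V) : ℝ := fderiv ℝ φ q e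

variable {φ ψ : V → ℝ}

lemma hasDerivAt_line (hφ : Differentiable ℝ φ) (q e : V) (t : ℝ) :
    HasDerivAt (fun t : ℝ => φ (q + t • e)) (dirDeriv e φ (q + t • e)) t := by
  have hline : HasDerivAt (fun t : ℝ => q + t • e) e t := by
    simpa using ((hasDerivAt_id t).smul_const e).const_add q
  exact (hφ (q + t • e)).hasFDerivAt.comp_hasDerivAt t hline

lemma dirDeriv_eq_of_hasDerivAt (hφ : Differentiable ℝ φ) {q e : V} {c : ℝ}
    (h : HasDerivAt (fun t : ℝ => φ (q + t • e)) c 0) : dirDeriv e φ q = c := by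
  simpa using (hasDerivAt_line hφ q e 0).unique h

lemma contDiff_dirDeriv_apply {X : Type*} [NormedAddCommGroup X] [NormedSpace ℝ X]
    {f : X → V → ℝ} {g : X → V} {m : WithTop ℕ∞} (hf : ContDiff ℝ (m + 1) (Function.uncurry f))
    (hg : ContDiff ℝ m g) (e : V) : ContDiff ℝ m fun x => dirDeriv e (f x) (g x) :=
  ContDiff.fderiv_apply hf hg contDiff_const le_rfl

lemma contDiff_dirDeriv {m : WithTop ℕ∞} (hφ : ContDiff ℝ (m + 1) φ) (e : V) :
    ContDiff ℝ m (dirDeriv e φ) :=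
  contDiff_dirDeriv_apply (f := fun _ => φ) (hφ.comp contDiff_snd) contDiff_id e

lemma contDiff_one_dirDeriv (hφ : ContDiff ℝ 2 φ) (e : V) : ContDiff ℝ 1 (dirDeriv e φ) :=
  contDiff_dirDeriv (by rwa [one_add_one_eq_two]) e

lemma continuous_dirDeriv (hφ : ContDiff ℝ 1 φ) (e : V) : Continuous (dirDeriv e φ) :=
  (contDiff_dirDeriv (m := 0) (by rwa [zero_add]) e).continuous

lemma deriv_line (hφ : Differentiable ℝ φ) (q e : V) :
    deriv (fun t : ℝ => φ (q + t • e)) = fun t => dirDeriv e φ (q + t • e) :=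
  funext fun t => (hasDerivAt_line hφ q e t).deriv

lemma iteratedDeriv_two_line (hφ : ContDiff ℝ 2 φ) (q e : V) :
    iteratedDeriv 2 (fun t : ℝ => φ (q + t • e)) =
      fun t => dirDeriv e (dirDeriv e φ) (q + t • e) := by
  rw [iteratedDeriv_succ, iteratedDeriv_one, deriv_line (hφ.differentiable two_ne_zero),
    deriv_line ((contDiff_one_dirDeriv hφ e).differentiable one_ne_zero)]

lemma dirDeriv_mul (hφ : Differentiable ℝ φ) (hψ : Differentiable ℝ ψ) (e q : V) :
    dirDeriv e (fun q => φ q * ψ q) q = dirDeriv e φ q * ψ q + φ q * dirDeriv e ψ q := by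
  simp only [dirDeriv, fderiv_fun_mul (hφ q) (hψ q), add_apply, smul_apply, smul_eq_mul]
  ring

lemma dirDeriv_comp {f : ℝ → ℝ} (hf : Differentiable ℝ f) (hφ : Differentiable ℝ φ) (e q : V) :
    dirDeriv e (fun q => f (φ q)) q = deriv f (φ q) * dirDeriv e φ q := by
  have hcomp := (hf (φ q)).hasDerivAt.comp_hasFDerivAt q (hφ q).hasFDerivAt
  exact congrArg (· e) hcomp.fderiv

lemma dirDeriv_dirDeriv_comp {f : ℝ → ℝ} (hf : ContDiff ℝ 2 f) (hφ : ContDiff ℝ 2 φ) (e q : V) :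
    dirDeriv e (dirDeriv e fun q => f (φ q)) q =
      deriv (deriv f) (φ q) * dirDeriv e φ q ^ 2 + deriv f (φ q) * dirDeriv e (dirDeriv e φ) q := by
  have hφ' : Differentiable ℝ φ := hφ.differentiable two_ne_zero
  have hf' : Differentiable ℝ (deriv f) := hf.differentiable_deriv_two
  have hfirst : (dirDeriv e fun q => f (φ q)) = fun q => deriv f (φ q) * dirDeriv e φ q :=
    funext (dirDeriv_comp (hf.differentiable two_ne_zero) hφ' e)
  rw [hfirst, dirDeriv_mul (φ := fun q => deriv f (φ q)) (hf'.comp hφ')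
    ((contDiff_one_dirDeriv hφ e).differentiable one_ne_zero), dirDeriv_comp hf' hφ']
  ring

lemma integral_dirDeriv_mul_dirDeriv_symm [FiniteDimensional ℝ V] [MeasurableSpace V]
    [BorelSpace V] (μ : Measure V) [μ.IsAddHaarMeasure] {b : V → ℝ} (hφ : ContDiff ℝ 2 φ)
    (hψ : ContDiff ℝ 2 ψ) (hb : ContDiff ℝ 1 b) (hs : HasCompactSupport φ) (e : V) :
    ∫ q, dirDeriv e (fun q => b q * dirDeriv e φ q) q * ψ q ∂μ =
      ∫ q, φ q * dirDeriv e (fun q => b q * dirDeriv e ψ q) q ∂μ := by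
  have hφ₁ : ContDiff ℝ 1 φ := hφ.of_le one_le_two
  have hψ₁ : ContDiff ℝ 1 ψ := hψ.of_le one_le_two
  have hbφ : ContDiff ℝ 1 (fun q => b q * dirDeriv e φ q) := hb.mul (contDiff_one_dirDeriv hφ e)
  have hbψ : ContDiff ℝ 1 (fun q => b q * dirDeriv e ψ q) := hb.mul (contDiff_one_dirDeriv hψ e)
  have hs' : HasCompactSupport (dirDeriv e φ) := hs.fderiv_apply ℝ e
  have hsb : HasCompactSupport (fun q => b q * dirDeriv e φ q) := hs'.mul_left
  have moveφ : ∫ q, b q * dirDeriv e φ q * dirDeriv e ψ q ∂μ =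
      -∫ q, dirDeriv e (fun q => b q * dirDeriv e φ q) q * ψ q ∂μ :=
    integral_mul_fderiv_eq_neg_fderiv_mul_of_integrable
      (((continuous_dirDeriv hbφ e).mul hψ.continuous).integrable_of_hasCompactSupport
        (hsb.fderiv_apply ℝ e).mul_right)
      ((hbφ.continuous.mul (continuous_dirDeriv hψ₁ e)).integrable_of_hasCompactSupport
        hsb.mul_right)
      ((hbφ.continuous.mul hψ.continuous).integrable_of_hasCompactSupport hsb.mul_right)
      (fun x _ => hbφ.differentiable one_ne_zero x) (fun x _ => hψ₁.differentiable one_ne_zero x)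
  have moveψ : ∫ q, φ q * dirDeriv e (fun q => b q * dirDeriv e ψ q) q ∂μ =
      -∫ q, dirDeriv e φ q * (b q * dirDeriv e ψ q) ∂μ :=
    integral_mul_fderiv_eq_neg_fderiv_mul_of_integrable
      (((continuous_dirDeriv hφ₁ e).mul hbψ.continuous).integrable_of_hasCompactSupport
        hs'.mul_right)
      ((hφ.continuous.mul (continuous_dirDeriv hbψ e)).integrable_of_hasCompactSupport hs.mul_right)
      ((hφ.continuous.mul hbψ.continuous).integrable_of_hasCompactSupport hs.mul_right)
      (fun x _ => hφ₁.differentiable one_ne_zero x) (fun x _ => hbψ.differentiable one_ne_zero x)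
  rw [moveψ, ← neg_eq_iff_eq_neg.2 moveφ]
  simp only [mul_comm (b _), mul_assoc]

end DirectionalDerivative

/-- The half-space model in the coordinates `(x, s)` with `s = log y`, in which translations in
`s` act by dilations and every function is defined on a full vector space. -/
abbrev LogHalfSpace (n : ℕ) := EuclideanSpace ℝ (Fin n) × ℝ

namespace LogHalfSpace

variable {n : ℕ}

/-- The `i`-th horizontal coordinate direction. -/
noncomputable def horizontal (i : Fin n) : LogHalfSpace n := (EuclideanSpace.single i 1, 0)

/-- The direction of the geodesics `x = const`. -/
noncomputable def vertical (n : ℕ) : LogHalfSpace n := (0, 1)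

/-- The hyperbolic Laplacian `Δ` of `ℍ^{n+1}` in the coordinates `(x, s)`. -/
noncomputable def laplacian (n : ℕ) (φ : LogHalfSpace n → ℝ) (q : LogHalfSpace n) : ℝ :=
  exp (2 * q.2) * ∑ i : Fin n, dirDeriv (horizontal i) (dirDeriv (horizontal i) φ) q +
    dirDeriv (vertical n) (dirDeriv (vertical n) φ) q - n * dirDeriv (vertical n) φ q

end LogHalfSpace

open LogHalfSpace

section Coordinates

lemma deriv_comp_exp {f : ℝ → ℝ} (hf : DifferentiableOn ℝ f (Set.Ioi 0)) (s : ℝ) :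
    deriv (fun s => f (exp s)) s = deriv f (exp s) * exp s :=
  (((hf.differentiableAt (Ioi_mem_nhds (exp_pos s))).hasDerivAt).comp s (hasDerivAt_exp s)).deriv

lemma iteratedDeriv_two_comp_exp {f : ℝ → ℝ} (hf : ContDiffOn ℝ 2 f (Set.Ioi 0)) (s : ℝ) :
    iteratedDeriv 2 (fun s => f (exp s)) s =
      iteratedDeriv 2 f (exp s) * exp s ^ 2 + deriv f (exp s) * exp s := by
  have hf' : DifferentiableOn ℝ (deriv f) (Set.Ioi 0) :=
    (hf.deriv_of_isOpen (m := 1) isOpen_Ioi (by norm_num)).differentiableOn one_ne_zero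
  have hfirst : deriv (fun s => f (exp s)) = fun s => deriv f (exp s) * exp s :=
    funext (deriv_comp_exp (hf.differentiableOn two_ne_zero))
  have hf'_exp : DifferentiableAt ℝ (fun s => deriv f (exp s)) s :=
    (hf'.differentiableAt (Ioi_mem_nhds (exp_pos s))).comp s differentiableAt_exp
  rw [iteratedDeriv_succ, iteratedDeriv_one, hfirst,
    deriv_fun_mul hf'_exp differentiableAt_exp, deriv_comp_exp hf', Real.deriv_exp,
    iteratedDeriv_succ, iteratedDeriv_one]
  ring

variable {n : ℕ} {u : EuclideanSpace ℝ (Fin n) → ℝ → ℝ}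

lemma contDiff_log_coordinates {m : WithTop ℕ∞}
    (hu : ContDiffOn ℝ m (fun p : EuclideanSpace ℝ (Fin n) × ℝ => u p.1 p.2) {p | 0 < p.2}) :
    ContDiff ℝ m fun q : LogHalfSpace n => u q.1 (exp q.2) :=
  hu.comp_contDiff (f := fun q : LogHalfSpace n => (q.1, exp q.2)) (by fun_prop)
    fun q => exp_pos q.2

lemma hypLap_exp
    (hu : ContDiffOn ℝ 2 (fun p : EuclideanSpace ℝ (Fin n) × ℝ => u p.1 p.2) {p | 0 < p.2})
    (x : EuclideanSpace ℝ (Fin n)) (s : ℝ) :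
    hypLap n u x (exp s) = laplacian n (fun q => u q.1 (exp q.2)) (x, s) := by
  set φ : LogHalfSpace n → ℝ := fun q => u q.1 (exp q.2)
  have hφ : ContDiff ℝ 2 φ := contDiff_log_coordinates hu
  have hux : ContDiffOn ℝ 2 (u x) (Set.Ioi 0) :=
    hu.comp (f := fun y => (x, y)) (by fun_prop) fun y hy => hy
  have horizontal_eq (i : Fin n) :
      iteratedDeriv 2 (fun t : ℝ => u (x + t • EuclideanSpace.single i (1:ℝ)) (exp s)) 0 =
        dirDeriv (horizontal i) (dirDeriv (horizontal i) φ) (x, s) := by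
    simpa [φ, horizontal] using congrFun (iteratedDeriv_two_line hφ (x, s) (horizontal i)) 0
  have vertical_eq : deriv (fun s => u x (exp s)) s = dirDeriv (vertical n) φ (x, s) := by
    simpa [φ, vertical] using
      congrFun (deriv_line (hφ.differentiable two_ne_zero) (x, 0) (vertical n)) s
  have vertical_eq_two : iteratedDeriv 2 (fun s => u x (exp s)) s =
      dirDeriv (vertical n) (dirDeriv (vertical n) φ) (x, s) := by
    simpa [φ, vertical] using congrFun (iteratedDeriv_two_line hφ (x, 0) (vertical n)) s
  simp only [hypLap, lapX, laplacian, horizontal_eq, ← vertical_eq, ← vertical_eq_two,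
    deriv_comp_exp (hux.differentiableOn two_ne_zero), iteratedDeriv_two_comp_exp hux, two_mul,
    exp_add]
  ring

end Coordinates

namespace LogHalfSpace

variable {n : ℕ} {φ ψ : LogHalfSpace n → ℝ}

lemma continuous_laplacian_apply {X : Type*} [NormedAddCommGroup X] [NormedSpace ℝ X]
    {f : X → LogHalfSpace n → ℝ} {g : X → LogHalfSpace n}
    (hf : ContDiff ℝ 2 (Function.uncurry f)) (hg : Continuous g) :
    Continuous fun x => laplacian n (f x) (g x) := by
  have hf₁ (e : LogHalfSpace n) : Continuous fun x => dirDeriv e (f x) (g x) :=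
    (contDiff_dirDeriv_apply (hf.of_le (m := 0 + 1) (by norm_num)) (contDiff_zero.2 hg)
      e).continuous
  have hf₂ (e : LogHalfSpace n) : Continuous fun x => dirDeriv e (dirDeriv e (f x)) (g x) :=
    (contDiff_dirDeriv_apply (f := fun x => dirDeriv e (f x)) (m := 0)
      (contDiff_dirDeriv_apply (f := fun y : X × LogHalfSpace n => f y.1) (g := Prod.snd)
        (hf.comp (f := fun y : (X × LogHalfSpace n) × LogHalfSpace n => (y.1.1, y.2))
          (by fun_prop)) contDiff_snd e) (contDiff_zero.2 hg) e).continuous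
  unfold laplacian
  fun_prop

lemma laplacian_congr {q : LogHalfSpace n} (h : φ =ᶠ[𝓝 q] ψ) :
    laplacian n φ q = laplacian n ψ q := by
  have hfirst (e : LogHalfSpace n) : dirDeriv e φ =ᶠ[𝓝 q] dirDeriv e ψ :=
    (h.fderiv (𝕜 := ℝ)).mono fun _ hx => DFunLike.congr_fun hx e
  have hsecond (e : LogHalfSpace n) : dirDeriv e (dirDeriv e φ) q = dirDeriv e (dirDeriv e ψ) q :=
    DFunLike.congr_fun (hfirst e).fderiv_eq e
  simp only [laplacian, hsecond, (hfirst _).eq_of_nhds]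

/-- The density of the hyperbolic volume with respect to `dx ds`. -/
noncomputable def density (n : ℕ) (q : LogHalfSpace n) : ℝ := exp (-(n * q.2))

lemma contDiff_density {m : WithTop ℕ∞} : ContDiff ℝ m (density n) := by
  unfold density
  fun_prop

lemma density_pos (q : LogHalfSpace n) : 0 < density n q := exp_pos _

lemma laplacian_mul_density (hφ : ContDiff ℝ 2 φ) (q : LogHalfSpace n) :
    laplacian n φ q * density n q =
      (∑ i : Fin n, dirDeriv (horizontal i)
        (fun q => exp (2 * q.2) * density n q * dirDeriv (horizontal i) φ q) q) +
      dirDeriv (vertical n) (fun q => density n q * dirDeriv (vertical n) φ q) q := by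
  have hdensity : Differentiable ℝ (density n) :=
    (contDiff_density (m := 1)).differentiable one_ne_zero
  have hweight : Differentiable ℝ (fun q : LogHalfSpace n => exp (2 * q.2) * density n q) := by
    fun_prop
  have hφ' (e : LogHalfSpace n) : Differentiable ℝ (dirDeriv e φ) :=
    (contDiff_one_dirDeriv hφ e).differentiable one_ne_zero
  have weight_horizontal (i : Fin n) :
      dirDeriv (horizontal i) (fun q : LogHalfSpace n => exp (2 * q.2) * density n q) q = 0 :=
    dirDeriv_eq_of_hasDerivAt hweight (by simpa [horizontal, density] using hasDerivAt_const _ _)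
  have density_vertical : dirDeriv (vertical n) (density n) q = -n * density n q := by
    refine dirDeriv_eq_of_hasDerivAt hdensity ?_
    have hlinear : HasDerivAt (fun t : ℝ => -(n * (q.2 + t))) (-(n : ℝ)) 0 := by
      simpa using (((hasDerivAt_id' (0:ℝ)).const_add q.2).const_mul (n:ℝ)).fun_neg
    simpa [density, vertical, mul_comm] using hlinear.exp
  have horizontal_eq (i : Fin n) := dirDeriv_mul hweight (hφ' (horizontal i)) (horizontal i) q
  simp only [dirDeriv_mul hdensity (hφ' _), horizontal_eq, weight_horizontal, density_vertical,
    zero_mul, zero_add, ← Finset.mul_sum, laplacian]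
  ring

instance isAddHaarMeasure_volume : (volume : Measure (LogHalfSpace n)).IsAddHaarMeasure :=
  inferInstanceAs ((volume : Measure (EuclideanSpace ℝ (Fin n))).prod
    (volume : Measure ℝ)).IsAddHaarMeasure

/-- The Riemannian measure of `ℍ^{n+1}` in the coordinates `(x, s)`. -/
noncomputable def hyperbolicVolume (n : ℕ) : Measure (LogHalfSpace n) :=
  volume.withDensity fun q => ENNReal.ofReal (density n q)

instance : SFinite (hyperbolicVolume n) :=
  inferInstanceAs (SFinite (volume.withDensity _))

instance : IsLocallyFiniteMeasure (hyperbolicVolume n) :=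
  IsLocallyFiniteMeasure.withDensity_ofReal (contDiff_density (m := 0)).continuous

instance : (hyperbolicVolume n).IsOpenPosMeasure :=
  (withDensity_absolutelyContinuous'
    (contDiff_density (m := 0)).continuous.measurable.ennreal_ofReal.aemeasurable
    (.of_forall fun q => by simpa using density_pos q)).isOpenPosMeasure

lemma integral_hyperbolicVolume (f : LogHalfSpace n → ℝ) :
    ∫ q, f q ∂hyperbolicVolume n = ∫ q, f q * density n q := by
  rw [hyperbolicVolume, integral_withDensity_eq_integral_toReal_smul
    (contDiff_density (m := 0)).continuous.measurable.ennreal_ofReal (.of_forall fun _ => by simp)]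
  simp only [ENNReal.toReal_ofReal (density_pos _).le, smul_eq_mul, mul_comm]

lemma integral_laplacian_mul_symm (hφ : ContDiff ℝ 2 φ) (hψ : ContDiff ℝ 2 ψ)
    (hs : HasCompactSupport φ) :
    ∫ q, laplacian n φ q * ψ q ∂hyperbolicVolume n =
      ∫ q, φ q * laplacian n ψ q ∂hyperbolicVolume n := by
  have hweight : ContDiff ℝ 1 fun q : LogHalfSpace n => exp (2 * q.2) * density n q :=
    ContDiff.mul (by fun_prop) contDiff_density
  have intφ {b : LogHalfSpace n → ℝ} (hb : ContDiff ℝ 1 b) (e : LogHalfSpace n) :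
      Integrable fun q => dirDeriv e (fun q => b q * dirDeriv e φ q) q * ψ q :=
    ((continuous_dirDeriv (hb.mul (contDiff_one_dirDeriv hφ e)) e).mul
      hψ.continuous).integrable_of_hasCompactSupport
        (((hs.fderiv_apply ℝ e).mul_left.fderiv_apply ℝ e).mul_right)
  have intψ {b : LogHalfSpace n → ℝ} (hb : ContDiff ℝ 1 b) (e : LogHalfSpace n) :
      Integrable fun q => φ q * dirDeriv e (fun q => b q * dirDeriv e ψ q) q :=
    (hφ.continuous.mul (continuous_dirDeriv (hb.mul
      (contDiff_one_dirDeriv hψ e)) e)).integrable_of_hasCompactSupport hs.mul_right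
  simp_rw [integral_hyperbolicVolume, mul_right_comm _ (ψ _), mul_assoc (φ _),
    laplacian_mul_density hφ, laplacian_mul_density hψ, add_mul, mul_add, Finset.sum_mul,
    Finset.mul_sum]
  rw [integral_add (integrable_finsetSum _ fun i _ => intφ hweight _) (intφ contDiff_density _),
    integral_add (integrable_finsetSum _ fun i _ => intψ hweight _) (intψ contDiff_density _),
    integral_finsetSum _ (fun i _ => intφ hweight _),
    integral_finsetSum _ (fun i _ => intψ hweight _),
    integral_dirDeriv_mul_dirDeriv_symm volume hφ hψ contDiff_density hs]
  congr 1
  exact Finset.sum_congr rfl fun i _ =>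
    integral_dirDeriv_mul_dirDeriv_symm volume hφ hψ hweight hs _

end LogHalfSpace

lemma one_add_sq_div_two_le_cosh (x : ℝ) : 1 + x ^ 2 / 2 ≤ cosh x := by
  have hcosh : cosh x = 1 + 2 * sinh (x / 2) ^ 2 := by
    have hdouble := cosh_two_mul (x / 2)
    rw [mul_div_cancel₀ x two_ne_zero, cosh_sq] at hdouble
    linarith
  have hsinh : (x / 2) ^ 2 ≤ sinh (x / 2) ^ 2 := by
    rw [sq_le_sq, abs_sinh]
    exact self_le_sinh_iff.2 (abs_nonneg _)
  linarith

namespace LogHalfSpace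

variable {n : ℕ}

/-- The hyperbolic cosine of the hyperbolic distance. -/
noncomputable def coshDist (p q : LogHalfSpace n) : ℝ :=
  cosh (p.2 - q.2) + ‖p.1 - q.1‖ ^ 2 * exp (-(p.2 + q.2)) / 2

lemma coshDist_comm (p q : LogHalfSpace n) : coshDist p q = coshDist q p := by
  rw [coshDist, coshDist, norm_sub_rev, ← cosh_neg, neg_sub, add_comm p.2]

lemma cosh_le_coshDist (p q : LogHalfSpace n) : cosh (p.2 - q.2) ≤ coshDist p q :=
  le_add_of_nonneg_right (by positivity)

lemma one_le_coshDist (p q : LogHalfSpace n) : 1 ≤ coshDist p q :=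
  (one_le_cosh _).trans (cosh_le_coshDist p q)

lemma contDiff_coshDist {m : WithTop ℕ∞} :
    ContDiff ℝ m fun x : LogHalfSpace n × LogHalfSpace n => coshDist x.1 x.2 := by
  have hnorm : ContDiff ℝ m fun x : LogHalfSpace n × LogHalfSpace n => ‖x.1.1 - x.2.1‖ ^ 2 :=
    ContDiff.norm_sq ℝ (by fun_prop)
  unfold coshDist
  fun_prop

lemma contDiff_coshDist_right {m : WithTop ℕ∞} (p : LogHalfSpace n) : ContDiff ℝ m (coshDist p) :=
  contDiff_coshDist.comp (contDiff_const.prodMk contDiff_id)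

lemma dirDeriv_horizontal_coshDist (p q : LogHalfSpace n) (i : Fin n) :
    dirDeriv (horizontal i) (coshDist p) q = -((p.1 i - q.1 i) * exp (-(p.2 + q.2))) := by
  refine dirDeriv_eq_of_hasDerivAt ((contDiff_coshDist_right p).differentiable one_ne_zero) ?_
  have norm_sq_line (t : ℝ) : ‖p.1 - (q.1 + t • EuclideanSpace.single i (1:ℝ))‖ ^ 2 =
      ‖p.1 - q.1‖ ^ 2 - 2 * t * (p.1 i - q.1 i) + t ^ 2 := by
    rw [← sub_sub, norm_sub_sq_real, norm_smul, inner_smul_right, EuclideanSpace.inner_single_right]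
    simp only [PiLp.norm_single, norm_one, mul_one, Real.norm_eq_abs, sq_abs, conj_trivial,
      one_mul, PiLp.sub_apply]
    ring
  have hderiv : HasDerivAt (fun t : ℝ => ‖p.1 - q.1‖ ^ 2 - 2 * t * (p.1 i - q.1 i) + t ^ 2)
      (-(2 * (p.1 i - q.1 i))) 0 := by
    simpa using ((((hasDerivAt_id' (0:ℝ)).const_mul 2).mul_const (p.1 i - q.1 i)).const_sub
      (‖p.1 - q.1‖ ^ 2)).fun_add (hasDerivAt_pow 2 (0:ℝ))
  simp only [coshDist, horizontal, Prod.fst_add, Prod.snd_add, Prod.smul_fst, Prod.smul_snd,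
    smul_zero, add_zero, norm_sq_line]
  exact (((hderiv.mul_const _).div_const 2).const_add _).congr_deriv (by ring)

lemma dirDeriv_horizontal_horizontal_coshDist (p q : LogHalfSpace n) (i : Fin n) :
    dirDeriv (horizontal i) (dirDeriv (horizontal i) (coshDist p)) q = exp (-(p.2 + q.2)) := by
  refine dirDeriv_eq_of_hasDerivAt
    ((contDiff_one_dirDeriv (contDiff_coshDist_right p) _).differentiable one_ne_zero) ?_
  simp only [dirDeriv_horizontal_coshDist]
  simpa [horizontal] using
    ((((hasDerivAt_id' (0:ℝ)).const_add (q.1 i)).const_sub (p.1 i)).mul_const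
      (exp (-(p.2 + q.2)))).fun_neg

lemma dirDeriv_vertical_coshDist (p q : LogHalfSpace n) :
    dirDeriv (vertical n) (coshDist p) q =
      -(sinh (p.2 - q.2) + ‖p.1 - q.1‖ ^ 2 * exp (-(p.2 + q.2)) / 2) := by
  refine dirDeriv_eq_of_hasDerivAt ((contDiff_coshDist_right p).differentiable one_ne_zero) ?_
  have hshift := (hasDerivAt_id' (0:ℝ)).const_add q.2
  have hderiv := (hshift.const_sub p.2).cosh.fun_add
    ((((hshift.const_add p.2).fun_neg.exp).const_mul (‖p.1 - q.1‖ ^ 2)).div_const 2)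
  simp only [add_zero] at hderiv
  simp only [coshDist, vertical, Prod.fst_add, Prod.snd_add, Prod.smul_fst, Prod.smul_snd,
    smul_zero, add_zero, smul_eq_mul, mul_one]
  exact hderiv.congr_deriv (by ring)

lemma dirDeriv_vertical_vertical_coshDist (p q : LogHalfSpace n) :
    dirDeriv (vertical n) (dirDeriv (vertical n) (coshDist p)) q = coshDist p q := by
  refine dirDeriv_eq_of_hasDerivAt
    ((contDiff_one_dirDeriv (contDiff_coshDist_right p) _).differentiable one_ne_zero) ?_
  have hshift := (hasDerivAt_id' (0:ℝ)).const_add q.2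
  have hderiv := ((hshift.const_sub p.2).sinh.fun_add
    ((((hshift.const_add p.2).fun_neg.exp).const_mul (‖p.1 - q.1‖ ^ 2)).div_const 2)).fun_neg
  simp only [add_zero] at hderiv
  simp only [dirDeriv_vertical_coshDist]
  simp only [vertical, Prod.fst_add, Prod.snd_add, Prod.smul_fst, Prod.smul_snd, smul_zero,
    add_zero, smul_eq_mul, mul_one]
  exact hderiv.congr_deriv (by rw [coshDist]; ring)

/-- The hyperbolic Laplacian of `ℍ^{n+1}` on functions of `a = cosh d(p, ·)`. -/
noncomputable def radialLaplacian (n : ℕ) (f : ℝ → ℝ) (a : ℝ) : ℝ :=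
  (a ^ 2 - 1) * deriv (deriv f) a + (n + 1) * a * deriv f a

lemma gradient_sq_coshDist (p q : LogHalfSpace n) :
    exp (2 * q.2) * ∑ i : Fin n, dirDeriv (horizontal i) (coshDist p) q ^ 2 +
      dirDeriv (vertical n) (coshDist p) q ^ 2 = coshDist p q ^ 2 - 1 := by
  have norm_sq_eq : ∑ i : Fin n, (p.1 i - q.1 i) ^ 2 = ‖p.1 - q.1‖ ^ 2 := by
    simp [EuclideanSpace.norm_sq_eq]
  have exp_mul : exp (2 * q.2) * exp (-(p.2 + q.2)) = exp (-(p.2 - q.2)) := by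
    rw [← exp_add]
    ring_nf
  simp only [dirDeriv_horizontal_coshDist, dirDeriv_vertical_coshDist, neg_sq, mul_pow,
    ← Finset.sum_mul, norm_sq_eq, coshDist]
  linear_combination ‖p.1 - q.1‖ ^ 2 * exp (-(p.2 + q.2)) *
    (exp_mul - cosh_sub_sinh (p.2 - q.2)) - cosh_sq (p.2 - q.2)

lemma laplacian_coshDist (p q : LogHalfSpace n) :
    laplacian n (coshDist p) q = (n + 1) * coshDist p q := by
  have exp_mul : exp (2 * q.2) * exp (-(p.2 + q.2)) = exp (-(p.2 - q.2)) := by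
    rw [← exp_add]
    ring_nf
  simp only [laplacian, dirDeriv_horizontal_horizontal_coshDist, Finset.sum_const, Finset.card_univ,
    Fintype.card_fin, nsmul_eq_mul, dirDeriv_vertical_vertical_coshDist, dirDeriv_vertical_coshDist,
    coshDist]
  linear_combination n * (exp_mul - cosh_sub_sinh (p.2 - q.2))

lemma laplacian_comp_coshDist {f : ℝ → ℝ} (hf : ContDiff ℝ 2 f) (p q : LogHalfSpace n) :
    laplacian n (fun q => f (coshDist p q)) q = radialLaplacian n f (coshDist p q) := by
  have hp : ContDiff ℝ 2 (coshDist p) := contDiff_coshDist_right p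
  have hlap := laplacian_coshDist p q
  simp only [laplacian] at hlap
  simp only [laplacian, radialLaplacian, dirDeriv_dirDeriv_comp hf hp,
    dirDeriv_comp (hf.differentiable two_ne_zero) (hp.differentiable two_ne_zero),
    Finset.sum_add_distrib, ← Finset.mul_sum]
  linear_combination deriv (deriv f) (coshDist p q) * gradient_sq_coshDist p q +
    deriv f (coshDist p q) * hlap

lemma exists_norm_le_of_coshDist_le (B R : ℝ) :
    ∃ B' : ℝ, ∀ p q : LogHalfSpace n, ‖p‖ ≤ B → coshDist p q ≤ R → ‖q‖ ≤ B' := by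
  refine ⟨B + max R (1 + 2 * R * exp (2 * B + R)), fun p q hp hpq => ?_⟩
  have hvertical : |p.2 - q.2| ≤ R := by
    have := (one_add_sq_div_two_le_cosh _).trans ((cosh_le_coshDist p q).trans hpq)
    nlinarith [sq_abs (p.2 - q.2), sq_nonneg (|p.2 - q.2| - 1)]
  have hsum : p.2 + q.2 ≤ 2 * B + R := by
    have := (le_abs_self p.2).trans ((norm_snd_le p).trans hp)
    linarith [(abs_le.1 hvertical).1]
  have hhorizontal : ‖p.1 - q.1‖ ^ 2 ≤ 2 * R * exp (2 * B + R) := by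
    have hscaled : ‖p.1 - q.1‖ ^ 2 * exp (-(p.2 + q.2)) ≤ 2 * R := by
      rw [coshDist] at hpq
      linarith [one_le_cosh (p.2 - q.2)]
    rw [exp_neg, ← div_eq_mul_inv, div_le_iff₀ (exp_pos _)] at hscaled
    exact hscaled.trans (mul_le_mul_of_nonneg_left (exp_le_exp.2 hsum)
      (by linarith [one_le_coshDist p q]))
  have hsub : ‖q - p‖ ≤ max R (1 + 2 * R * exp (2 * B + R)) := by
    rw [norm_sub_rev, Prod.norm_def, max_comm]
    refine max_le_max hvertical ?_
    simp only [Prod.fst_sub]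
    nlinarith [sq_nonneg (‖p.1 - q.1‖ - 1)]
  linarith [norm_le_norm_add_norm_sub' q p]

lemma norm_sq_div_eighteen_le_coshDist_zero_sub_one (q : LogHalfSpace n) (hq : coshDist 0 q ≤ 2) :
    ‖q‖ ^ 2 / 18 ≤ coshDist 0 q - 1 := by
  simp only [coshDist, Prod.fst_zero, Prod.snd_zero, zero_sub, norm_neg, cosh_neg, zero_add]
    at hq ⊢
  have hcosh := one_add_sq_div_two_le_cosh q.2
  have hnonneg : 0 ≤ ‖q.1‖ ^ 2 * exp (-q.2) / 2 := by positivity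
  have hexp : 1 / 9 ≤ exp (-q.2) := by
    have hexp_two : exp 2 ≤ 9 := by
      rw [show (2:ℝ) = 1 + 1 by norm_num, exp_add]
      nlinarith [exp_one_lt_three, exp_pos 1]
    have hq₂ : q.2 ≤ 2 := by nlinarith
    rw [exp_neg, ← one_div]
    exact one_div_le_one_div_of_le (exp_pos _) ((exp_le_exp.2 hq₂).trans hexp_two)
  have hhorizontal := mul_le_mul_of_nonneg_left hexp (sq_nonneg ‖q.1‖)
  rw [Prod.norm_def]
  rcases max_choice ‖q.1‖ ‖q.2‖ with hmax | hmax
  · rw [hmax]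
    linarith [sq_nonneg q.2]
  · rw [hmax, norm_eq_abs, sq_abs]
    linarith [sq_nonneg q.2]

/-- The isometry of `ℍ^{n+1}` in `ℝⁿ ⋊ ℝ` (dilations and horizontal translations) taking the base
point `0` to `p`. -/
noncomputable def translate (p g : LogHalfSpace n) : LogHalfSpace n :=
  (p.1 + exp p.2 • g.1, p.2 + g.2)

lemma translate_zero (p : LogHalfSpace n) : translate p 0 = p := by simp [translate]

lemma continuous_translate :
    Continuous fun x : LogHalfSpace n × LogHalfSpace n => translate x.1 x.2 := by
  unfold translate
  fun_prop

lemma coshDist_translate (p g : LogHalfSpace n) : coshDist p (translate p g) = coshDist 0 g := by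
  have exp_mul : exp p.2 ^ 2 * exp (-(p.2 + (p.2 + g.2))) = exp (-g.2) := by
    rw [← exp_nat_mul, ← exp_add]
    push_cast
    ring_nf
  simp only [coshDist, translate, sub_add_cancel_left, norm_neg, norm_smul, norm_eq_abs, abs_exp,
    mul_pow, cosh_neg, Prod.fst_zero, Prod.snd_zero, zero_sub, zero_add]
  linear_combination ‖g.1‖ ^ 2 / 2 * exp_mul

lemma map_translate_volume (p : LogHalfSpace n) :
    Measure.map (translate p) volume =
      ENNReal.ofReal (exp (-(n * p.2))) • (volume : Measure (LogHalfSpace n)) := by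
  have hscale := Measure.map_prod_map (volume : Measure (EuclideanSpace ℝ (Fin n)))
    (volume : Measure ℝ) (measurable_const_smul (exp p.2)) measurable_id
  rw [Measure.map_addHaar_smul _ (exp_pos _).ne', Measure.map_id, Measure.prod_smul_left,
    finrank_euclideanSpace_fin, ← exp_nat_mul, ← exp_neg, abs_exp] at hscale
  calc Measure.map (translate p) volume
      = Measure.map (p + ·) (Measure.map (Prod.map (exp p.2 • ·) id) volume) :=
        (Measure.map_map (g := (p + ·)) (f := Prod.map (exp p.2 • ·) id) (by fun_prop)
          (by fun_prop)).symm
    _ = _ := by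
        rw [Measure.volume_eq_prod, ← hscale, Measure.map_smul, ← Measure.volume_eq_prod,
          map_add_left_eq_self]

lemma measurePreserving_translate (p : LogHalfSpace n) :
    MeasurePreserving (translate p) (hyperbolicVolume n) (hyperbolicVolume n) := by
  have htranslate : Measurable (translate p) :=
    (continuous_translate.comp (Continuous.prodMk_right p)).measurable
  have hdensity : Measurable fun q => ENNReal.ofReal (density n q) :=
    (contDiff_density (m := 0)).continuous.measurable.ennreal_ofReal
  have density_translate (g : LogHalfSpace n) : ENNReal.ofReal (density n g) =
      ENNReal.ofReal (exp (n * p.2)) * ENNReal.ofReal (density n (translate p g)) := by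
    rw [← ENNReal.ofReal_mul (exp_pos _).le, density, density, translate, ← exp_add]
    ring_nf
  refine ⟨htranslate, Measure.ext fun s hs => ?_⟩
  rw [Measure.map_apply htranslate hs, hyperbolicVolume, withDensity_apply _ (htranslate hs),
    withDensity_apply _ hs, lintegral_congr density_translate,
    lintegral_const_mul' _ _ ENNReal.ofReal_ne_top, ← setLIntegral_map hs hdensity htranslate,
    map_translate_volume, Measure.restrict_smul, lintegral_smul_measure, smul_eq_mul, ← mul_assoc,
    ← ENNReal.ofReal_mul (exp_pos _).le, ← exp_add, add_neg_cancel, exp_zero, ENNReal.ofReal_one,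
    one_mul]

end LogHalfSpace

/-- The product `ℍ^{n₁+1} × ℍ^{n₂+1}` in logarithmic coordinates. -/
abbrev ProdLogHalfSpace (n₁ n₂ : ℕ) := LogHalfSpace n₁ × LogHalfSpace n₂

namespace ProdLogHalfSpace

/-- The Riemannian measure of `ℍ^{n₁+1} × ℍ^{n₂+1}`. -/
noncomputable abbrev prodVolume (n₁ n₂ : ℕ) : Measure (ProdLogHalfSpace n₁ n₂) :=
  (hyperbolicVolume n₁).prod (hyperbolicVolume n₂)

variable {n₁ n₂ : ℕ} {φ ψ v : ProdLogHalfSpace n₁ n₂ → ℝ}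

/-- The Laplacian `Δ₁` of the first factor. -/
noncomputable def laplacianFst (v : ProdLogHalfSpace n₁ n₂ → ℝ) (q : ProdLogHalfSpace n₁ n₂) : ℝ :=
  laplacian n₁ (fun q₁ => v (q₁, q.2)) q.1

/-- The Laplacian `Δ₂` of the second factor. -/
noncomputable def laplacianSnd (v : ProdLogHalfSpace n₁ n₂ → ℝ) (q : ProdLogHalfSpace n₁ n₂) : ℝ :=
  laplacian n₂ (fun q₂ => v (q.1, q₂)) q.2

lemma continuous_laplacianFst (hv : ContDiff ℝ 2 v) : Continuous (laplacianFst v) :=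
  continuous_laplacian_apply (X := ProdLogHalfSpace n₁ n₂) (f := fun q q₁ => v (q₁, q.2))
    (hv.comp (f := fun x : ProdLogHalfSpace n₁ n₂ × LogHalfSpace n₁ => (x.2, x.1.2)) (by fun_prop))
    continuous_fst

lemma continuous_laplacianSnd (hv : ContDiff ℝ 2 v) : Continuous (laplacianSnd v) :=
  continuous_laplacian_apply (X := ProdLogHalfSpace n₁ n₂) (f := fun q q₂ => v (q.1, q₂))
    (hv.comp (f := fun x : ProdLogHalfSpace n₁ n₂ × LogHalfSpace n₂ => (x.1.1, x.2)) (by fun_prop))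
    continuous_snd

lemma laplacianSnd_eq_laplacianFst_swap (v : ProdLogHalfSpace n₁ n₂ → ℝ)
    (q : ProdLogHalfSpace n₁ n₂) :
    laplacianSnd v q = laplacianFst (fun q : ProdLogHalfSpace n₂ n₁ => v q.swap) q.swap := rfl

lemma hasCompactSupport_swap (hs : HasCompactSupport φ) :
    HasCompactSupport fun q : ProdLogHalfSpace n₂ n₁ => φ q.swap :=
  hs.comp_homeomorph (Homeomorph.prodComm (LogHalfSpace n₂) (LogHalfSpace n₁))

lemma hasCompactSupport_laplacianFst (hs : HasCompactSupport φ) :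
    HasCompactSupport (laplacianFst φ) := by
  refine .intro hs fun q hq => ?_
  have hzero : (fun q₁ => φ (q₁, q.2)) =ᶠ[𝓝 q.1] 0 :=
    (Continuous.prodMk_left q.2).continuousAt.eventually (notMem_tsupport_iff_eventuallyEq.1 hq)
  have dirDeriv_zero (e : LogHalfSpace n₁) : dirDeriv e (0 : LogHalfSpace n₁ → ℝ) = 0 := by
    ext
    simp [dirDeriv]
  rw [laplacianFst, laplacian_congr hzero]
  simp [laplacian, dirDeriv_zero]

lemma hasCompactSupport_laplacianSnd (hs : HasCompactSupport φ) :
    HasCompactSupport (laplacianSnd φ) := by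
  rw [funext (laplacianSnd_eq_laplacianFst_swap φ)]
  exact hasCompactSupport_swap (hasCompactSupport_laplacianFst (hasCompactSupport_swap hs))

lemma integral_laplacianFst_mul_symm (hφ : ContDiff ℝ 2 φ) (hψ : ContDiff ℝ 2 ψ)
    (hs : HasCompactSupport φ) :
    ∫ q, laplacianFst φ q * ψ q ∂prodVolume n₁ n₂ =
      ∫ q, φ q * laplacianFst ψ q ∂prodVolume n₁ n₂ := by
  have hleft : Integrable (fun q => laplacianFst φ q * ψ q) (prodVolume n₁ n₂) :=
    ((continuous_laplacianFst hφ).mul hψ.continuous).integrable_of_hasCompactSupport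
      (hasCompactSupport_laplacianFst hs).mul_right
  have hright : Integrable (fun q => φ q * laplacianFst ψ q) (prodVolume n₁ n₂) :=
    (hφ.continuous.mul (continuous_laplacianFst hψ)).integrable_of_hasCompactSupport hs.mul_right
  rw [integral_prod_symm _ hleft, integral_prod_symm _ hright]
  refine integral_congr_ae (.of_forall fun q₂ => ?_)
  have hslice : HasCompactSupport fun q₁ => φ (q₁, q₂) :=
    .intro (hs.isCompact.image continuous_fst) fun q₁ hq₁ =>
      image_eq_zero_of_notMem_tsupport fun h => hq₁ ⟨_, h, rfl⟩
  exact integral_laplacian_mul_symm (φ := fun q₁ => φ (q₁, q₂)) (ψ := fun q₁ => ψ (q₁, q₂))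
    (hφ.comp (contDiff_id.prodMk contDiff_const)) (hψ.comp (contDiff_id.prodMk contDiff_const))
    hslice

lemma integral_laplacianSnd_mul_symm (hφ : ContDiff ℝ 2 φ) (hψ : ContDiff ℝ 2 ψ)
    (hs : HasCompactSupport φ) :
    ∫ q, laplacianSnd φ q * ψ q ∂prodVolume n₁ n₂ =
      ∫ q, φ q * laplacianSnd ψ q ∂prodVolume n₁ n₂ := by
  have hswap : ContDiff ℝ 2 (Prod.swap : ProdLogHalfSpace n₂ n₁ → ProdLogHalfSpace n₁ n₂) :=
    contDiff_snd.prodMk contDiff_fst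
  simp_rw [laplacianSnd_eq_laplacianFst_swap]
  rw [← integral_prod_swap,
    ← integral_prod_swap (fun q => φ q * laplacianFst (fun q => ψ q.swap) q.swap)]
  exact integral_laplacianFst_mul_symm (φ := fun q => φ q.swap) (ψ := fun q => ψ q.swap)
    (hφ.comp hswap) (hψ.comp hswap) (hasCompactSupport_swap hs)

/-- The operator `c₁Δ₁ + c₂Δ₂ + μ`. -/
noncomputable def prodOperator (c₁ c₂ μ : ℝ) (v : ProdLogHalfSpace n₁ n₂ → ℝ)
    (q : ProdLogHalfSpace n₁ n₂) : ℝ :=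
  c₁ * laplacianFst v q + c₂ * laplacianSnd v q + μ * v q

lemma continuous_prodOperator (c₁ c₂ μ : ℝ) (hv : ContDiff ℝ 2 v) :
    Continuous (prodOperator c₁ c₂ μ v) :=
  (((continuous_laplacianFst hv).const_mul c₁).add
    ((continuous_laplacianSnd hv).const_mul c₂)).add (hv.continuous.const_mul μ)

lemma integral_prodOperator_mul_symm (c₁ c₂ μ : ℝ) (hφ : ContDiff ℝ 2 φ) (hψ : ContDiff ℝ 2 ψ)
    (hs : HasCompactSupport φ) :
    ∫ q, prodOperator c₁ c₂ μ φ q * ψ q ∂prodVolume n₁ n₂ =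
      ∫ q, φ q * prodOperator c₁ c₂ μ ψ q ∂prodVolume n₁ n₂ := by
  have hleft₁ : Integrable (fun q => laplacianFst φ q * ψ q) (prodVolume n₁ n₂) :=
    ((continuous_laplacianFst hφ).mul hψ.continuous).integrable_of_hasCompactSupport
      (hasCompactSupport_laplacianFst hs).mul_right
  have hleft₂ : Integrable (fun q => laplacianSnd φ q * ψ q) (prodVolume n₁ n₂) :=
    ((continuous_laplacianSnd hφ).mul hψ.continuous).integrable_of_hasCompactSupport
      (hasCompactSupport_laplacianSnd hs).mul_right
  have hright {f : ProdLogHalfSpace n₁ n₂ → ℝ} (hf : Continuous f) :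
      Integrable (fun q => φ q * f q) (prodVolume n₁ n₂) :=
    (hφ.continuous.mul hf).integrable_of_hasCompactSupport hs.mul_right
  have hright₁ := hright (continuous_laplacianFst hψ)
  have hright₂ := hright (continuous_laplacianSnd hψ)
  have hmul := hright hψ.continuous
  simp only [prodOperator, add_mul, mul_add, mul_assoc, mul_left_comm (φ _)]
  rw [integral_add (by exact (hleft₁.const_mul _).add (hleft₂.const_mul _)) (hmul.const_mul _),
    integral_add (hleft₁.const_mul _) (hleft₂.const_mul _),
    integral_add (by exact (hright₁.const_mul _).add (hright₂.const_mul _)) (hmul.const_mul _),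
    integral_add (hright₁.const_mul _) (hright₂.const_mul _)]
  simp only [integral_const_mul, integral_laplacianFst_mul_symm hφ hψ hs,
    integral_laplacianSnd_mul_symm hφ hψ hs]

end ProdLogHalfSpace

section RadialLaplacian

lemma contDiff_radialLaplacian_apply {X : Type*} [NormedAddCommGroup X] [NormedSpace ℝ X] (n : ℕ)
    {f : X → ℝ → ℝ} {g : X → ℝ} (hf : ContDiff ℝ ∞ (Function.uncurry f)) (hg : ContDiff ℝ ∞ g) :
    ContDiff ℝ ∞ fun x => radialLaplacian n (f x) (g x) := by
  have hf₁ : ContDiff ℝ ∞ fun y : X × ℝ => deriv (f y.1) y.2 :=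
    contDiff_dirDeriv_apply (m := ∞) (f := fun y : X × ℝ => f y.1) (g := Prod.snd)
      (hf.comp (f := fun y : (X × ℝ) × ℝ => (y.1.1, y.2)) (by fun_prop)) contDiff_snd 1
  have hf₂ : ContDiff ℝ ∞ fun x => deriv (deriv (f x)) (g x) :=
    contDiff_dirDeriv_apply (m := ∞) (f := fun x => deriv (f x)) hf₁ hg 1
  have hf₁' : ContDiff ℝ ∞ fun x => deriv (f x) (g x) := hf₁.comp (contDiff_id.prodMk hg)
  unfold radialLaplacian
  fun_prop

lemma radialLaplacian_eq_zero_of_eventuallyEq (n : ℕ) {f : ℝ → ℝ} {a : ℝ} (h : f =ᶠ[𝓝 a] 0) :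
    radialLaplacian n f a = 0 := by
  have hzero : deriv (deriv (0 : ℝ → ℝ)) = 0 ∧ deriv (0 : ℝ → ℝ) = 0 := by simp
  rw [radialLaplacian, h.deriv.deriv_eq, h.deriv_eq, hzero.1, hzero.2]
  simp

lemma radialLaplacian_comp_add_sub (n : ℕ) (f : ℝ → ℝ) (a b : ℝ) :
    radialLaplacian n (fun a => f (a + b - 2)) a =
      (a ^ 2 - 1) * deriv (deriv f) (a + b - 2) + (n + 1) * a * deriv f (a + b - 2) := by
  have hderiv (f : ℝ → ℝ) : deriv (fun a => f (a + (b - 2))) = fun a => deriv f (a + (b - 2)) :=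
    funext (deriv_comp_add_const f (b - 2))
  simp only [radialLaplacian, add_sub_assoc, hderiv]

end RadialLaplacian

/-- A smooth function of `(cosh d₁, cosh d₂)` vanishing for large arguments, to be used as an
integral kernel on `ℍ^{n₁+1} × ℍ^{n₂+1}`. -/
structure IsKernel (F : ℝ × ℝ → ℝ) : Prop where
  contDiff : ContDiff ℝ ∞ F
  exists_eq_zero : ∃ R, ∀ x : ℝ × ℝ, R < x.1 + x.2 → F x = 0

/-- The operator induced by `c₁Δ₁ + c₂Δ₂ + μ` on functions of `(cosh d₁, cosh d₂)`. -/
noncomputable def radialOperator (n₁ n₂ : ℕ) (c₁ c₂ μ : ℝ) (F : ℝ × ℝ → ℝ) (x : ℝ × ℝ) : ℝ :=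
  c₁ * radialLaplacian n₁ (fun a => F (a, x.2)) x.1 +
    c₂ * radialLaplacian n₂ (fun b => F (x.1, b)) x.2 + μ * F x

lemma radialOperator_eq_zero (n₁ n₂ : ℕ) (c₁ c₂ μ : ℝ) {F : ℝ × ℝ → ℝ} {R : ℝ}
    (hF : ∀ x : ℝ × ℝ, R < x.1 + x.2 → F x = 0) {x : ℝ × ℝ} (hx : R < x.1 + x.2) :
    radialOperator n₁ n₂ c₁ c₂ μ F x = 0 := by
  have hfst_zero : (fun a => F (a, x.2)) =ᶠ[𝓝 x.1] 0 :=
    ((continuous_add_const x.2).continuousAt.eventually (lt_mem_nhds hx)).mono fun a ha => hF _ ha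
  have hsnd_zero : (fun b => F (x.1, b)) =ᶠ[𝓝 x.2] 0 :=
    ((continuous_const_add x.1).continuousAt.eventually (lt_mem_nhds hx)).mono fun b hb => hF _ hb
  rw [radialOperator, radialLaplacian_eq_zero_of_eventuallyEq n₁ hfst_zero,
    radialLaplacian_eq_zero_of_eventuallyEq n₂ hsnd_zero, hF x hx]
  simp

namespace IsKernel

variable {F : ℝ × ℝ → ℝ}

lemma radialOperator (hF : IsKernel F) (n₁ n₂ : ℕ) (c₁ c₂ μ : ℝ) :
    IsKernel (radialOperator n₁ n₂ c₁ c₂ μ F) := by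
  obtain ⟨hsmooth, R, hR⟩ := hF
  have hfst : ContDiff ℝ ∞ fun x : ℝ × ℝ => radialLaplacian n₁ (fun a => F (a, x.2)) x.1 :=
    contDiff_radialLaplacian_apply n₁ (f := fun (x : ℝ × ℝ) a => F (a, x.2))
      (hsmooth.comp (f := fun y : (ℝ × ℝ) × ℝ => (y.2, y.1.2)) (by fun_prop)) contDiff_fst
  have hsnd : ContDiff ℝ ∞ fun x : ℝ × ℝ => radialLaplacian n₂ (fun b => F (x.1, b)) x.2 :=
    contDiff_radialLaplacian_apply n₂ (f := fun (x : ℝ × ℝ) b => F (x.1, b))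
      (hsmooth.comp (f := fun y : (ℝ × ℝ) × ℝ => (y.1.1, y.2)) (by fun_prop)) contDiff_snd
  exact ⟨by unfold _root_.radialOperator; fun_prop, R, fun x => radialOperator_eq_zero _ _ _ _ _ hR⟩

lemma of_comp_add_sub {f : ℝ → ℝ} {r : ℝ} (hf : ContDiff ℝ ∞ f) (h : ∀ z, r ≤ z → f z = 0) :
    IsKernel fun x => f (x.1 + x.2 - 2) :=
  ⟨by fun_prop, r + 2, fun _ hx => h _ (by linarith)⟩

end IsKernel

lemma radialOperator_comp_add_sub (n₁ n₂ : ℕ) (c₁ c₂ μ : ℝ) (f : ℝ → ℝ) (x : ℝ × ℝ) :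
    radialOperator n₁ n₂ c₁ c₂ μ (fun x => f (x.1 + x.2 - 2)) x =
      (c₁ * (x.1 ^ 2 - 1) + c₂ * (x.2 ^ 2 - 1)) * deriv (deriv f) (x.1 + x.2 - 2) +
      (c₁ * (n₁ + 1) * x.1 + c₂ * (n₂ + 1) * x.2) * deriv f (x.1 + x.2 - 2) +
      μ * f (x.1 + x.2 - 2) := by
  simp only [radialOperator, radialLaplacian_comp_add_sub, add_comm x.1]
  ring

namespace ProdLogHalfSpace

variable {n₁ n₂ : ℕ} {F G : ℝ × ℝ → ℝ} {v w : ProdLogHalfSpace n₁ n₂ → ℝ}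

/-- The pair of hyperbolic cosines of the distances in the two factors. -/
noncomputable def coshDists (p q : ProdLogHalfSpace n₁ n₂) : ℝ × ℝ :=
  (coshDist p.1 q.1, coshDist p.2 q.2)

lemma coshDists_comm (p q : ProdLogHalfSpace n₁ n₂) : coshDists p q = coshDists q p := by
  rw [coshDists, coshDist_comm, coshDist_comm p.2, coshDists]

lemma contDiff_coshDists {m : WithTop ℕ∞} :
    ContDiff ℝ m fun x : ProdLogHalfSpace n₁ n₂ × ProdLogHalfSpace n₁ n₂ => coshDists x.1 x.2 :=
  (contDiff_coshDist.comp (f := fun x : ProdLogHalfSpace n₁ n₂ × ProdLogHalfSpace n₁ n₂ =>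
    (x.1.1, x.2.1)) (by fun_prop)).prodMk
  (contDiff_coshDist.comp (f := fun x : ProdLogHalfSpace n₁ n₂ × ProdLogHalfSpace n₁ n₂ =>
    (x.1.2, x.2.2)) (by fun_prop))

lemma contDiff_coshDists_right {m : WithTop ℕ∞} (p : ProdLogHalfSpace n₁ n₂) :
    ContDiff ℝ m (coshDists p) :=
  contDiff_coshDists.comp (contDiff_const.prodMk contDiff_id)

lemma prodOperator_comp_coshDists (c₁ c₂ μ : ℝ) (hF : ContDiff ℝ 2 F)
    (p q : ProdLogHalfSpace n₁ n₂) :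
    prodOperator c₁ c₂ μ (fun q => F (coshDists p q)) q =
      radialOperator n₁ n₂ c₁ c₂ μ F (coshDists p q) := by
  have hfst := laplacian_comp_coshDist (f := fun a => F (a, coshDist p.2 q.2))
    (hF.comp (contDiff_prodMk_left _)) p.1 q.1
  have hsnd := laplacian_comp_coshDist (f := fun b => F (coshDist p.1 q.1, b))
    (hF.comp (contDiff_prodMk_right _)) p.2 q.2
  simp only [prodOperator, laplacianFst, laplacianSnd, coshDists, hfst, hsnd, radialOperator]

lemma exists_norm_le_of_kernel_ne_zero (hF : IsKernel F) (B : ℝ) :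
    ∃ B', ∀ p q : ProdLogHalfSpace n₁ n₂, ‖p‖ ≤ B → F (coshDists p q) ≠ 0 → ‖q‖ ≤ B' := by
  obtain ⟨R, hR⟩ := hF.exists_eq_zero
  obtain ⟨B₁, hB₁⟩ := exists_norm_le_of_coshDist_le (n := n₁) B R
  obtain ⟨B₂, hB₂⟩ := exists_norm_le_of_coshDist_le (n := n₂) B R
  refine ⟨max B₁ B₂, fun p q hp hpq => ?_⟩
  have hsum : coshDist p.1 q.1 + coshDist p.2 q.2 ≤ R := not_lt.1 fun h => hpq (hR _ h)
  have h₁ := one_le_coshDist p.1 q.1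
  have h₂ := one_le_coshDist p.2 q.2
  exact max_le_max (hB₁ _ _ ((norm_fst_le p).trans hp) (by linarith))
    (hB₂ _ _ ((norm_snd_le p).trans hp) (by linarith))

lemma hasCompactSupport_kernel (hF : IsKernel F) (p : ProdLogHalfSpace n₁ n₂) :
    HasCompactSupport fun q => F (coshDists p q) := by
  obtain ⟨B, hB⟩ := exists_norm_le_of_kernel_ne_zero (n₁ := n₁) (n₂ := n₂) hF ‖p‖
  refine .intro (isCompact_closedBall 0 B) fun q hq => ?_
  contrapose! hq
  simpa using hB p q le_rfl hq

/-- Integration against the kernel `F`, that is, convolution with a function that is radial in each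
factor. -/
noncomputable def radialConv (F : ℝ × ℝ → ℝ) (w : ProdLogHalfSpace n₁ n₂ → ℝ)
    (p : ProdLogHalfSpace n₁ n₂) : ℝ :=
  ∫ q, F (coshDists p q) * w q ∂prodVolume n₁ n₂

lemma integrable_kernel_mul (hF : IsKernel F) (hw : Continuous w) (p : ProdLogHalfSpace n₁ n₂) :
    Integrable (fun q => F (coshDists p q) * w q) (prodVolume n₁ n₂) :=
  ((hF.contDiff.continuous.comp (contDiff_coshDists_right (m := 0) p).continuous).mul
    hw).integrable_of_hasCompactSupport (hasCompactSupport_kernel hF p).mul_right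

lemma radialConv_zero_right : radialConv F (0 : ProdLogHalfSpace n₁ n₂ → ℝ) = 0 := by
  ext p
  simp [radialConv]

lemma radialConv_add_right (hF : IsKernel F) (hv : Continuous v) (hw : Continuous w) :
    radialConv F (v + w) = radialConv F v + radialConv F w := by
  ext p
  simp only [radialConv, Pi.add_apply, mul_add]
  exact integral_add (integrable_kernel_mul hF hv p) (integrable_kernel_mul hF hw p)

lemma radialConv_smul_right (c : ℝ) (w : ProdLogHalfSpace n₁ n₂ → ℝ) :
    radialConv F (c • w) = c • radialConv F w := by
  ext p
  simp only [radialConv, Pi.smul_apply, smul_eq_mul, mul_left_comm _ c, integral_const_mul]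

lemma radialConv_radialOperator (c₁ c₂ μ : ℝ) (hF : IsKernel F) (hv : ContDiff ℝ 2 v) :
    radialConv (radialOperator n₁ n₂ c₁ c₂ μ F) v = radialConv F (prodOperator c₁ c₂ μ v) := by
  ext p
  have hF₂ : ContDiff ℝ 2 F := contDiff_infty.1 hF.contDiff 2
  simp only [radialConv, ← prodOperator_comp_coshDists c₁ c₂ μ hF₂ p]
  exact integral_prodOperator_mul_symm c₁ c₂ μ (hF₂.comp (contDiff_coshDists_right p)) hv
    (hasCompactSupport_kernel hF p)

/-- The isometry `(translate p.1, translate p.2)`, which takes the base point `0` to `p`. -/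
noncomputable def prodTranslate (p g : ProdLogHalfSpace n₁ n₂) : ProdLogHalfSpace n₁ n₂ :=
  (translate p.1 g.1, translate p.2 g.2)

lemma prodTranslate_zero (p : ProdLogHalfSpace n₁ n₂) : prodTranslate p 0 = p := by
  simp [prodTranslate, translate_zero]

lemma continuous_prodTranslate :
    Continuous fun x : ProdLogHalfSpace n₁ n₂ × ProdLogHalfSpace n₁ n₂ =>
      prodTranslate x.1 x.2 :=
  (continuous_translate.comp (f := fun x : ProdLogHalfSpace n₁ n₂ × ProdLogHalfSpace n₁ n₂ =>
    (x.1.1, x.2.1)) (by fun_prop)).prodMk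
  (continuous_translate.comp (f := fun x : ProdLogHalfSpace n₁ n₂ × ProdLogHalfSpace n₁ n₂ =>
    (x.1.2, x.2.2)) (by fun_prop))

lemma radialConv_eq_radialConv_translate (hF : IsKernel F) (hw : Continuous w)
    (p : ProdLogHalfSpace n₁ n₂) :
    radialConv F w p = radialConv F (fun g => w (prodTranslate p g)) 0 := by
  have hp : MeasurePreserving (prodTranslate p) (prodVolume n₁ n₂) (prodVolume n₁ n₂) :=
    (measurePreserving_translate p.1).prod (measurePreserving_translate p.2)
  have coshDists_translate (g : ProdLogHalfSpace n₁ n₂) :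
      coshDists p (prodTranslate p g) = coshDists 0 g := by
    simp only [coshDists, prodTranslate, coshDist_translate, Prod.fst_zero, Prod.snd_zero]
  have hmap := integral_map hp.aemeasurable
    (hp.map_eq.symm ▸ (integrable_kernel_mul hF hw p).aestronglyMeasurable)
  simp only [hp.map_eq, coshDists_translate] at hmap
  exact hmap

lemma continuous_radialConv (hF : IsKernel F) (hw : Continuous w) :
    Continuous (radialConv F w) := by
  simp only [funext (radialConv_eq_radialConv_translate hF hw), radialConv]
  have hcont : Continuous fun x : ProdLogHalfSpace n₁ n₂ × ProdLogHalfSpace n₁ n₂ =>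
      F (coshDists 0 x.2) * w (prodTranslate x.1 x.2) :=
    ((hF.contDiff.continuous.comp (contDiff_coshDists_right (m := 0) 0).continuous).comp
      continuous_snd).mul (hw.comp continuous_prodTranslate)
  exact continuousOn_univ.1 (continuousOn_integral_of_compact_support
    (hasCompactSupport_kernel hF 0).isCompact hcont.continuousOn fun p q _ hq =>
      mul_eq_zero_of_left (image_eq_zero_of_notMem_tsupport (f := fun q => F (coshDists 0 q)) hq) _)

lemma radialConv_radialConv (hF : IsKernel F) (hG : IsKernel G) (hw : Continuous w)
    (p : ProdLogHalfSpace n₁ n₂) :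
    radialConv F (radialConv G w) p =
      ∫ r, radialConv F (fun q => G (coshDists r q)) p * w r ∂prodVolume n₁ n₂ := by
  have hcont : Continuous fun x : ProdLogHalfSpace n₁ n₂ × ProdLogHalfSpace n₁ n₂ =>
      F (coshDists p x.1) * (G (coshDists x.1 x.2) * w x.2) :=
    ((hF.contDiff.continuous.comp (contDiff_coshDists_right (m := 0) p).continuous).comp
      continuous_fst).mul ((hG.contDiff.continuous.comp
        (contDiff_coshDists (m := 0)).continuous).mul (hw.comp continuous_snd))
  have hsupp : HasCompactSupport fun x : ProdLogHalfSpace n₁ n₂ × ProdLogHalfSpace n₁ n₂ =>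
      F (coshDists p x.1) * (G (coshDists x.1 x.2) * w x.2) := by
    obtain ⟨B, hB⟩ := exists_norm_le_of_kernel_ne_zero (n₁ := n₁) (n₂ := n₂) hF ‖p‖
    obtain ⟨B', hB'⟩ := exists_norm_le_of_kernel_ne_zero (n₁ := n₁) (n₂ := n₂) hG B
    refine .intro (isCompact_closedBall 0 (max B B')) fun x hx => ?_
    contrapose! hx
    have hfst := hB p x.1 le_rfl (left_ne_zero_of_mul hx)
    have hsnd := hB' x.1 x.2 hfst (left_ne_zero_of_mul (right_ne_zero_of_mul hx))
    rw [mem_closedBall_zero_iff, Prod.norm_def]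
    exact max_le_max hfst hsnd
  simp only [radialConv, ← integral_const_mul]
  rw [integral_integral_swap_of_hasCompactSupport
    (f := fun q r => F (coshDists p q) * (G (coshDists q r) * w r)) hcont hsupp]
  simp only [← mul_assoc, integral_mul_const, coshDists_comm _ _]

lemma radialConv_radialOperator_comm (c₁ c₂ μ : ℝ) (hF : IsKernel F) (hG : IsKernel G)
    (hw : Continuous w) :
    radialConv (radialOperator n₁ n₂ c₁ c₂ μ F) (radialConv G w) =
      radialConv F (radialConv (radialOperator n₁ n₂ c₁ c₂ μ G) w) := by
  ext p
  have hG₂ : ContDiff ℝ 2 G := contDiff_infty.1 hG.contDiff 2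
  rw [radialConv_radialConv (hF.radialOperator ..) hG hw,
    radialConv_radialConv hF (hG.radialOperator ..) hw]
  refine integral_congr_ae (.of_forall fun r => ?_)
  have hsmooth : ContDiff ℝ 2 fun q => G (coshDists r q) := hG₂.comp (contDiff_coshDists_right r)
  dsimp only
  rw [radialConv_radialOperator c₁ c₂ μ hF hsmooth,
    funext (prodOperator_comp_coshDists c₁ c₂ μ hG₂ r)]

/-- The continuous functions `w` solving `(Δ₁ + Δ₂ + μ)w = 0` weakly, tested only against the
kernels `F (coshDists p ·)`; this suffices for the convolution arguments and is preserved by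
`radialConv`. -/
def weakSolutions (n₁ n₂ : ℕ) (μ : ℝ) : Submodule ℝ (ProdLogHalfSpace n₁ n₂ → ℝ) where
  carrier := {w | Continuous w ∧ ∀ F, IsKernel F → radialConv (radialOperator n₁ n₂ 1 1 μ F) w = 0}
  zero_mem' := ⟨continuous_zero, fun _ _ => radialConv_zero_right⟩
  add_mem' hv hw := ⟨hv.1.add hw.1, fun F hF => by
    rw [radialConv_add_right (hF.radialOperator ..) hv.1 hw.1, hv.2 F hF, hw.2 F hF, add_zero]⟩
  smul_mem' c _ hw := ⟨hw.1.const_smul c, fun F hF => by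
    rw [radialConv_smul_right, hw.2 F hF, smul_zero]⟩

lemma mem_weakSolutions_of_contDiff {μ : ℝ} (hv : ContDiff ℝ 2 v)
    (heq : prodOperator 1 1 μ v = 0) : v ∈ weakSolutions n₁ n₂ μ :=
  ⟨hv.continuous, fun F hF => by
    rw [radialConv_radialOperator 1 1 μ hF hv, heq, radialConv_zero_right]⟩

/-- Convolution with a kernel as an operator on weak solutions. -/
noncomputable def weakConv {μ : ℝ} (hF : IsKernel F) : Module.End ℝ (weakSolutions n₁ n₂ μ) where
  toFun w := ⟨radialConv F w, continuous_radialConv hF w.2.1, fun G hG => by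
    rw [radialConv_radialOperator_comm 1 1 μ hG hF w.2.1, w.2.2 F hF, radialConv_zero_right]⟩
  map_add' v w := Subtype.ext (radialConv_add_right hF v.2.1 w.2.1)
  map_smul' c w := Subtype.ext (radialConv_smul_right c _)

end ProdLogHalfSpace

section Positivity

/-- This is the second moment of `c + ∑ i ≤ m, εᵢ` for independent signs `εᵢ` of mean `x`: each
sign contributes a factor `(1 ± x) / 2`, so the moment is a positive combination of products of
such factors. -/
lemma two_pow_mul_second_moment_mem {R : Type*} [CommRing R] (S : Subsemiring R) {x : R}
    (hadd : 1 + x ∈ S) (hsub : 1 - x ∈ S) (m : ℕ) (c : ℤ) :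
    2 ^ m * ((c + m * x) ^ 2 + m * (1 - x ^ 2)) ∈ S := by
  induction m generalizing c with
  | zero =>
    have hsq : (c : R) ^ 2 = (c.natAbs ^ 2 : ℕ) := by
      exact_mod_cast congrArg (Int.cast : ℤ → R) (Int.natAbs_sq c).symm
    simp only [pow_zero, one_mul, Nat.cast_zero, zero_mul, add_zero, hsq]
    exact natCast_mem S _
  | succ m ih =>
    have hcond := add_mem (mul_mem hadd (ih (c + 1))) (mul_mem hsub (ih (c - 1)))
    convert hcond using 1
    push_cast
    ring

lemma natCast_mul_one_add_natCast_mul_sq_mem {R : Type*} [CommRing R] (S : Subsemiring R) {x : R}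
    (hadd : 1 + x ∈ S) (hsub : 1 - x ∈ S) (n : ℕ) :
    ((2 ^ (n + 1) * (n + 1) : ℕ) : R) * (1 + n * x ^ 2) ∈ S := by
  convert two_pow_mul_second_moment_mem S hadd hsub (n + 1) 0 using 1
  push_cast
  ring

lemma nonneg_of_forall_nonneg_add_nat_mul {a b : ℝ} (h : ∀ n : ℕ, 0 ≤ a + n * b) : 0 ≤ b := by
  by_contra! hb
  obtain ⟨n, hn⟩ := exists_nat_gt (a / -b)
  rw [div_lt_iff₀ (neg_pos.2 hb)] at hn
  linarith [h n]

variable {X : Type*} {E : Submodule ℝ (X → ℝ)}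

/-- The endomorphisms of a space of functions which preserve nonnegativity. -/
def positiveEnd (E : Submodule ℝ (X → ℝ)) : Subsemiring (Module.End ℝ E) where
  carrier := {P | ∀ w : E, 0 ≤ (w : X → ℝ) → 0 ≤ (P w : X → ℝ)}
  zero_mem' _ _ := le_rfl
  one_mem' _ hw := hw
  add_mem' hP hQ w hw := add_nonneg (hP w hw) (hQ w hw)
  mul_mem' hP hQ w hw := hP _ (hQ w hw)

variable {A : Module.End ℝ E} {u v w : E}

lemma nonneg_apply_apply (hadd : 1 + A ∈ positiveEnd E) (hsub : 1 - A ∈ positiveEnd E)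
    (hw : 0 ≤ (w : X → ℝ)) : 0 ≤ (A (A w) : X → ℝ) := fun x => by
  refine nonneg_of_forall_nonneg_add_nat_mul (a := (w : X → ℝ) x) fun n => ?_
  have hmoment : ((2 ^ (n + 1) * (n + 1) : ℕ) : Module.End ℝ E) * (1 + n * A ^ 2) ∈
      positiveEnd E := by
    have hmem := natCast_mul_one_add_natCast_mul_sq_mem (x := Polynomial.X)
      ((positiveEnd E).comap (Polynomial.aeval (R := ℤ) A).toRingHom)
      (by simpa using hadd) (by simpa using hsub) n
    simpa only [Subsemiring.mem_comap, AlgHom.toRingHom_eq_coe, RingHom.coe_coe, map_mul, map_add,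
      map_one, map_pow, map_natCast, Polynomial.aeval_X] using hmem
  have hk : 0 < 2 ^ (n + 1) * (n + 1) := by positivity
  generalize 2 ^ (n + 1) * (n + 1) = k at hmoment hk
  have hx : 0 ≤ k * ((w : X → ℝ) x + n * (A (A w) : X → ℝ) x) := by
    simpa [sq, mul_add, mul_left_comm] using hmoment w hw x
  exact nonneg_of_mul_nonneg_right hx (Nat.cast_pos.2 hk)

lemma nonneg_apply_of_apply_apply_eq_zero (hadd : 1 + A ∈ positiveEnd E) (hw : 0 ≤ (w : X → ℝ))
    (hA : A (A w) = 0) : 0 ≤ (A w : X → ℝ) := fun x => by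
  have hpow (n : ℕ) : ((1 + A) ^ n) w = w + n • A w := by
    induction n with
    | zero => simp
    | succ n ih =>
      rw [pow_succ', Module.End.mul_apply, ih]
      simp [hA, succ_nsmul, add_assoc]
  refine nonneg_of_forall_nonneg_add_nat_mul (a := (w : X → ℝ) x) fun n => ?_
  simpa [hpow] using pow_mem hadd n w hw x

/-- As `1 + A` and `1 - A` are positive, so is `A ^ 2`; hence `A ^ 2` kills `v` with `u`, and
`(1 ± A) ^ n v = v ± n A v` is nonnegative for all `n`. -/
lemma apply_eq_zero_of_le (hadd : 1 + A ∈ positiveEnd E) (hsub : 1 - A ∈ positiveEnd E)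
    (hu : A u = 0) (hv : 0 ≤ (v : X → ℝ)) (hvu : (v : X → ℝ) ≤ u) : A v = 0 := by
  have hA : A (A v) = 0 := by
    have hle := nonneg_apply_apply hadd hsub (w := u - v) (sub_nonneg.2 hvu)
    rw [map_sub, hu, zero_sub, map_neg] at hle
    exact Subtype.ext (le_antisymm (neg_nonneg.1 hle) (nonneg_apply_apply hadd hsub hv))
  have hneg := nonneg_apply_of_apply_apply_eq_zero (A := -A) (by rwa [← sub_eq_add_neg 1 A]) hv
    (by simpa using hA)
  exact Subtype.ext (le_antisymm (neg_nonneg.1 hneg)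
    (nonneg_apply_of_apply_apply_eq_zero hadd hv hA))

end Positivity

section Cutoff

/-- A smooth cutoff supported in `z ≤ 1`, whose logarithmic derivative on `[0, 1)` is at most
`-K`. -/
noncomputable def steepCutoff (K z : ℝ) : ℝ := expNegInvGlue ((1 - z) / K)

variable {K z : ℝ}

lemma contDiff_steepCutoff (K : ℝ) : ContDiff ℝ ∞ (steepCutoff K) :=
  expNegInvGlue.contDiff.comp (f := fun z : ℝ => (1 - z) / K) (by fun_prop)

lemma steepCutoff_nonneg (K z : ℝ) : 0 ≤ steepCutoff K z := expNegInvGlue.nonneg _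

lemma steepCutoff_eq_zero (hK : 0 < K) (hz : 1 ≤ z) : steepCutoff K z = 0 :=
  expNegInvGlue.zero_of_nonpos (div_nonpos_of_nonpos_of_nonneg (by linarith) hK.le)

lemma steepCutoff_pos (hK : 0 < K) (hz : z < 1) : 0 < steepCutoff K z :=
  expNegInvGlue.pos_of_pos (div_pos (by linarith) hK)

lemma deriv_steepCutoff (hK : 0 < K) (z : ℝ) :
    deriv (steepCutoff K) z = -(K * ((1 - z) ^ 2)⁻¹ * steepCutoff K z) := by
  have hglue := expNegInvGlue.hasDerivAt_polynomial_eval_inv_mul 1 ((1 - z) / K)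
  simp only [Polynomial.eval_one, one_mul, Polynomial.derivative_one, sub_zero, mul_one,
    Polynomial.eval_pow, Polynomial.eval_X] at hglue
  have hlin : HasDerivAt (fun z : ℝ => (1 - z) / K) (-1 / K) z :=
    ((hasDerivAt_id z).const_sub 1).div_const K
  refine (hglue.comp z hlin).deriv.trans ?_
  unfold steepCutoff
  by_cases hz : 1 - z = 0
  · simp [hz]
  · field_simp

lemma deriv_steepCutoff_nonpos (hK : 0 < K) (z : ℝ) : deriv (steepCutoff K) z ≤ 0 := by
  have hT := steepCutoff_nonneg K z
  rw [deriv_steepCutoff hK, neg_nonpos]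
  positivity

lemma antitone_steepCutoff (hK : 0 < K) : Antitone (steepCutoff K) :=
  antitone_of_deriv_nonpos ((contDiff_steepCutoff K).differentiable (by simp))
    (deriv_steepCutoff_nonpos hK)

lemma deriv_steepCutoff_le (hK : 0 < K) (hz : 0 ≤ z) :
    deriv (steepCutoff K) z ≤ -(K * steepCutoff K z) := by
  rw [deriv_steepCutoff hK, neg_le_neg_iff, mul_right_comm]
  rcases lt_or_ge z 1 with hz₁ | hz₁
  · have hinv : 1 ≤ ((1 - z) ^ 2)⁻¹ := (one_le_inv₀ (by nlinarith)).2 (by nlinarith)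
    exact le_mul_of_one_le_right (mul_nonneg hK.le (steepCutoff_nonneg K z)) hinv
  · simp [steepCutoff_eq_zero hK hz₁]

end Cutoff

section SmoothedPower

/-- The smooth approximation `(t² + ε²)⁻ᵃ` of `|t| ^ (-2a)`. -/
noncomputable def smoothedPow (a ε t : ℝ) : ℝ := (t ^ 2 + ε ^ 2) ^ (-a)

variable {a ε t : ℝ}

lemma contDiff_smoothedPow (a : ℝ) (hε : 0 < ε) {m : WithTop ℕ∞} :
    ContDiff ℝ m (smoothedPow a ε) :=
  ContDiff.rpow_const_of_ne (by fun_prop) fun t => by positivity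

lemma smoothedPow_pos (a : ℝ) (hε : 0 < ε) (t : ℝ) : 0 < smoothedPow a ε t := by
  unfold smoothedPow
  positivity

lemma smoothedPow_add_one (a : ℝ) (hε : 0 < ε) (t : ℝ) :
    smoothedPow (a + 1) ε t = smoothedPow a ε t / (t ^ 2 + ε ^ 2) := by
  rw [smoothedPow, smoothedPow, neg_add, ← sub_eq_add_neg, rpow_sub_one (by positivity)]

lemma hasDerivAt_smoothedPow (a : ℝ) (hε : 0 < ε) (t : ℝ) :
    HasDerivAt (smoothedPow a ε) (-(2 * a * t * smoothedPow (a + 1) ε t)) t := by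
  have hbase : HasDerivAt (fun t : ℝ => t ^ 2 + ε ^ 2) (2 * t) t := by
    simpa using (hasDerivAt_pow 2 t).add_const (ε ^ 2)
  refine (hbase.rpow_const (p := -a) (Or.inl (by positivity))).congr_deriv ?_
  rw [smoothedPow, neg_add']
  ring

lemma rpow_neg_two_mul (hx : 0 ≤ t) (a : ℝ) : t ^ (-(2 * a)) = (t ^ 2) ^ (-a) := by
  rw [← mul_neg, rpow_mul hx, rpow_two]

lemma add_rpow_le_smoothedPow (ha : 0 ≤ a) (hε : 0 < ε) (ht : 0 ≤ t) :
    (t + ε) ^ (-(2 * a)) ≤ smoothedPow a ε t := by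
  rw [rpow_neg_two_mul (by positivity)]
  exact rpow_le_rpow_of_nonpos (by positivity) (by nlinarith) (by linarith)

lemma smoothedPow_le (ha : 0 ≤ a) (hε : 0 < ε) (ht : 0 ≤ t) :
    smoothedPow a ε t ≤ 2 ^ a * (t + ε) ^ (-(2 * a)) := by
  have htwo : (2 : ℝ) ^ a = (1 / 2) ^ (-a) := by
    rw [one_div, inv_rpow zero_le_two, rpow_neg zero_le_two, inv_inv]
  rw [rpow_neg_two_mul (by positivity), htwo, ← mul_rpow (by norm_num) (by positivity)]
  exact rpow_le_rpow_of_nonpos (by positivity) (by nlinarith [sq_nonneg (t - ε)]) (by linarith)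

lemma half_le_sq_div_of_le (hε : 0 < ε) (ht : 0 ≤ t) (h : t ≤ ε) :
    1 / 2 ≤ ε ^ 2 / (t ^ 2 + ε ^ 2) := by
  rw [div_le_div_iff₀ two_pos (by positivity)]
  nlinarith

lemma le_add_sq_div_mul_smoothedPow (ha : 1 ≤ a) (hε : 0 < ε) (hε₁ : ε ≤ 1) (ht : 0 ≤ t)
    (ht₁ : t ≤ 1) :
    (2 : ℝ) ^ (-a) / 2 ≤ (t + ε ^ 2 / (t ^ 2 + ε ^ 2)) * smoothedPow a ε t := by
  have hP := smoothedPow_pos a hε t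
  rcases le_or_gt t ε with h | h
  · have hpow : 2 ^ (-a) ≤ smoothedPow a ε t :=
      rpow_le_rpow_of_nonpos (by positivity) (by nlinarith) (by linarith)
    calc (2 : ℝ) ^ (-a) / 2 ≤ 1 / 2 * smoothedPow a ε t := by linarith
      _ ≤ _ := by
        gcongr
        linarith [half_le_sq_div_of_le hε ht h]
  · have ht₀ : 0 < t := hε.trans h
    have hpow : 2 ^ (-a) * t⁻¹ ≤ smoothedPow a ε t := by
      calc (2 : ℝ) ^ (-a) * t⁻¹ ≤ 2 ^ (-a) * t ^ (-(2 * a)) := by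
            rw [← rpow_neg_one t]
            gcongr 2 ^ (-a) * ?_
            exact rpow_le_rpow_of_exponent_ge ht₀ ht₁ (by linarith)
        _ = (2 * t ^ 2) ^ (-a) := by
            rw [rpow_neg_two_mul ht, mul_rpow zero_le_two (by positivity)]
        _ ≤ _ := rpow_le_rpow_of_nonpos (by positivity) (by nlinarith) (by linarith)
    calc (2 : ℝ) ^ (-a) / 2 ≤ 2 ^ (-a) := half_le_self (by positivity)
      _ = t * (2 ^ (-a) * t⁻¹) := by field_simp
      _ ≤ _ := by
        gcongr
        exact le_add_of_nonneg_right (by positivity)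

end SmoothedPower

section Barrier

/-- The primitive of `-smoothedPow a ε * steepCutoff K` vanishing for `z ≥ 1`. For `4a` equal to
the dimension and `ε → 0` this is a truncated fundamental solution in the variable
`cosh d₁ + cosh d₂ - 2 ∼ (d₁² + d₂²) / 2`. -/
noncomputable def barrier (a ε K z : ℝ) : ℝ := ∫ t in z..1, smoothedPow a ε t * steepCutoff K t

variable {a ε K z : ℝ}

lemma hasDerivAt_barrier (a : ℝ) (hε : 0 < ε) (K z : ℝ) :
    HasDerivAt (barrier a ε K) (-(smoothedPow a ε z * steepCutoff K z)) z := by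
  have hcont : Continuous fun t => smoothedPow a ε t * steepCutoff K t :=
    (contDiff_smoothedPow (m := 0) a hε).continuous.mul (contDiff_steepCutoff K).continuous
  exact intervalIntegral.integral_hasDerivAt_left (hcont.intervalIntegrable _ _)
    (hcont.stronglyMeasurableAtFilter _ _) hcont.continuousAt

lemma deriv_barrier (a : ℝ) (hε : 0 < ε) (K : ℝ) :
    deriv (barrier a ε K) = fun z => -(smoothedPow a ε z * steepCutoff K z) :=
  funext fun z => (hasDerivAt_barrier a hε K z).deriv

lemma contDiff_barrier (a : ℝ) (hε : 0 < ε) (K : ℝ) : ContDiff ℝ ∞ (barrier a ε K) := by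
  refine contDiff_infty_iff_deriv.2
    ⟨fun z => (hasDerivAt_barrier a hε K z).differentiableAt, ?_⟩
  rw [deriv_barrier a hε]
  exact ((contDiff_smoothedPow a hε).mul (contDiff_steepCutoff K)).neg

lemma deriv_deriv_barrier (a : ℝ) (hε : 0 < ε) (K z : ℝ) :
    deriv (deriv (barrier a ε K)) z =
      2 * a * z * smoothedPow (a + 1) ε z * steepCutoff K z -
        smoothedPow a ε z * deriv (steepCutoff K) z := by
  have hT : HasDerivAt (steepCutoff K) (deriv (steepCutoff K) z) z :=
    ((contDiff_steepCutoff K).differentiable (by simp) z).hasDerivAt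
  rw [deriv_barrier a hε, ((hasDerivAt_smoothedPow a hε z).fun_mul hT).fun_neg.deriv]
  ring

lemma barrier_eq_zero (a ε : ℝ) (hK : 0 < K) (hz : 1 ≤ z) : barrier a ε K z = 0 := by
  refine intervalIntegral.integral_zero_ae (.of_forall fun t ht => ?_)
  rw [Set.uIoc_of_ge hz] at ht
  rw [steepCutoff_eq_zero hK ht.1.le, mul_zero]

lemma barrier_nonneg (a : ℝ) (hε : 0 < ε) (hK : 0 < K) (z : ℝ) : 0 ≤ barrier a ε K z := by
  rcases le_total z 1 with hz | hz
  · exact intervalIntegral.integral_nonneg hz fun t _ =>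
      mul_nonneg (smoothedPow_pos a hε t).le (steepCutoff_nonneg K t)
  · exact (barrier_eq_zero a ε hK hz).ge

lemma barrier_le_rpow_mul (ha : 1 ≤ a) (hε : 0 < ε) (hK : 0 < K) (hz : 0 ≤ z) (hz₁ : z ≤ 1) :
    barrier a ε K z ≤ 2 ^ a * (z + ε) ^ (1 - 2 * a) * steepCutoff K z := by
  set H : ℝ → ℝ := fun t => 2 ^ a * (t + ε) ^ (1 - 2 * a) * steepCutoff K t - barrier a ε K t
    with hH
  have hderiv (t : ℝ) (ht : 0 ≤ t) : HasDerivAt H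
      (2 ^ a * ((1 - 2 * a) * (t + ε) ^ (-(2 * a))) * steepCutoff K t +
        2 ^ a * (t + ε) ^ (1 - 2 * a) * deriv (steepCutoff K) t +
        smoothedPow a ε t * steepCutoff K t) t := by
    have hpow := ((hasDerivAt_id t).add_const ε).rpow_const (p := 1 - 2 * a)
      (Or.inl (add_pos_of_nonneg_of_pos ht hε).ne')
    have hT := ((contDiff_steepCutoff K).differentiable (by simp) t).hasDerivAt
    refine (((hpow.const_mul (2 ^ a)).mul hT).sub (hasDerivAt_barrier a hε K t)).congr_deriv ?_
    rw [show 1 - 2 * a - 1 = -(2 * a) by ring, id]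
    ring
  have hanti : AntitoneOn H (Set.Icc 0 1) := by
    refine antitoneOn_of_hasDerivWithinAt_nonpos (convex_Icc 0 1)
      (fun t ht => (hderiv t ht.1).continuousAt.continuousWithinAt)
      (fun t ht => (hderiv t (interior_subset ht).1).hasDerivWithinAt) fun t ht => ?_
    have ht₀ : 0 ≤ t := (interior_subset ht).1
    have hT := steepCutoff_nonneg K t
    have hcut : 2 ^ a * (t + ε) ^ (1 - 2 * a) * deriv (steepCutoff K) t ≤ 0 :=
      mul_nonpos_of_nonneg_of_nonpos (by positivity) (deriv_steepCutoff_nonpos hK t)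
    have hpow := mul_le_mul_of_nonneg_right (smoothedPow_le (zero_le_one.trans ha) hε ht₀) hT
    have hexp : 0 ≤ (2 * a - 2) * (2 ^ a * (t + ε) ^ (-(2 * a)) * steepCutoff K t) :=
      mul_nonneg (by linarith) (by positivity)
    linarith
  have hle : H 1 ≤ H z := hanti ⟨hz, hz₁⟩ ⟨zero_le_one, le_rfl⟩ hz₁
  simp only [hH, steepCutoff_eq_zero hK le_rfl, barrier_eq_zero a ε hK le_rfl] at hle
  linarith

lemma barrier_le (ha : 1 ≤ a) (hε : 0 < ε) (hK : 0 < K) (hz : 0 ≤ z) :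
    barrier a ε K z ≤ 2 ^ a * (z + ε) * smoothedPow a ε z * steepCutoff K z := by
  rcases le_or_gt z 1 with hz₁ | hz₁
  · refine (barrier_le_rpow_mul ha hε hK hz hz₁).trans ?_
    have hT := steepCutoff_nonneg K z
    have hpos : 0 < z + ε := by positivity
    rw [sub_eq_add_neg, rpow_add hpos, rpow_one, ← mul_assoc]
    gcongr
    exact add_rpow_le_smoothedPow (zero_le_one.trans ha) hε hz
  · simp [barrier_eq_zero a ε hK hz₁.le, steepCutoff_eq_zero hK hz₁.le]

/-- The steepness of the cutoff for which `barrier` is a subsolution away from the origin. -/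
noncomputable def steepness (a μ : ℝ) : ℝ := 4 * a + 2 * 2 ^ a * |μ| + 1

lemma steepness_pos (ha : 0 ≤ a) (μ : ℝ) : 0 < steepness a μ := by
  unfold steepness
  positivity

lemma barrier_le_two_mul (ha : 1 ≤ a) (hε : 0 < ε) (hε₁ : ε ≤ 1) (hK : 0 < K) (hz : 0 ≤ z) :
    barrier a ε K z ≤
      2 * 2 ^ a * (z + ε ^ 2 / (z ^ 2 + ε ^ 2)) * (smoothedPow a ε z * steepCutoff K z) := by
  have hP := smoothedPow_pos a hε z
  have hT := steepCutoff_nonneg K z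
  have hκ : 0 ≤ ε ^ 2 / (z ^ 2 + ε ^ 2) := by positivity
  have hε_le : ε ≤ z + 2 * (ε ^ 2 / (z ^ 2 + ε ^ 2)) := by
    rcases le_or_gt ε z with h | h
    · linarith
    · linarith [half_le_sq_div_of_le hε hz h.le]
  calc barrier a ε K z ≤ 2 ^ a * (z + ε) * smoothedPow a ε z * steepCutoff K z :=
        barrier_le ha hε hK hz
    _ ≤ 2 ^ a * (2 * (z + ε ^ 2 / (z ^ 2 + ε ^ 2))) * smoothedPow a ε z * steepCutoff K z := by
        gcongr
        linarith
    _ = _ := by ring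

lemma mul_sub_le_barrier_ode (ha : 1 ≤ a) (hε : 0 < ε) (hε₁ : ε ≤ 1) (μ : ℝ) (hz : 0 ≤ z)
    (hK : K = steepness a μ) :
    K * (z - ε ^ 2 / (z ^ 2 + ε ^ 2)) * (smoothedPow a ε z * steepCutoff K z) ≤
      2 * z * deriv (deriv (barrier a ε K)) z + 4 * a * (1 + z) * deriv (barrier a ε K) z +
        μ * barrier a ε K z := by
  have hK₀ : 0 < K := hK ▸ steepness_pos (zero_le_one.trans ha) μ
  have hPT := mul_nonneg (smoothedPow_pos a hε z).le (steepCutoff_nonneg K z)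
  have hcut := mul_le_mul_of_nonneg_left (deriv_steepCutoff_le hK₀ hz)
    (mul_nonneg hz (smoothedPow_pos a hε z).le)
  have hzero_order := (abs_le.1 (abs_mul μ (barrier a ε K z)).le).1
  rw [abs_of_nonneg (barrier_nonneg a hε hK₀ z)] at hzero_order
  have hbarrier := mul_le_mul_of_nonneg_left (barrier_le_two_mul ha hε hε₁ hK₀ hz) (abs_nonneg μ)
  have hsq : z ^ 2 / (z ^ 2 + ε ^ 2) = 1 - ε ^ 2 / (z ^ 2 + ε ^ 2) := by field_simp; ring
  have hκ : 0 ≤ ε ^ 2 / (z ^ 2 + ε ^ 2) := by positivity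
  rw [deriv_deriv_barrier a hε, deriv_barrier a hε, smoothedPow_add_one a hε]
  generalize ε ^ 2 / (z ^ 2 + ε ^ 2) = κ at *
  have hpow : 2 * z * (2 * a * z * (smoothedPow a ε z / (z ^ 2 + ε ^ 2)) * steepCutoff K z) =
      4 * a * (1 - κ) * (smoothedPow a ε z * steepCutoff K z) := by
    rw [← hsq]
    ring
  have hremainder := mul_nonneg (add_nonneg hz hκ) hPT
  calc _ = (4 * a * (1 - κ) + 2 * K * z - 4 * a * (1 + z) - |μ| * (2 * 2 ^ a * (z + κ))) *
          (smoothedPow a ε z * steepCutoff K z) -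
          (z + κ) * (smoothedPow a ε z * steepCutoff K z) := by
        rw [hK, steepness]
        ring
    _ ≤ _ := by linarith

lemma mul_rpow_sub_le_barrier_ode (ha : 1 ≤ a) (hε : 0 < ε) (hε₁ : ε ≤ 1) (μ : ℝ) (hz : 0 ≤ z)
    (hK : K = steepness a μ) :
    K * (2 ^ (-a) / 2 - 2 * (ε ^ 2 * smoothedPow (a + 1) ε z)) * steepCutoff K z ≤
      2 * z * deriv (deriv (barrier a ε K)) z + 4 * a * (1 + z) * deriv (barrier a ε K) z +
        μ * barrier a ε K z := by
  have hK₀ : 0 < K := hK ▸ steepness_pos (zero_le_one.trans ha) μ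
  refine le_trans ?_ (mul_sub_le_barrier_ode ha hε hε₁ μ hz hK)
  rcases le_or_gt z 1 with hz₁ | hz₁
  · have hlower := mul_le_mul_of_nonneg_left (le_add_sq_div_mul_smoothedPow ha hε hε₁ hz hz₁)
      (mul_nonneg hK₀.le (steepCutoff_nonneg K z))
    rw [smoothedPow_add_one a hε]
    linear_combination hlower
  · simp [steepCutoff_eq_zero hK₀ hz₁.le]

lemma le_radialOperator_comp_add_sub (n₁ n₂ : ℕ) (μ : ℝ) {f : ℝ → ℝ} {x : ℝ × ℝ} (hx₁ : 1 ≤ x.1)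
    (hx₂ : 1 ≤ x.2) (hf' : deriv f (x.1 + x.2 - 2) ≤ 0)
    (hf'' : 0 ≤ deriv (deriv f) (x.1 + x.2 - 2)) :
    2 * (x.1 + x.2 - 2) * deriv (deriv f) (x.1 + x.2 - 2) +
      (n₁ + n₂ + 2) * (1 + (x.1 + x.2 - 2)) * deriv f (x.1 + x.2 - 2) +
      μ * f (x.1 + x.2 - 2) ≤
      radialOperator n₁ n₂ 1 1 μ (fun x => f (x.1 + x.2 - 2)) x := by
  have hsecond : 2 * (x.1 + x.2 - 2) ≤ 1 * (x.1 ^ 2 - 1) + 1 * (x.2 ^ 2 - 1) := by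
    linarith [sq_nonneg (x.1 - 1), sq_nonneg (x.2 - 1)]
  have hfirst : 1 * (n₁ + 1 : ℝ) * x.1 + 1 * (n₂ + 1) * x.2 ≤
      (n₁ + n₂ + 2) * (1 + (x.1 + x.2 - 2)) := by
    linarith [mul_nonneg (by positivity : (0 : ℝ) ≤ n₁ + 1) (sub_nonneg.2 hx₂),
      mul_nonneg (by positivity : (0 : ℝ) ≤ n₂ + 1) (sub_nonneg.2 hx₁)]
  rw [radialOperator_comp_add_sub]
  gcongr ?_ + ?_ + _
  · exact mul_le_mul_of_nonneg_right hsecond hf''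
  · exact mul_le_mul_of_nonpos_right hfirst hf'

lemma le_radialOperator_barrier {n₁ n₂ : ℕ} (hn : 2 ≤ n₁ + n₂) (hε : 0 < ε) (hε₁ : ε ≤ 1) (μ : ℝ)
    {x : ℝ × ℝ} (hx₁ : 1 ≤ x.1) (hx₂ : 1 ≤ x.2) (ha : a = (n₁ + n₂ + 2) / 4)
    (hK : K = steepness a μ) :
    K * (2 ^ (-a) / 2 - 2 * (ε ^ 2 * smoothedPow (a + 1) ε (x.1 + x.2 - 2))) *
      steepCutoff K (x.1 + x.2 - 2) ≤
      radialOperator n₁ n₂ 1 1 μ (fun x => barrier a ε K (x.1 + x.2 - 2)) x := by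
  have hn' : (2 : ℝ) ≤ n₁ + n₂ := by exact_mod_cast hn
  have ha₁ : 1 ≤ a := by linarith
  have hK₀ : 0 < K := hK ▸ steepness_pos (zero_le_one.trans ha₁) μ
  have hz : 0 ≤ x.1 + x.2 - 2 := by linarith
  refine (mul_rpow_sub_le_barrier_ode ha₁ hε hε₁ μ hz hK).trans ?_
  rw [show 4 * a = n₁ + n₂ + 2 by rw [ha]; ring]
  have hT := steepCutoff_nonneg K (x.1 + x.2 - 2)
  have hP := smoothedPow_pos a hε (x.1 + x.2 - 2)
  refine le_radialOperator_comp_add_sub n₁ n₂ μ hx₁ hx₂ ?_ ?_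
  · rw [deriv_barrier a hε, neg_nonpos]
    positivity
  · rw [deriv_deriv_barrier a hε, sub_nonneg]
    have hP₁ := smoothedPow_pos (a + 1) hε (x.1 + x.2 - 2)
    exact (mul_nonpos_of_nonneg_of_nonpos hP.le (deriv_steepCutoff_nonpos hK₀ _)).trans
      (by positivity)

end Barrier

section Concentration

variable {E : Type*} [NormedAddCommGroup E] {a : ℝ}

lemma smoothedPow_mul_mul (b : ℝ) {s : ℝ} (hs : 0 ≤ s) (ε t : ℝ) :
    smoothedPow b (s * ε) (s * t) = s ^ (-(2 * b)) * smoothedPow b ε t := by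
  rw [smoothedPow, smoothedPow, rpow_neg_two_mul hs,
    ← mul_rpow (sq_nonneg s) (by positivity), mul_pow, mul_pow, mul_add]

lemma smoothedPow_norm_sq_le {b : ℝ} (hb : 0 ≤ b) (x : E) :
    smoothedPow b 1 (‖x‖ ^ 2 / 18) ≤ 2 ^ b * 18 ^ (2 * b) * (1 + ‖x‖ ^ 2) ^ (-(4 * b) / 2) := by
  have hbase : (1 + ‖x‖ ^ 2) / 18 ≤ ‖x‖ ^ 2 / 18 + 1 := by linarith
  calc smoothedPow b 1 (‖x‖ ^ 2 / 18) ≤ 2 ^ b * (‖x‖ ^ 2 / 18 + 1) ^ (-(2 * b)) :=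
        smoothedPow_le hb one_pos (by positivity)
    _ ≤ 2 ^ b * ((1 + ‖x‖ ^ 2) / 18) ^ (-(2 * b)) := by
        gcongr 2 ^ b * ?_
        exact rpow_le_rpow_of_nonpos (by positivity) hbase (by linarith)
    _ = _ := by
        rw [div_rpow (by positivity) (by norm_num), rpow_neg (by norm_num : (0 : ℝ) ≤ 18),
          div_inv_eq_mul, show -(4 * b) / 2 = -(2 * b) by ring]
        ring

lemma continuous_smoothedPow_norm_sq (b : ℝ) {ε : ℝ} (hε : 0 < ε) :
    Continuous fun x : E => smoothedPow b ε (‖x‖ ^ 2 / 18) :=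
  (contDiff_smoothedPow (m := 0) b hε).continuous.comp (by fun_prop)

variable [NormedSpace ℝ E] [FiniteDimensional ℝ E] [MeasurableSpace E] [BorelSpace E]
  (ν : Measure E) [ν.IsAddHaarMeasure]

lemma integrable_smoothedPow_norm_sq {b : ℝ} (hb : (Module.finrank ℝ E : ℝ) < 4 * b) :
    Integrable (fun x => smoothedPow b 1 (‖x‖ ^ 2 / 18)) ν := by
  have hb₀ : 0 ≤ b := by linarith [Nat.cast_nonneg (α := ℝ) (Module.finrank ℝ E)]
  refine ((integrable_rpow_neg_one_add_norm_sq hb).const_mul (2 ^ b * 18 ^ (2 * b))).mono'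
    (continuous_smoothedPow_norm_sq b one_pos).aestronglyMeasurable (.of_forall fun x => ?_)
  rw [norm_of_nonneg (smoothedPow_pos b one_pos _).le]
  exact smoothedPow_norm_sq_le hb₀ x

lemma integral_smoothedPow_mul (ha : 4 * a = Module.finrank ℝ E) (W : E → ℝ) {δ : ℝ}
    (hδ : 0 < δ) :
    ∫ x, (δ ^ 2) ^ 2 * smoothedPow (a + 1) (δ ^ 2) (‖x‖ ^ 2 / 18) * W x ∂ν =
      ∫ x, smoothedPow (a + 1) 1 (‖x‖ ^ 2 / 18) * W (δ • x) ∂ν := by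
  have hcomp := Measure.integral_comp_smul ν
    (fun x => (δ ^ 2) ^ 2 * smoothedPow (a + 1) (δ ^ 2) (‖x‖ ^ 2 / 18) * W x) δ
  have hpow : 0 < δ ^ Module.finrank ℝ E := by positivity
  rw [abs_of_pos (by positivity), smul_eq_mul, eq_inv_mul_iff_mul_eq₀ hpow.ne',
    ← integral_const_mul] at hcomp
  rw [← hcomp]
  congr with x
  have hscale := smoothedPow_mul_mul (a + 1) (sq_nonneg δ) 1 (‖x‖ ^ 2 / 18)
  have hδ_pow : (δ ^ 2) ^ (-(2 * (a + 1))) = (δ ^ Module.finrank ℝ E * (δ ^ 2) ^ 2)⁻¹ := by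
    rw [← rpow_natCast δ (Module.finrank ℝ E), ← ha, ← pow_mul, ← rpow_natCast, ← rpow_natCast,
      ← rpow_mul hδ.le, ← rpow_add hδ, ← rpow_neg hδ.le]
    congr 1
    push_cast
    ring
  rw [mul_one, hδ_pow] at hscale
  rw [norm_smul, norm_of_nonneg hδ.le, mul_pow, mul_div_assoc, hscale]
  field_simp

/-- `δ⁴ * smoothedPow (a + 1) (δ ^ 2) (‖x‖ ^ 2 / 18)` is, up to normalization, an approximate
identity. -/
lemma tendsto_integral_smoothedPow_mul (ha : 4 * a = Module.finrank ℝ E) {W : E → ℝ}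
    (hW : Continuous W) {B : ℝ} (hB : ∀ x, ‖W x‖ ≤ B) :
    Filter.Tendsto
      (fun δ : ℝ => ∫ x, (δ ^ 2) ^ 2 * smoothedPow (a + 1) (δ ^ 2) (‖x‖ ^ 2 / 18) * W x ∂ν)
      (𝓝[>] 0) (𝓝 ((∫ x, smoothedPow (a + 1) 1 (‖x‖ ^ 2 / 18) ∂ν) * W 0)) := by
  have hpos (x : E) := smoothedPow_pos (a + 1) one_pos (‖x‖ ^ 2 / 18)
  have hlim : Filter.Tendsto
      (fun δ : ℝ => ∫ x, smoothedPow (a + 1) 1 (‖x‖ ^ 2 / 18) * W (δ • x) ∂ν)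
      (𝓝[>] 0) (𝓝 (∫ x, smoothedPow (a + 1) 1 (‖x‖ ^ 2 / 18) * W 0 ∂ν)) := by
    refine tendsto_integral_filter_of_dominated_convergence
      (fun x => smoothedPow (a + 1) 1 (‖x‖ ^ 2 / 18) * B) (.of_forall fun δ => ?_)
      (.of_forall fun δ => .of_forall fun x => ?_)
      ((integrable_smoothedPow_norm_sq ν (by linarith)).mul_const B) (.of_forall fun x => ?_)
    · exact ((continuous_smoothedPow_norm_sq (a + 1) one_pos).mul
        (hW.comp (continuous_const_smul δ))).aestronglyMeasurable
    · rw [norm_mul, norm_of_nonneg (hpos x).le]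
      exact mul_le_mul_of_nonneg_left (hB _) (hpos x).le
    · have hcont : Continuous fun δ : ℝ => W (δ • x) := by fun_prop
      have hzero := hcont.tendsto 0
      rw [zero_smul] at hzero
      exact (hzero.mono_left nhdsWithin_le_nhds).const_mul _
  rw [integral_mul_const] at hlim
  refine hlim.congr' ?_
  filter_upwards [self_mem_nhdsWithin] with δ hδ
  exact (integral_smoothedPow_mul ν ha W hδ).symm

end Concentration

namespace ProdLogHalfSpace

variable {n₁ n₂ : ℕ} {a ε K μ : ℝ} {w : ProdLogHalfSpace n₁ n₂ → ℝ}

lemma integral_prodVolume (f : ProdLogHalfSpace n₁ n₂ → ℝ) :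
    ∫ q, f q ∂prodVolume n₁ n₂ = ∫ q, f q * (density n₁ q.1 * density n₂ q.2) := by
  have hmeas (n : ℕ) : Measurable fun q : LogHalfSpace n => ENNReal.ofReal (density n q) :=
    (contDiff_density (m := 0)).continuous.measurable.ennreal_ofReal
  have hmeas_mul : Measurable fun q : ProdLogHalfSpace n₁ n₂ =>
      ENNReal.ofReal (density n₁ q.1) * ENNReal.ofReal (density n₂ q.2) :=
    ((hmeas n₁).comp measurable_fst).mul ((hmeas n₂).comp measurable_snd)
  rw [prodVolume, hyperbolicVolume, hyperbolicVolume, prod_withDensity (hmeas n₁) (hmeas n₂),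
    integral_withDensity_eq_integral_toReal_smul hmeas_mul
      (.of_forall fun _ => ENNReal.mul_lt_top ENNReal.ofReal_lt_top ENNReal.ofReal_lt_top),
    ← Measure.volume_eq_prod]
  simp only [ENNReal.toReal_mul, ENNReal.toReal_ofReal (density_pos _).le, smul_eq_mul, mul_comm]

/-- The quantity `(cosh d₁ - 1) + (cosh d₂ - 1)` for the distances from the base point `0`. -/
noncomputable def coshExcess (q : ProdLogHalfSpace n₁ n₂) : ℝ :=
  (coshDists 0 q).1 + (coshDists 0 q).2 - 2

lemma continuous_coshExcess : Continuous (coshExcess : ProdLogHalfSpace n₁ n₂ → ℝ) := by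
  have hcont := (contDiff_coshDists_right (m := 0) (0 : ProdLogHalfSpace n₁ n₂)).continuous
  exact (hcont.fst.add hcont.snd).sub continuous_const

lemma coshExcess_zero : coshExcess (0 : ProdLogHalfSpace n₁ n₂) = 0 := by
  norm_num [coshExcess, coshDists, coshDist]

lemma norm_sq_div_eighteen_le_coshExcess (q : ProdLogHalfSpace n₁ n₂) (hq : coshExcess q ≤ 1) :
    ‖q‖ ^ 2 / 18 ≤ coshExcess q := by
  unfold coshExcess coshDists at *
  have h₁ := one_le_coshDist (0 : ProdLogHalfSpace n₁ n₂).1 q.1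
  have h₂ := one_le_coshDist (0 : ProdLogHalfSpace n₁ n₂).2 q.2
  have hfst := norm_sq_div_eighteen_le_coshDist_zero_sub_one q.1 (by dsimp at *; linarith)
  have hsnd := norm_sq_div_eighteen_le_coshDist_zero_sub_one q.2 (by dsimp at *; linarith)
  dsimp at *
  rcases max_choice ‖q.1‖ ‖q.2‖ with h | h <;> rw [Prod.norm_def, h] <;> linarith

lemma isKernel_steepCutoff (hK : 0 < K) : IsKernel fun x => steepCutoff K (x.1 + x.2 - 2) :=
  .of_comp_add_sub (contDiff_steepCutoff K) fun _ => steepCutoff_eq_zero hK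

lemma isKernel_smoothedPow_mul_steepCutoff (b : ℝ) (hε : 0 < ε) (hK : 0 < K) :
    IsKernel fun x =>
      ε ^ 2 * smoothedPow b ε (x.1 + x.2 - 2) * steepCutoff K (x.1 + x.2 - 2) :=
  .of_comp_add_sub (f := fun z => ε ^ 2 * smoothedPow b ε z * steepCutoff K z)
    ((contDiff_const.mul (contDiff_smoothedPow b hε)).mul (contDiff_steepCutoff K))
    fun z hz => by rw [steepCutoff_eq_zero hK hz, mul_zero]

lemma radialConv_steepCutoff_le (hn : 2 ≤ n₁ + n₂) (ha : a = (n₁ + n₂ + 2) / 4)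
    (hK : K = steepness a μ) (hε : 0 < ε) (hε₁ : ε ≤ 1) (hw : Continuous w) (hw₀ : 0 ≤ w)
    (hsol : ∀ F, IsKernel F → radialConv (radialOperator n₁ n₂ 1 1 μ F) w 0 = 0) :
    2 ^ (-a) / 4 * radialConv (fun x => steepCutoff K (x.1 + x.2 - 2)) w 0 ≤
      radialConv (fun x =>
        ε ^ 2 * smoothedPow (a + 1) ε (x.1 + x.2 - 2) * steepCutoff K (x.1 + x.2 - 2)) w 0 := by
  have hK₀ : 0 < K := hK ▸ steepness_pos (ha ▸ by positivity) μ
  have hbarrier : IsKernel fun x => barrier a ε K (x.1 + x.2 - 2) :=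
    .of_comp_add_sub (contDiff_barrier a hε K) fun z => barrier_eq_zero a ε hK₀
  have hcutoff := (integrable_kernel_mul (isKernel_steepCutoff hK₀) hw 0).const_mul
    (2 ^ (-a) / 4)
  have hsmoothed := integrable_kernel_mul
    (isKernel_smoothedPow_mul_steepCutoff (a + 1) hε hK₀) hw 0
  have hoperator := (integrable_kernel_mul (hbarrier.radialOperator n₁ n₂ 1 1 μ) hw 0).const_mul
    (2 * K)⁻¹
  have hzero := hsol _ hbarrier
  simp only [radialConv] at hzero ⊢
  rw [← integral_const_mul, ← sub_nonpos, ← integral_sub hcutoff hsmoothed,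
    ← mul_zero (2 * K)⁻¹, ← hzero, ← integral_const_mul]
  refine integral_mono (hcutoff.sub hsmoothed) hoperator fun q => ?_
  have hle := mul_le_mul_of_nonneg_right (le_radialOperator_barrier hn hε hε₁ μ
    (x := coshDists 0 q) (one_le_coshDist _ _) (one_le_coshDist _ _) ha hK) (hw₀ q)
  dsimp only
  rw [le_inv_mul_iff₀ (by positivity)]
  linear_combination hle

lemma radialConv_smoothedPow_mul_steepCutoff_le (ha : 0 ≤ a) (hK : 0 < K) (hε : 0 < ε)
    (hw : Continuous w) (hw₀ : 0 ≤ w) :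
    radialConv (fun x =>
        ε ^ 2 * smoothedPow a ε (x.1 + x.2 - 2) * steepCutoff K (x.1 + x.2 - 2)) w 0 ≤
      ∫ q, ε ^ 2 * smoothedPow a ε (‖q‖ ^ 2 / 18) * (steepCutoff K (coshExcess q) * w q)
        ∂prodVolume n₁ n₂ := by
  have hcutoff : Continuous fun q : ProdLogHalfSpace n₁ n₂ => steepCutoff K (coshExcess q) * w q :=
    ((contDiff_steepCutoff K).continuous.comp continuous_coshExcess).mul hw
  refine integral_mono (integrable_kernel_mul (isKernel_smoothedPow_mul_steepCutoff a hε hK) hw 0)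
    (((continuous_const.mul (continuous_smoothedPow_norm_sq a hε)).mul
      hcutoff).integrable_of_hasCompactSupport
      (hasCompactSupport_kernel (isKernel_steepCutoff hK) 0).mul_right.mul_left) fun q => ?_
  change ε ^ 2 * smoothedPow a ε (coshExcess q) * steepCutoff K (coshExcess q) * w q ≤ _
  rw [mul_assoc]
  rcases le_or_gt (coshExcess q) 1 with hq | hq
  · have hT := mul_nonneg (steepCutoff_nonneg K (coshExcess q)) (hw₀ q)
    have hnorm := norm_sq_div_eighteen_le_coshExcess q hq
    refine mul_le_mul_of_nonneg_right (mul_le_mul_of_nonneg_left ?_ (sq_nonneg ε)) hT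
    exact rpow_le_rpow_of_nonpos (by positivity) (by gcongr) (by linarith)
  · simp [steepCutoff_eq_zero hK hq.le]

lemma weak_harnack_zero (hn : 2 ≤ n₁ + n₂) (ha : a = (n₁ + n₂ + 2) / 4) (hK : K = steepness a μ) :
    ∃ C, 0 ≤ C ∧ ∀ w : ProdLogHalfSpace n₁ n₂ → ℝ, Continuous w → 0 ≤ w →
      (∀ F, IsKernel F → radialConv (radialOperator n₁ n₂ 1 1 μ F) w 0 = 0) →
      radialConv (fun x => steepCutoff K (x.1 + x.2 - 2)) w 0 ≤ C * w 0 := by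
  have ha₀ : 0 ≤ a := ha ▸ by positivity
  have hK₀ : 0 < K := hK ▸ steepness_pos ha₀ μ
  set I := ∫ q : ProdLogHalfSpace n₁ n₂, smoothedPow (a + 1) 1 (‖q‖ ^ 2 / 18)
  have hI : 0 ≤ I := integral_nonneg fun q => (smoothedPow_pos (a + 1) one_pos _).le
  have hT := steepCutoff_nonneg K 0
  have : (volume : Measure (ProdLogHalfSpace n₁ n₂)).IsAddHaarMeasure :=
    Measure.prod.instIsAddHaarMeasure (volume : Measure (LogHalfSpace n₁))
      (volume : Measure (LogHalfSpace n₂))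
  refine ⟨I * steepCutoff K 0 / (2 ^ (-a) / 4), by positivity, fun w hw hw₀ hsol => ?_⟩
  set W : ProdLogHalfSpace n₁ n₂ → ℝ := fun q =>
    steepCutoff K (coshExcess q) * w q * (density n₁ q.1 * density n₂ q.2) with hW
  have hW_cont : Continuous W :=
    (((contDiff_steepCutoff K).continuous.comp continuous_coshExcess).mul hw).mul
      (((contDiff_density (m := 0)).continuous.comp continuous_fst).mul
        ((contDiff_density (m := 0)).continuous.comp continuous_snd))
  obtain ⟨B, hB⟩ := ((hasCompactSupport_kernel (isKernel_steepCutoff hK₀)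
    0).mul_right.mul_right : HasCompactSupport W).exists_bound_of_continuous hW_cont
  have hW_zero : W 0 = steepCutoff K 0 * w 0 := by simp [hW, coshExcess_zero, density]
  rw [div_mul_eq_mul_div, le_div_iff₀ (by positivity), mul_comm, mul_assoc, ← hW_zero]
  have hdim : 4 * a = Module.finrank ℝ (ProdLogHalfSpace n₁ n₂) := by
    rw [ha]
    simp
    ring
  refine ge_of_tendsto (tendsto_integral_smoothedPow_mul volume hdim hW_cont hB) ?_
  filter_upwards [Ioc_mem_nhdsGT one_pos] with δ hδ
  have hδ₀ : 0 < δ := hδ.1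
  calc _ ≤ _ := radialConv_steepCutoff_le hn ha hK (pow_pos hδ₀ 2)
          (pow_le_one₀ hδ₀.le hδ.2) hw hw₀ hsol
    _ ≤ _ := radialConv_smoothedPow_mul_steepCutoff_le (by positivity) hK₀ (pow_pos hδ₀ 2) hw hw₀
    _ = _ := by simp only [integral_prodVolume, hW, mul_assoc]

lemma weak_harnack (hn : 2 ≤ n₁ + n₂) (ha : a = (n₁ + n₂ + 2) / 4) (hK : K = steepness a μ) :
    ∃ C, 0 ≤ C ∧ ∀ w ∈ weakSolutions n₁ n₂ μ, 0 ≤ w → ∀ p,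
      radialConv (fun x => steepCutoff K (x.1 + x.2 - 2)) w p ≤ C * w p := by
  have hK₀ : 0 < K := hK ▸ steepness_pos (ha ▸ by positivity) μ
  obtain ⟨C, hC, hharnack⟩ := weak_harnack_zero hn ha hK
  refine ⟨C, hC, fun w hw hw₀ p => ?_⟩
  have hbase := hharnack (fun g => w (prodTranslate p g))
    (hw.1.comp (continuous_prodTranslate.comp (Continuous.prodMk_right p)))
    (fun g => hw₀ (prodTranslate p g))
    fun F hF => by
      rw [← radialConv_eq_radialConv_translate (hF.radialOperator ..) hw.1, hw.2 F hF,
        Pi.zero_apply]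
  rwa [prodTranslate_zero, ← radialConv_eq_radialConv_translate (isKernel_steepCutoff hK₀) hw.1]
    at hbase

end ProdLogHalfSpace

namespace ProdLogHalfSpace

section

variable {n₁ n₂ : ℕ} {F : ℝ × ℝ → ℝ} {K R μ : ℝ}

lemma exists_abs_le_mul_steepCutoff (hF : IsKernel F) (hR : R < 3)
    (hF_zero : ∀ x : ℝ × ℝ, R < x.1 + x.2 → F x = 0) (hK : 0 < K) :
    ∃ M, 0 < M ∧ ∀ x : ℝ × ℝ, 1 ≤ x.1 → 1 ≤ x.2 →
      |F x| ≤ M * steepCutoff K (x.1 + x.2 - 2) := by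
  obtain ⟨B, hB⟩ := (isCompact_Icc.prod isCompact_Icc).exists_bound_of_continuousOn
    (s := Set.Icc (1 : ℝ) 2 ×ˢ Set.Icc (1 : ℝ) 2) hF.contDiff.continuous.continuousOn
  have hcutoff : 0 < steepCutoff K (R - 2) := steepCutoff_pos hK (by linarith)
  refine ⟨(|B| + 1) / steepCutoff K (R - 2), by positivity, fun x hx₁ hx₂ => ?_⟩
  rcases lt_or_ge R (x.1 + x.2) with hx | hx
  · rw [hF_zero x hx, abs_zero]
    exact mul_nonneg (by positivity) (steepCutoff_nonneg K _)
  · have hbound : |F x| ≤ |B| + 1 :=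
      (hB x ⟨⟨hx₁, by linarith⟩, ⟨hx₂, by linarith⟩⟩).trans (by linarith [le_abs_self B])
    have hanti : steepCutoff K (R - 2) ≤ steepCutoff K (x.1 + x.2 - 2) :=
      antitone_steepCutoff hK (by linarith)
    rw [div_mul_eq_mul_div, le_div_iff₀ hcutoff]
    gcongr

lemma exists_abs_radialConv_le (hn : 2 ≤ n₁ + n₂) (hF : IsKernel F) (hR : R < 3)
    (hF_zero : ∀ x : ℝ × ℝ, R < x.1 + x.2 → F x = 0) (μ : ℝ) :
    ∃ k, 0 < k ∧ ∀ w ∈ weakSolutions n₁ n₂ μ, 0 ≤ w → ∀ p, |radialConv F w p| ≤ k * w p := by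
  obtain ⟨C, hC, hharnack⟩ := weak_harnack (μ := μ) hn rfl rfl
  set K := steepness ((n₁ + n₂ + 2) / 4) μ
  have hK : 0 < K := steepness_pos (by positivity) μ
  obtain ⟨M, hM, hle⟩ := exists_abs_le_mul_steepCutoff hF hR hF_zero hK
  refine ⟨M * C + 1, by positivity, fun w hw hw₀ p => ?_⟩
  have hintegral : |radialConv F w p| ≤
      ∫ q, M * (steepCutoff K ((coshDists p q).1 + (coshDists p q).2 - 2) * w q)
        ∂prodVolume n₁ n₂ := by
    refine norm_integral_le_of_norm_le (f := fun q => F (coshDists p q) * w q)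
      ((integrable_kernel_mul (isKernel_steepCutoff hK) hw.1 p).const_mul M)
      (.of_forall fun q => ?_)
    rw [norm_mul, norm_eq_abs, norm_of_nonneg (hw₀ q), ← mul_assoc]
    exact mul_le_mul_of_nonneg_right (hle _ (one_le_coshDist _ _) (one_le_coshDist _ _)) (hw₀ q)
  rw [integral_const_mul] at hintegral
  calc |radialConv F w p| ≤ M * (C * w p) :=
        hintegral.trans (mul_le_mul_of_nonneg_left (hharnack w hw hw₀ p) hM.le)
    _ ≤ (M * C + 1) * w p := by linarith [show 0 ≤ w p from hw₀ p]

lemma radialConv_eq_zero_of_le (hn : 2 ≤ n₁ + n₂) (hF : IsKernel F) (hR : R < 3)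
    (hF_zero : ∀ x : ℝ × ℝ, R < x.1 + x.2 → F x = 0) {u v : ProdLogHalfSpace n₁ n₂ → ℝ}
    (hu : u ∈ weakSolutions n₁ n₂ μ) (hv : v ∈ weakSolutions n₁ n₂ μ)
    (hFu : radialConv F u = 0) (hv₀ : 0 ≤ v) (hvu : v ≤ u) : radialConv F v = 0 := by
  obtain ⟨k, hk, hbound⟩ := exists_abs_radialConv_le hn hF hR hF_zero μ
  set A : Module.End ℝ (weakSolutions n₁ n₂ μ) := k⁻¹ • weakConv hF
  have hle (w : weakSolutions n₁ n₂ μ) (hw : 0 ≤ (w : ProdLogHalfSpace n₁ n₂ → ℝ)) p :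
      |k⁻¹ * radialConv F w p| ≤ (w : ProdLogHalfSpace n₁ n₂ → ℝ) p := by
    rw [abs_mul, abs_of_pos (inv_pos.2 hk), inv_mul_le_iff₀ hk]
    exact hbound w w.2 hw p
  have hadd : 1 + A ∈ positiveEnd (weakSolutions n₁ n₂ μ) := fun w hw p =>
    neg_le_iff_add_nonneg'.1 (neg_le_of_abs_le (hle w hw p))
  have hsub : 1 - A ∈ positiveEnd (weakSolutions n₁ n₂ μ) := fun w hw p =>
    sub_nonneg.2 (le_of_abs_le (hle w hw p))
  have hAu : A ⟨u, hu⟩ = 0 := Subtype.ext (show k⁻¹ • radialConv F u = 0 by rw [hFu, smul_zero])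
  have hAv := congrArg Subtype.val (apply_eq_zero_of_le (v := ⟨v, hv⟩) hadd hsub hAu hv₀ hvu)
  exact (smul_eq_zero.1 hAv).resolve_left (inv_ne_zero hk.ne')

end

section Localization

variable {n₁ n₂ : ℕ} {h : ProdLogHalfSpace n₁ n₂ → ℝ} {r : ℝ}

/-- A kernel concentrating at the diagonal as `r → 0`. -/
noncomputable def bumpKernel (r : ℝ) (x : ℝ × ℝ) : ℝ := expNegInvGlue (r - (x.1 + x.2 - 2))

lemma bumpKernel_eq_zero {x : ℝ × ℝ} (hx : r + 2 < x.1 + x.2) : bumpKernel r x = 0 :=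
  expNegInvGlue.zero_of_nonpos (by linarith)

lemma isKernel_bumpKernel (r : ℝ) : IsKernel (bumpKernel r) :=
  ⟨expNegInvGlue.contDiff.comp (f := fun x : ℝ × ℝ => r - (x.1 + x.2 - 2)) (by fun_prop), r + 2,
    fun _ => bumpKernel_eq_zero⟩

lemma exists_radialConv_bumpKernel_pos (hh : Continuous h) (h₀ : 0 < h 0) :
    ∃ r, 0 < r ∧ r < 1 ∧ 0 < radialConv (bumpKernel r) h 0 := by
  obtain ⟨ε, hε, hball⟩ := Metric.eventually_nhds_iff.1
    (hh.continuousAt.eventually (lt_mem_nhds h₀))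
  set r := min (1 / 2) (ε ^ 2 / 19)
  have hr : 0 < r := by positivity
  have hr_half : r ≤ 1 / 2 := min_le_left _ _
  have hr_sq : r ≤ ε ^ 2 / 19 := min_le_right _ _
  have hnonneg (q : ProdLogHalfSpace n₁ n₂) : 0 ≤ bumpKernel r (coshDists 0 q) * h q := by
    rcases le_or_gt r (coshExcess q) with hq | hq
    · have hzero : bumpKernel r (coshDists 0 q) = 0 :=
        expNegInvGlue.zero_of_nonpos (sub_nonpos.2 hq)
      rw [hzero, zero_mul]
    · have hnorm := norm_sq_div_eighteen_le_coshExcess q (by linarith)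
      have hq_lt : ‖q‖ < ε := lt_of_pow_lt_pow_left₀ 2 hε.le (by nlinarith [sq_nonneg ε])
      exact mul_nonneg (expNegInvGlue.nonneg _) (hball (by rwa [dist_zero_right])).le
  refine ⟨r, hr, by linarith, Continuous.integral_pos_of_hasCompactSupport_nonneg_nonzero (x := 0)
    (((isKernel_bumpKernel r).contDiff.continuous.comp
      (contDiff_coshDists_right (m := 0) 0).continuous).mul hh)
    (hasCompactSupport_kernel (isKernel_bumpKernel r) 0).mul_right hnonneg ?_⟩
  have hcenter : 0 < bumpKernel r (coshDists 0 (0 : ProdLogHalfSpace n₁ n₂)) :=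
    expNegInvGlue.pos_of_pos (sub_pos.2 (coshExcess_zero.trans_lt hr))
  exact (mul_pos hcenter h₀).ne'

lemma nonpos_of_radialConv_bumpKernel_eq_zero (hh : Continuous h)
    (hzero : ∀ r, 0 < r → r < 1 → radialConv (bumpKernel r) h = 0) : h ≤ 0 := fun p => by
  by_contra! hp
  obtain ⟨r, hr, hr_lt, hpos⟩ := exists_radialConv_bumpKernel_pos
    (h := fun g => h (prodTranslate p g))
    (hh.comp (continuous_prodTranslate.comp (Continuous.prodMk_right p)))
    (by rwa [prodTranslate_zero])
  rw [← radialConv_eq_radialConv_translate (isKernel_bumpKernel r) hh, hzero r hr hr_lt] at hpos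
  exact hpos.false

lemma eq_zero_of_radialConv_bumpKernel_eq_zero (hh : Continuous h)
    (hzero : ∀ r, 0 < r → r < 1 → radialConv (bumpKernel r) h = 0) : h = 0 := by
  refine le_antisymm (nonpos_of_radialConv_bumpKernel_eq_zero hh hzero) (neg_nonpos.1 ?_)
  refine nonpos_of_radialConv_bumpKernel_eq_zero hh.neg fun r hr hr_lt => ?_
  rw [← neg_one_smul ℝ, radialConv_smul_right, hzero r hr hr_lt, smul_zero]

end Localization

theorem prodOperator_eq_zero_of_le {n₁ n₂ : ℕ} (hn : 2 ≤ n₁ + n₂) {c₁ c₂ ν μ : ℝ}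
    {u v : ProdLogHalfSpace n₁ n₂ → ℝ} (hu : ContDiff ℝ 2 u) (hv : ContDiff ℝ 2 v)
    (hu_eq : prodOperator 1 1 μ u = 0) (hv_eq : prodOperator 1 1 μ v = 0)
    (hu_op : prodOperator c₁ c₂ ν u = 0) (hv₀ : 0 ≤ v) (hvu : v ≤ u) :
    prodOperator c₁ c₂ ν v = 0 := by
  refine eq_zero_of_radialConv_bumpKernel_eq_zero (continuous_prodOperator c₁ c₂ ν hv)
    fun r _ hr => ?_
  have hkernel := isKernel_bumpKernel r
  rw [← radialConv_radialOperator c₁ c₂ ν hkernel hv]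
  refine radialConv_eq_zero_of_le hn (hkernel.radialOperator ..) (R := r + 2) (by linarith)
    (fun x => radialOperator_eq_zero _ _ _ _ _ fun x => bumpKernel_eq_zero)
    (mem_weakSolutions_of_contDiff hu hu_eq) (mem_weakSolutions_of_contDiff hv hv_eq) ?_ hv₀ hvu
  rw [radialConv_radialOperator c₁ c₂ ν hkernel hu, hu_op, radialConv_zero_right]

end ProdLogHalfSpace

section HalfSpace

lemma hypLap_const_mul (n : ℕ) (c : ℝ) (u : EuclideanSpace ℝ (Fin n) → ℝ → ℝ)
    (x : EuclideanSpace ℝ (Fin n)) (y : ℝ) :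
    hypLap n (fun x y => c * u x y) x y = c * hypLap n u x y := by
  simp only [hypLap, lapX, iteratedDeriv_const_mul_field, deriv_const_mul_field,
    ← Finset.mul_sum]
  ring

lemma MinimalHarmonic.const_mul {n : ℕ} {μ c : ℝ} {w : EuclideanSpace ℝ (Fin n) → ℝ → ℝ}
    (hw : MinimalHarmonic n μ w) (hc : 0 < c) : MinimalHarmonic n μ fun x y => c * w x y := by
  obtain ⟨hpos, hcont, heq, hmin⟩ := hw
  refine ⟨fun x y hy => mul_pos hc (hpos x y hy), contDiffOn_const.mul hcont, fun x y hy => ?_,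
    fun v hv hv_eq hvw => ?_⟩
  · rw [hypLap_const_mul]
    linear_combination c * heq x y hy
  · obtain ⟨C, hC, hC_eq⟩ := hmin (fun x y => c⁻¹ * v x y) (contDiffOn_const.mul hv)
      (fun x y hy => by
        rw [hypLap_const_mul]
        linear_combination c⁻¹ * hv_eq x y hy)
      (fun x y hy => ⟨mul_nonneg (inv_nonneg.2 hc.le) (hvw x y hy).1,
        (inv_mul_le_iff₀ hc).2 (hvw x y hy).2⟩)
    refine ⟨C, hC, fun x y hy => ?_⟩
    rw [mul_left_comm, ← inv_mul_eq_iff_eq_mul₀ hc.ne']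
    exact hC_eq x y hy

end HalfSpace

section Product

variable {n₁ n₂ : ℕ} {c₁ c₂ μ ν : ℝ}
  {u v : EuclideanSpace ℝ (Fin n₁) → ℝ → EuclideanSpace ℝ (Fin n₂) → ℝ → ℝ}

/-- The function `v` in the coordinates `(x₁, log y₁, x₂, log y₂)`. -/
noncomputable def logLift
    (v : EuclideanSpace ℝ (Fin n₁) → ℝ → EuclideanSpace ℝ (Fin n₂) → ℝ → ℝ)
    (q : ProdLogHalfSpace n₁ n₂) : ℝ :=
  v q.1.1 (exp q.1.2) q.2.1 (exp q.2.2)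

/-- `v` is a C² solution of `(c₁Δ₁ + c₂Δ₂ + μ)v = 0` on the product of half-spaces. -/
structure IsProdSolution (c₁ c₂ μ : ℝ)
    (v : EuclideanSpace ℝ (Fin n₁) → ℝ → EuclideanSpace ℝ (Fin n₂) → ℝ → ℝ) : Prop where
  contDiffOn : ContDiffOn ℝ 2
    (fun p : (EuclideanSpace ℝ (Fin n₁) × ℝ) × (EuclideanSpace ℝ (Fin n₂) × ℝ) =>
      v p.1.1 p.1.2 p.2.1 p.2.2) {p | 0 < p.1.2 ∧ 0 < p.2.2}
  eq_zero : ∀ x₁ y₁, 0 < y₁ → ∀ x₂ y₂, 0 < y₂ →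
    c₁ * hypLap1 n₁ n₂ v x₁ y₁ x₂ y₂ + c₂ * hypLap2 n₁ n₂ v x₁ y₁ x₂ y₂ +
      μ * v x₁ y₁ x₂ y₂ = 0

namespace IsProdSolution

lemma contDiffOn_fst (hv : IsProdSolution c₁ c₂ μ v) (x₂ : EuclideanSpace ℝ (Fin n₂)) {y₂ : ℝ}
    (hy₂ : 0 < y₂) :
    ContDiffOn ℝ 2 (fun p : EuclideanSpace ℝ (Fin n₁) × ℝ => v p.1 p.2 x₂ y₂) {p | 0 < p.2} :=
  hv.contDiffOn.comp (f := fun p : EuclideanSpace ℝ (Fin n₁) × ℝ => (p, (x₂, y₂)))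
    (by fun_prop) fun _ hp => ⟨hp, hy₂⟩

lemma contDiffOn_snd (hv : IsProdSolution c₁ c₂ μ v) (x₁ : EuclideanSpace ℝ (Fin n₁)) {y₁ : ℝ}
    (hy₁ : 0 < y₁) :
    ContDiffOn ℝ 2 (fun p : EuclideanSpace ℝ (Fin n₂) × ℝ => v x₁ y₁ p.1 p.2) {p | 0 < p.2} :=
  hv.contDiffOn.comp (f := fun p : EuclideanSpace ℝ (Fin n₂) × ℝ => ((x₁, y₁), p))
    (by fun_prop) fun _ hp => ⟨hy₁, hp⟩

lemma contDiff_logLift (hv : IsProdSolution c₁ c₂ μ v) : ContDiff ℝ 2 (logLift v) :=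
  contDiffOn_univ.1 (hv.contDiffOn.comp
    (f := fun q : ProdLogHalfSpace n₁ n₂ => ((q.1.1, exp q.1.2), (q.2.1, exp q.2.2)))
    (by fun_prop) fun _ _ => ⟨exp_pos _, exp_pos _⟩)

lemma prodOperator_logLift (hv : IsProdSolution c₁ c₂ μ v) (b₁ b₂ ν : ℝ)
    (q : ProdLogHalfSpace n₁ n₂) :
    ProdLogHalfSpace.prodOperator b₁ b₂ ν (logLift v) q =
      b₁ * hypLap1 n₁ n₂ v q.1.1 (exp q.1.2) q.2.1 (exp q.2.2) +
        b₂ * hypLap2 n₁ n₂ v q.1.1 (exp q.1.2) q.2.1 (exp q.2.2) + ν * logLift v q := by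
  rw [hypLap1, hypLap2,
    hypLap_exp (u := fun x y => v x y _ _) (hv.contDiffOn_fst q.2.1 (exp_pos q.2.2)),
    hypLap_exp (hv.contDiffOn_snd q.1.1 (exp_pos q.1.2))]
  rfl

lemma prodOperator_logLift_eq_zero (hv : IsProdSolution c₁ c₂ μ v) :
    ProdLogHalfSpace.prodOperator c₁ c₂ μ (logLift v) = 0 :=
  funext fun q => (hv.prodOperator_logLift c₁ c₂ μ q).trans
    (hv.eq_zero _ _ (exp_pos _) _ _ (exp_pos _))

theorem of_le (hn : 2 ≤ n₁ + n₂) (hv : IsProdSolution 1 1 μ v) (hu : IsProdSolution 1 1 μ u)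
    (hvu : ∀ x₁ y₁, 0 < y₁ → ∀ x₂ y₂, 0 < y₂ →
      0 ≤ v x₁ y₁ x₂ y₂ ∧ v x₁ y₁ x₂ y₂ ≤ u x₁ y₁ x₂ y₂)
    (hu_op : IsProdSolution c₁ c₂ ν u) : IsProdSolution c₁ c₂ ν v := by
  refine ⟨hv.contDiffOn, fun x₁ y₁ hy₁ x₂ y₂ hy₂ => ?_⟩
  have hzero := ProdLogHalfSpace.prodOperator_eq_zero_of_le hn hu.contDiff_logLift
    hv.contDiff_logLift hu.prodOperator_logLift_eq_zero hv.prodOperator_logLift_eq_zero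
    hu_op.prodOperator_logLift_eq_zero
    (fun q => (hvu _ _ (exp_pos _) _ _ (exp_pos _)).1)
    (fun q => (hvu _ _ (exp_pos _) _ _ (exp_pos _)).2)
  have hpoint := congrFun hzero ((x₁, log y₁), (x₂, log y₂))
  rw [hv.prodOperator_logLift] at hpoint
  simpa only [logLift, exp_log hy₁, exp_log hy₂, Pi.zero_apply] using hpoint

end IsProdSolution

variable {μ₁ μ₂ : ℝ} {u₁ : EuclideanSpace ℝ (Fin n₁) → ℝ → ℝ}
  {u₂ : EuclideanSpace ℝ (Fin n₂) → ℝ → ℝ}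

lemma isProdSolution_mul
    (hu₁ : ContDiffOn ℝ 2 (fun p : EuclideanSpace ℝ (Fin n₁) × ℝ => u₁ p.1 p.2) {p | 0 < p.2})
    (hu₂ : ContDiffOn ℝ 2 (fun p : EuclideanSpace ℝ (Fin n₂) × ℝ => u₂ p.1 p.2) {p | 0 < p.2})
    (heq₁ : ∀ x y, 0 < y → -(hypLap n₁ u₁ x y) = μ₁ * u₁ x y)
    (heq₂ : ∀ x y, 0 < y → -(hypLap n₂ u₂ x y) = μ₂ * u₂ x y) (c₁ c₂ : ℝ) :
    IsProdSolution c₁ c₂ (c₁ * μ₁ + c₂ * μ₂) fun x₁ y₁ x₂ y₂ => u₁ x₁ y₁ * u₂ x₂ y₂ where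
  contDiffOn := (hu₁.comp contDiff_fst.contDiffOn fun _ hp => hp.1).mul
    (hu₂.comp contDiff_snd.contDiffOn fun _ hp => hp.2)
  eq_zero x₁ y₁ hy₁ x₂ y₂ hy₂ := by
    simp only [hypLap1, hypLap2, hypLap_const_mul, mul_comm (u₁ _ _) (u₂ x₂ y₂)]
    linear_combination
      -c₁ * u₂ x₂ y₂ * heq₁ x₁ y₁ hy₁ - c₂ * u₁ x₁ y₁ * heq₂ x₂ y₂ hy₂

lemma exists_eq_const_mul_of_isProdSolution (hu₁ : MinimalHarmonic n₁ μ₁ u₁)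
    (hu₂ : MinimalHarmonic n₂ μ₂ u₂) (hv₁ : IsProdSolution 1 0 μ₁ v)
    (hv₂ : IsProdSolution 0 1 μ₂ v)
    (hvu : ∀ x₁ y₁, 0 < y₁ → ∀ x₂ y₂, 0 < y₂ →
      0 ≤ v x₁ y₁ x₂ y₂ ∧ v x₁ y₁ x₂ y₂ ≤ u₁ x₁ y₁ * u₂ x₂ y₂) :
    ∃ C ∈ Set.Icc (0 : ℝ) 1, ∀ x₁ y₁, 0 < y₁ → ∀ x₂ y₂, 0 < y₂ →
      v x₁ y₁ x₂ y₂ = C * (u₁ x₁ y₁ * u₂ x₂ y₂) := by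
  have hu₁_pos : 0 < u₁ 0 1 := hu₁.1 0 1 one_pos
  obtain ⟨C, hC, hC_eq⟩ := (hu₂.const_mul hu₁_pos).2.2.2 (v 0 1) (hv₂.contDiffOn_snd 0 one_pos)
    (fun x₂ y₂ hy₂ => by
      have hzero := hv₂.eq_zero 0 1 one_pos x₂ y₂ hy₂
      rw [hypLap2] at hzero
      linear_combination -hzero)
    (hvu 0 1 one_pos)
  refine ⟨C, hC, fun x₁ y₁ hy₁ x₂ y₂ hy₂ => ?_⟩
  have hu₂_pos : 0 < u₂ x₂ y₂ := hu₂.1 x₂ y₂ hy₂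
  obtain ⟨D, -, hD_eq⟩ := (hu₁.const_mul hu₂_pos).2.2.2 (fun x₁ y₁ => v x₁ y₁ x₂ y₂)
    (hv₁.contDiffOn_fst x₂ hy₂)
    (fun x₁ y₁ hy₁ => by
      have hzero := hv₁.eq_zero x₁ y₁ hy₁ x₂ y₂ hy₂
      rw [hypLap1] at hzero
      linear_combination -hzero)
    (fun x₁ y₁ hy₁ => by simpa only [mul_comm (u₂ x₂ y₂)] using hvu x₁ y₁ hy₁ x₂ y₂ hy₂)
  have hDC : D = C := by
    refine mul_right_cancel₀ (mul_pos hu₁_pos hu₂_pos).ne' ?_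
    rw [← hC_eq x₂ y₂ hy₂, mul_comm (u₁ 0 1), ← hD_eq 0 1 one_pos]
  rw [hD_eq x₁ y₁ hy₁, hDC, mul_comm (u₁ x₁ y₁)]

end Product

/-- converse of the splitting theorem. The product of a positive minimal
C² `μ₁`-harmonic function on `ℍ^{n₁+1}` and a positive minimal C² `μ₂`-harmonic function
on `ℍ^{n₂+1}` is a positive minimal C² solution of `-(Δ₁+Δ₂)u = (μ₁+μ₂)u` on the product. -/
theorem product_of_minimal_is_minimal
    (n₁ n₂ : ℕ) (hn₁ : 1 ≤ n₁) (hn₂ : 1 ≤ n₂) (μ₁ μ₂ : ℝ)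
    (u₁ : EuclideanSpace ℝ (Fin n₁) → ℝ → ℝ) (u₂ : EuclideanSpace ℝ (Fin n₂) → ℝ → ℝ)
    (hu₁ : MinimalHarmonic n₁ μ₁ u₁) (hu₂ : MinimalHarmonic n₂ μ₂ u₂) :
    let u : EuclideanSpace ℝ (Fin n₁) → ℝ → EuclideanSpace ℝ (Fin n₂) → ℝ → ℝ :=
      fun x₁ y₁ x₂ y₂ => u₁ x₁ y₁ * u₂ x₂ y₂
    (∀ x₁, ∀ y₁ : ℝ, 0 < y₁ → ∀ x₂, ∀ y₂ : ℝ, 0 < y₂ → 0 < u x₁ y₁ x₂ y₂) ∧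
    ContDiffOn ℝ 2
      (fun p : (EuclideanSpace ℝ (Fin n₁) × ℝ) × (EuclideanSpace ℝ (Fin n₂) × ℝ) =>
        u p.1.1 p.1.2 p.2.1 p.2.2)
      {p : (EuclideanSpace ℝ (Fin n₁) × ℝ) × (EuclideanSpace ℝ (Fin n₂) × ℝ) |
        0 < p.1.2 ∧ 0 < p.2.2} ∧
    (∀ x₁, ∀ y₁ : ℝ, 0 < y₁ → ∀ x₂, ∀ y₂ : ℝ, 0 < y₂ →
      -(hypLap1 n₁ n₂ u x₁ y₁ x₂ y₂ + hypLap2 n₁ n₂ u x₁ y₁ x₂ y₂)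
        = (μ₁ + μ₂) * u x₁ y₁ x₂ y₂) ∧
    ∀ v : EuclideanSpace ℝ (Fin n₁) → ℝ → EuclideanSpace ℝ (Fin n₂) → ℝ → ℝ,
      ContDiffOn ℝ 2
        (fun p : (EuclideanSpace ℝ (Fin n₁) × ℝ) × (EuclideanSpace ℝ (Fin n₂) × ℝ) =>
          v p.1.1 p.1.2 p.2.1 p.2.2)
        {p : (EuclideanSpace ℝ (Fin n₁) × ℝ) × (EuclideanSpace ℝ (Fin n₂) × ℝ) |
          0 < p.1.2 ∧ 0 < p.2.2} →
      (∀ x₁, ∀ y₁ : ℝ, 0 < y₁ → ∀ x₂, ∀ y₂ : ℝ, 0 < y₂ →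
        -(hypLap1 n₁ n₂ v x₁ y₁ x₂ y₂ + hypLap2 n₁ n₂ v x₁ y₁ x₂ y₂)
          = (μ₁ + μ₂) * v x₁ y₁ x₂ y₂) →
      (∀ x₁, ∀ y₁ : ℝ, 0 < y₁ → ∀ x₂, ∀ y₂ : ℝ, 0 < y₂ →
        0 ≤ v x₁ y₁ x₂ y₂ ∧ v x₁ y₁ x₂ y₂ ≤ u x₁ y₁ x₂ y₂) →
      ∃ C : ℝ, C ∈ Set.Icc (0:ℝ) 1 ∧
        ∀ x₁, ∀ y₁ : ℝ, 0 < y₁ → ∀ x₂, ∀ y₂ : ℝ, 0 < y₂ →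
          v x₁ y₁ x₂ y₂ = C * u x₁ y₁ x₂ y₂ := by
  intro u
  have hu := isProdSolution_mul hu₁.2.1 hu₂.2.1 hu₁.2.2.1 hu₂.2.2.1
  have hu_sum : IsProdSolution 1 1 (μ₁ + μ₂) u := by simpa using hu 1 1
  refine ⟨fun x₁ y₁ hy₁ x₂ y₂ hy₂ => mul_pos (hu₁.1 x₁ y₁ hy₁) (hu₂.1 x₂ y₂ hy₂),
    hu_sum.contDiffOn, fun x₁ y₁ hy₁ x₂ y₂ hy₂ => by
      linear_combination -hu_sum.eq_zero x₁ y₁ hy₁ x₂ y₂ hy₂, fun v hv hv_eq hvu => ?_⟩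
  have hv_sum : IsProdSolution 1 1 (μ₁ + μ₂) v := ⟨hv, fun x₁ y₁ hy₁ x₂ y₂ hy₂ => by
    linear_combination -hv_eq x₁ y₁ hy₁ x₂ y₂ hy₂⟩
  have hv_split (c₁ c₂ : ℝ) : IsProdSolution c₁ c₂ (c₁ * μ₁ + c₂ * μ₂) v :=
    hv_sum.of_le (by omega) hu_sum hvu (hu c₁ c₂)
  exact exists_eq_const_mul_of_isProdSolution hu₁ hu₂ (by simpa using hv_split 1 0)
    (by simpa using hv_split 0 1) hvu
end

section
/- Let n₁, n₂ ≥ 1 be integers, μ₁ < n₁²/4, μ₂ < n₂²/4, γᵢ = √(nᵢ²/4 − μᵢ), and μ = μ₁ + μ₂. Let u be a positive C² function on ℝ^{n₁}×(0,∞)×ℝ^{n₂}×(0,∞) which is weakly μ-harmonic, i.e. −(Δ₁ + Δ₂)u = μu, and suppose there is a constant C > 0 such that u(x₁,y₁,x₂,y₂) ≤ C · y₁^{n₁/2+γ₁} · y₂^{n₂/2+γ₂} for all (x₁,y₁,x₂,y₂). Then u is strongly (μ₁,μ₂)-harmonic: −Δ₁u = μ₁u and −Δ₂u = μ₂u on ℝ^{n₁}×(0,∞)×ℝ^{n₂}×(0,∞).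 -/
open Real Topology

/-!
In the logarithmic heights `sᵢ = log yᵢ`, the function `G = y₁^{-n₁/2-γ₁} y₂^{-n₂/2-γ₂} u` is a
bounded solution of `(L₁ + L₂) G = 0` with `Lᵢ = e^{2sᵢ} Δ_{xᵢ} + ∂ᵢ² + 2γᵢ ∂ᵢ`, and a Liouville
argument by doubling variables shows that it does not depend on `(x₁, s₁)`.

Let `v` be a direction along which the coefficients are invariant. The bounded function
`D (p, h) = G (p - h v) - G (p + h v)` vanishes at `h = 0`, and it solves the equation in which
`∂_v²` is replaced by `∂_h²`. For `v` in the horizontal space of the first factor,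
`θ = log (1 + arsinh (h e^{-s₁}))` is a barrier: it is a strict supersolution on each of its
sublevel sets because `γ₁ ≥ 0`. The logarithms of the hyperbolic cosines of the distances to base
points are proper with bounded second-order terms, so small multiples of them force the maximum
of `D - A θ` to be attained; the maximum principle gives `D ≤ 0`, hence `D = 0` by symmetry.
Once `G` is independent of `x₁`, the term `e^{2s₁} Δ_{x₁}` drops out of the equation, translations
in `s₁` become admissible, and `log (1 + h)` serves as the barrier.

Independence of `(x₁, s₁)` means `L₁ G = 0`, which is strong harmonicity in the first factor; the
second factor follows by subtraction.
-/

open Filter Set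

section LineDerivatives

variable {X Y : Type*} [NormedAddCommGroup X] [NormedSpace ℝ X]
  [NormedAddCommGroup Y] [NormedSpace ℝ Y]

lemma iteratedDeriv_two_eq_of_hasDerivAt {f f' : ℝ → ℝ} {f'' t : ℝ}
    (hf : ∀ᶠ s in 𝓝 t, HasDerivAt f (f' s) s) (hf' : HasDerivAt f' f'' t) :
    iteratedDeriv 2 f t = f'' := by
  rw [iteratedDeriv_succ, iteratedDeriv_one]
  exact (hf'.congr_of_eventuallyEq (hf.mono fun _ hs => hs.deriv)).deriv

lemma iteratedDeriv_two_nonpos_of_isLocalMax {f : ℝ → ℝ} {a : ℝ} (hf : ContinuousAt f a)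
    (hmax : IsLocalMax f a) : iteratedDeriv 2 f a ≤ 0 := by
  rw [iteratedDeriv_succ, iteratedDeriv_one]
  by_contra! hpos
  have hmin : IsLocalMin f a := isLocalMin_of_deriv_deriv_pos hpos hmax.deriv_eq_zero hf
  have hconst : f =ᶠ[𝓝 a] fun _ => f a := by
    filter_upwards [hmin, hmax] with x hx hx' using le_antisymm hx' hx
  have hzero : deriv (deriv f) a = 0 := by simpa using hconst.deriv.deriv_eq
  exact hpos.ne' hzero

lemma iteratedDeriv_two_comp {φ φ' g g' : ℝ → ℝ} {φ'' g'' t : ℝ}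
    (hφ : ∀ᶠ r in 𝓝 (g t), HasDerivAt φ (φ' r) r) (hφ' : HasDerivAt φ' φ'' (g t))
    (hg : ∀ᶠ s in 𝓝 t, HasDerivAt g (g' s) s) (hg' : HasDerivAt g' g'' t) :
    iteratedDeriv 2 (fun s => φ (g s)) t = φ'' * g' t ^ 2 + φ' (g t) * g'' := by
  have hgt := hg.self_of_nhds
  have hcomp : ∀ᶠ s in 𝓝 t, HasDerivAt (fun s => φ (g s)) (φ' (g s) * g' s) s := by
    filter_upwards [hgt.continuousAt.eventually hφ, hg] with s hφs hgs using hφs.comp s hgs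
  rw [iteratedDeriv_two_eq_of_hasDerivAt hcomp ((hφ'.comp t hgt).mul hg')]
  simp only [Function.comp_apply]
  ring

lemma iteratedDeriv_two_log {ρ ρ' : ℝ → ℝ} {ρ'' t : ℝ} (hpos : 0 < ρ t)
    (hρ : ∀ᶠ s in 𝓝 t, HasDerivAt ρ (ρ' s) s) (hρ' : HasDerivAt ρ' ρ'' t) :
    iteratedDeriv 2 (fun s => log (ρ s)) t = ρ'' / ρ t - (ρ' t / ρ t) ^ 2 := by
  have hlog : ∀ᶠ r in 𝓝 (ρ t), HasDerivAt log r⁻¹ r := by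
    filter_upwards [eventually_ne_nhds hpos.ne'] with r hr using hasDerivAt_log hr
  rw [iteratedDeriv_two_comp hlog (hasDerivAt_inv hpos.ne') hρ hρ']
  field_simp
  ring

/-- The second derivative of `f` at `p` in the direction `v`, the second-order companion of
`lineDeriv`. -/
noncomputable def secondLineDeriv (f : X → ℝ) (p v : X) : ℝ :=
  iteratedDeriv 2 (fun t : ℝ => f (p + t • v)) 0

lemma contDiffAt_comp_line {f : X → ℝ} {p : X} (hf : ContDiffAt ℝ 2 f p) (v : X) :
    ContDiffAt ℝ 2 (fun t : ℝ => f (p + t • v)) 0 := by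
  refine ContDiffAt.comp (0 : ℝ) ?_ (by fun_prop)
  simpa using hf

lemma secondLineDeriv_add {f g : X → ℝ} {p : X} (hf : ContDiffAt ℝ 2 f p)
    (hg : ContDiffAt ℝ 2 g p) (v : X) :
    secondLineDeriv (fun q => f q + g q) p v = secondLineDeriv f p v + secondLineDeriv g p v :=
  iteratedDeriv_fun_add (contDiffAt_comp_line hf v) (contDiffAt_comp_line hg v)

lemma secondLineDeriv_sub {f g : X → ℝ} {p : X} (hf : ContDiffAt ℝ 2 f p)
    (hg : ContDiffAt ℝ 2 g p) (v : X) :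
    secondLineDeriv (fun q => f q - g q) p v = secondLineDeriv f p v - secondLineDeriv g p v :=
  iteratedDeriv_fun_sub (contDiffAt_comp_line hf v) (contDiffAt_comp_line hg v)

lemma secondLineDeriv_const_mul (c : ℝ) (f : X → ℝ) (p v : X) :
    secondLineDeriv (fun q => c * f q) p v = c * secondLineDeriv f p v :=
  iteratedDeriv_const_mul_field c _

@[simp] lemma secondLineDeriv_zero (f : X → ℝ) (p : X) : secondLineDeriv f p 0 = 0 := by
  simp [secondLineDeriv, iteratedDeriv_const]

@[simp] lemma secondLineDeriv_neg (f : X → ℝ) (p v : X) :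
    secondLineDeriv f p (-v) = secondLineDeriv f p v := by
  simpa [secondLineDeriv] using iteratedDeriv_comp_neg 2 (fun t : ℝ => f (p + t • v)) 0

lemma secondLineDeriv_nonpos_of_isLocalMax {f : X → ℝ} {p : X} (hf : ContinuousAt f p)
    (hmax : IsLocalMax f p) (v : X) : secondLineDeriv f p v ≤ 0 := by
  have hline : ContinuousAt (fun t : ℝ => p + t • v) 0 := by fun_prop
  have hp : p + (0 : ℝ) • v = p := by simp
  refine iteratedDeriv_two_nonpos_of_isLocalMax (ContinuousAt.comp (by rwa [hp]) hline) ?_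
  exact IsLocalMax.comp_continuous (f := f) (by rwa [hp]) hline

lemma lineDeriv_eq_zero_of_isLocalMax {f : X → ℝ} {p : X} (hmax : IsLocalMax f p) (v : X) :
    lineDeriv ℝ f p v = 0 := by
  have hline : ContinuousAt (fun t : ℝ => p + t • v) 0 := by fun_prop
  exact (IsLocalMax.comp_continuous (f := f) (by simpa using hmax) hline).deriv_eq_zero

lemma lineDeriv_add {f g : X → ℝ} {p : X} (hf : DifferentiableAt ℝ f p)
    (hg : DifferentiableAt ℝ g p) (v : X) :
    lineDeriv ℝ (fun q => f q + g q) p v = lineDeriv ℝ f p v + lineDeriv ℝ g p v := by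
  simp only [(hf.fun_add hg).lineDeriv_eq_fderiv, hf.lineDeriv_eq_fderiv, hg.lineDeriv_eq_fderiv,
    fderiv_fun_add hf hg, add_apply]

lemma lineDeriv_sub {f g : X → ℝ} {p : X} (hf : DifferentiableAt ℝ f p)
    (hg : DifferentiableAt ℝ g p) (v : X) :
    lineDeriv ℝ (fun q => f q - g q) p v = lineDeriv ℝ f p v - lineDeriv ℝ g p v := by
  simp only [(hf.fun_sub hg).lineDeriv_eq_fderiv, hf.lineDeriv_eq_fderiv, hg.lineDeriv_eq_fderiv,
    fderiv_fun_sub hf hg, sub_apply]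

lemma lineDeriv_const_mul (c : ℝ) (f : X → ℝ) (p v : X) :
    lineDeriv ℝ (fun q => c * f q) p v = c * lineDeriv ℝ f p v := by
  simp only [lineDeriv, deriv_const_mul_field]

lemma secondLineDeriv_inl (f : X × Y → ℝ) (p : X × Y) (v : X) :
    secondLineDeriv f p (v, 0) = secondLineDeriv (fun x => f (x, p.2)) p.1 v := by
  simp only [secondLineDeriv, Prod.add_def, Prod.smul_mk, smul_zero, add_zero]

lemma secondLineDeriv_inr (f : X × Y → ℝ) (p : X × Y) (w : Y) :
    secondLineDeriv f p (0, w) = secondLineDeriv (fun y => f (p.1, y)) p.2 w := by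
  simp only [secondLineDeriv, Prod.add_def, Prod.smul_mk, smul_zero, add_zero]

lemma lineDeriv_inl (f : X × Y → ℝ) (p : X × Y) (v : X) :
    lineDeriv ℝ f p (v, 0) = lineDeriv ℝ (fun x => f (x, p.2)) p.1 v := by
  simp only [lineDeriv, Prod.add_def, Prod.smul_mk, smul_zero, add_zero]

lemma lineDeriv_inr (f : X × Y → ℝ) (p : X × Y) (w : Y) :
    lineDeriv ℝ f p (0, w) = lineDeriv ℝ (fun y => f (p.1, y)) p.2 w := by
  simp only [lineDeriv, Prod.add_def, Prod.smul_mk, smul_zero, add_zero]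

lemma lineDeriv_prod {f : X × Y → ℝ} {p : X × Y} (hf : DifferentiableAt ℝ f p) (v : X) (w : Y) :
    lineDeriv ℝ f p (v, w) =
      lineDeriv ℝ (fun x => f (x, p.2)) p.1 v + lineDeriv ℝ (fun y => f (p.1, y)) p.2 w := by
  rw [← lineDeriv_inl, ← lineDeriv_inr]
  simp only [hf.lineDeriv_eq_fderiv, ← map_add, Prod.mk_add_mk, add_zero, zero_add]

lemma secondLineDeriv_one (f : ℝ → ℝ) (t : ℝ) : secondLineDeriv f t 1 = iteratedDeriv 2 f t := by
  simpa [secondLineDeriv] using congrFun (iteratedDeriv_comp_const_add 2 f t) 0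

lemma lineDeriv_real (f : ℝ → ℝ) (t v : ℝ) : lineDeriv ℝ f t v = v * deriv f t := by
  have hone : lineDeriv ℝ f t 1 = deriv f t := by
    simpa [lineDeriv] using deriv_comp_const_add f t 0
  rw [← hone, ← smul_eq_mul, ← lineDeriv_smul, smul_eq_mul, mul_one]

end LineDerivatives

lemma tendsto_add_cocompact_prod {X Y : Type*} [TopologicalSpace X] [TopologicalSpace Y]
    {Φ : X → ℝ} {Ψ : Y → ℝ} (hΦ₀ : ∀ x, 0 ≤ Φ x) (hΨ₀ : ∀ y, 0 ≤ Ψ y)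
    (hΦ : Tendsto Φ (cocompact X) atTop)
    (hΨ : Tendsto Ψ (cocompact Y) atTop) :
    Tendsto (fun p : X × Y => Φ p.1 + Ψ p.2) (cocompact (X × Y)) atTop := by
  rw [← coprod_cocompact, Filter.coprod, tendsto_sup]
  exact ⟨tendsto_atTop_mono (fun p => le_add_of_nonneg_right (hΨ₀ p.2)) (hΦ.comp tendsto_comap),
    tendsto_atTop_mono (fun p => le_add_of_nonneg_left (hΦ₀ p.1)) (hΨ.comp tendsto_comap)⟩

lemma apply_add_map_eq_of_basis {ι E X α : Type*} [Finite ι] [AddCommGroup E] [Module ℝ E]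
    [AddCommGroup X] [Module ℝ X] (e : Module.Basis ι ℝ E) (T : E →ₗ[ℝ] X) {f : X → α}
    (hf : ∀ i p (t : ℝ), f (p + t • T (e i)) = f p) (p : X) (v : E) : f (p + T v) = f p := by
  have := Fintype.ofFinite ι
  rw [← e.sum_repr v, map_sum]
  refine Finset.sum_induction _ (fun w => ∀ p, f (p + w) = f p)
    (fun w w' hw hw' p => by rw [← add_assoc, hw', hw]) (by simp) (fun i _ p => ?_) p
  rw [map_smul, hf]

lemma exists_isMaxOn_sub_penalty {X : Type*} [TopologicalSpace X] {S : Set X}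
    (hS : IsClosed S) {D θ Φ : X → ℝ} {p : X} {M A δ : ℝ} (hA : 0 < A) (hδ : 0 < δ)
    (hD : ContinuousOn D S) (hθ : ContinuousOn θ S) (hΦ : ContinuousOn Φ S)
    (hDM : ∀ p ∈ S, D p ≤ M) (hθ₀ : ∀ p ∈ S, 0 ≤ θ p) (hΦ₀ : ∀ p ∈ S, 0 ≤ Φ p)
    (hproper : Tendsto (fun p => θ p + Φ p) (cocompact X ⊓ 𝓟 S) atTop) (hp : p ∈ S) :
    ∃ q ∈ S, IsMaxOn (fun p => D p - (A * θ p + δ * Φ p)) S q := by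
  refine ContinuousOn.exists_isMaxOn' (by fun_prop) hS hp ?_
  set m := min A δ
  have hm : 0 < m := lt_min hA hδ
  filter_upwards [hproper.eventually_ge_atTop ((M - (D p - (A * θ p + δ * Φ p))) / m),
    eventually_inf_principal.2 (Eventually.of_forall fun _ h => h)] with q hq hqS
  have hpen : m * (θ q + Φ q) ≤ A * θ q + δ * Φ q := by
    rw [mul_add]
    gcongr
    exacts [hθ₀ q hqS, min_le_left _ _, hΦ₀ q hqS, min_le_right _ _]
  rw [div_le_iff₀' hm] at hq
  linarith [hDM q hqS]

/-- A degenerate elliptic operator in diagonal form without zeroth-order term: nonnegative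
combinations of second derivatives along the constant directions `dir k`, plus a derivative along
the constant vector `drift`. -/
structure EllipticOp (κ X : Type*) where
  coeff : κ → X → ℝ
  coeff_nonneg : ∀ k p, 0 ≤ coeff k p
  dir : κ → X
  drift : X

namespace EllipticOp

section MaximumPrinciple

variable {κ X : Type*} [Fintype κ] [NormedAddCommGroup X] [NormedSpace ℝ X]

/-- The value `L f (p)` of the operator on a function. -/
noncomputable def op (L : EllipticOp κ X) (f : X → ℝ) (p : X) : ℝ :=
  ∑ k, L.coeff k p * secondLineDeriv f p (L.dir k) + lineDeriv ℝ f p L.drift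

variable (L : EllipticOp κ X) {f g : X → ℝ} {p : X}

lemma op_add (hf : ContDiffAt ℝ 2 f p) (hg : ContDiffAt ℝ 2 g p) :
    L.op (fun q => f q + g q) p = L.op f p + L.op g p := by
  simp only [op, secondLineDeriv_add hf hg, mul_add, Finset.sum_add_distrib,
    lineDeriv_add (hf.differentiableAt two_ne_zero) (hg.differentiableAt two_ne_zero)]
  ring

lemma op_sub (hf : ContDiffAt ℝ 2 f p) (hg : ContDiffAt ℝ 2 g p) :
    L.op (fun q => f q - g q) p = L.op f p - L.op g p := by
  simp only [op, secondLineDeriv_sub hf hg, mul_sub, Finset.sum_sub_distrib,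
    lineDeriv_sub (hf.differentiableAt two_ne_zero) (hg.differentiableAt two_ne_zero)]
  ring

lemma op_const_mul (c : ℝ) (f : X → ℝ) (p : X) : L.op (fun q => c * f q) p = c * L.op f p := by
  simp only [op, secondLineDeriv_const_mul, lineDeriv_const_mul, mul_left_comm _ c,
    ← Finset.mul_sum, mul_add]

lemma op_const (c : ℝ) (p : X) : L.op (fun _ => c) p = 0 := by
  simp [op, secondLineDeriv, iteratedDeriv_const, lineDeriv]

lemma op_nonpos_of_isLocalMax (hf : ContinuousAt f p) (hmax : IsLocalMax f p) :
    L.op f p ≤ 0 := by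
  rw [op, lineDeriv_eq_zero_of_isLocalMax hmax, add_zero]
  exact Finset.sum_nonpos fun k _ => mul_nonpos_of_nonneg_of_nonpos (L.coeff_nonneg k p)
    (secondLineDeriv_nonpos_of_isLocalMax hf hmax _)

theorem nonpos_of_barrier {S U : Set X} (hS : IsClosed S) (hU : IsOpen U) (hUS : U ⊆ S)
    {D θ Φ : X → ℝ} {M K : ℝ}
    (hD : ContinuousOn D S) (hθ : ContinuousOn θ S) (hΦ : ContinuousOn Φ S)
    (hD₂ : ContDiffOn ℝ 2 D U) (hθ₂ : ContDiffOn ℝ 2 θ U) (hΦ₂ : ContDiffOn ℝ 2 Φ U)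
    (hDM : ∀ p ∈ S, D p ≤ M) (hθ₀ : ∀ p ∈ S, 0 ≤ θ p) (hΦ₀ : ∀ p ∈ S, 0 ≤ Φ p)
    (hD_diff : ∀ p ∈ S \ U, D p ≤ 0)
    (hLD : ∀ p ∈ U, 0 ≤ L.op D p) (hLΦ : ∀ p ∈ U, L.op Φ p ≤ K)
    (hLθ : ∀ N, ∃ c > 0, ∀ p ∈ U, θ p ≤ N → L.op θ p ≤ -c)
    (hproper : Tendsto (fun p => θ p + Φ p) (cocompact X ⊓ 𝓟 S) atTop) :
    ∀ p ∈ S, D p ≤ 0 := by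
  intro p hp
  by_contra! hDp
  -- The barrier is scaled before the penalty, whose cost `δ |K|` must not exceed the gain `A c`.
  obtain ⟨A, hA, hAp⟩ := exists_pos_mul_lt (half_pos hDp) (θ p)
  obtain ⟨c, hc, hLθc⟩ := hLθ (M / A)
  obtain ⟨δ, hδ, hδp⟩ :=
    exists_pos_mul_lt (lt_min (half_pos hDp) (mul_pos hA hc)) (Φ p + |K|)
  obtain ⟨hδp, hδK⟩ := lt_min_iff.1 hδp
  obtain ⟨q, hqS, hqmax⟩ :=
    exists_isMaxOn_sub_penalty hS hA hδ hD hθ hΦ hDM hθ₀ hΦ₀ hproper hp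
  have hpq : D p - (A * θ p + δ * Φ p) ≤ D q - (A * θ q + δ * Φ q) := hqmax hp
  have hKδ : 0 ≤ |K| * δ := by positivity
  have hpen : D q > A * θ q + δ * Φ q := by linarith
  have hAθ : 0 ≤ A * θ q := mul_nonneg hA.le (hθ₀ q hqS)
  have hδΦ : 0 ≤ δ * Φ q := mul_nonneg hδ.le (hΦ₀ q hqS)
  have hqU : q ∈ U := by
    by_contra hqU
    linarith [hpen, hD_diff q ⟨hqS, hqU⟩]
  have hUq : U ∈ 𝓝 q := hU.mem_nhds hqU
  have hDq := hD₂.contDiffAt hUq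
  have hθq : ContDiffAt ℝ 2 (fun p => A * θ p) q := contDiffAt_const.mul (hθ₂.contDiffAt hUq)
  have hΦq : ContDiffAt ℝ 2 (fun p => δ * Φ p) q := contDiffAt_const.mul (hΦ₂.contDiffAt hUq)
  have hop : L.op D q - (A * L.op θ q + δ * L.op Φ q) ≤ 0 := by
    rw [← op_const_mul, ← op_const_mul, ← L.op_add hθq hΦq, ← L.op_sub hDq (hθq.add hΦq)]
    exact L.op_nonpos_of_isLocalMax (hDq.sub (hθq.add hΦq)).continuousAt
      (hqmax.isLocalMax (mem_of_superset hUq hUS))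
  have hθN : θ q ≤ M / A := by
    rw [le_div_iff₀' hA]
    linarith [hDM q hqS]
  have hAc : A * L.op θ q ≤ A * -c := mul_le_mul_of_nonneg_left (hLθc q hqU hθN) hA.le
  have hδK' : δ * L.op Φ q ≤ δ * |K| :=
    mul_le_mul_of_nonneg_left ((hLΦ q hqU).trans (le_abs_self K)) hδ.le
  linarith [hLD q hqU, mul_nonneg (hΦ₀ p hp) hδ.le]

end MaximumPrinciple

variable {κ κ' X Y : Type*} [NormedAddCommGroup X] [NormedSpace ℝ X]
  [NormedAddCommGroup Y] [NormedSpace ℝ Y]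

/-- A proper nonnegative function `Φ` on which `L` is bounded above term by term. Small multiples
of it serve as penalties which force maxima to be attained at a negligible cost. -/
structure IsExhaustion (L : EllipticOp κ X) (Φ : X → ℝ) : Prop where
  contDiff : ContDiff ℝ 2 Φ
  nonneg : ∀ p, 0 ≤ Φ p
  tendsto_atTop : Tendsto Φ (cocompact X) atTop
  exists_bound : ∃ K, 0 ≤ K ∧ (∀ k p, L.coeff k p * secondLineDeriv Φ p (L.dir k) ≤ K) ∧
    ∀ p, lineDeriv ℝ Φ p L.drift ≤ K

section Product

/-- The operator `L ⊕ M` on the product space, acting in the two factors separately. -/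
def prod (L : EllipticOp κ X) (M : EllipticOp κ' Y) : EllipticOp (κ ⊕ κ') (X × Y) where
  coeff := Sum.elim (fun k p => L.coeff k p.1) (fun k p => M.coeff k p.2)
  coeff_nonneg := by
    rintro (k | k) p
    exacts [L.coeff_nonneg k p.1, M.coeff_nonneg k p.2]
  dir := Sum.elim (fun k => (L.dir k, 0)) (fun k => (0, M.dir k))
  drift := (L.drift, M.drift)

lemma IsExhaustion.prod {L : EllipticOp κ X} {M : EllipticOp κ' Y} {Φ : X → ℝ} {Ψ : Y → ℝ}
    (hΦ : L.IsExhaustion Φ) (hΨ : M.IsExhaustion Ψ) :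
    (L.prod M).IsExhaustion fun p => Φ p.1 + Ψ p.2 where
  contDiff := (hΦ.contDiff.comp contDiff_fst).add (hΨ.contDiff.comp contDiff_snd)
  nonneg p := add_nonneg (hΦ.nonneg p.1) (hΨ.nonneg p.2)
  tendsto_atTop :=
    tendsto_add_cocompact_prod hΦ.nonneg hΨ.nonneg hΦ.tendsto_atTop hΨ.tendsto_atTop
  exists_bound := by
    obtain ⟨K, hK, hΦK, hΦK'⟩ := hΦ.exists_bound
    obtain ⟨N, hN, hΨN, hΨN'⟩ := hΨ.exists_bound
    have hΦ₂ (p : X × Y) : ContDiffAt ℝ 2 (fun p : X × Y => Φ p.1) p :=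
      (hΦ.contDiff.comp contDiff_fst).contDiffAt
    have hΨ₂ (p : X × Y) : ContDiffAt ℝ 2 (fun p : X × Y => Ψ p.2) p :=
      (hΨ.contDiff.comp contDiff_snd).contDiffAt
    have hsecond (p v : X × Y) : secondLineDeriv (fun p => Φ p.1 + Ψ p.2) p v =
        secondLineDeriv Φ p.1 v.1 + secondLineDeriv Ψ p.2 v.2 :=
      secondLineDeriv_add (hΦ₂ p) (hΨ₂ p) v
    have hfirst (p v : X × Y) : lineDeriv ℝ (fun p => Φ p.1 + Ψ p.2) p v =
        lineDeriv ℝ Φ p.1 v.1 + lineDeriv ℝ Ψ p.2 v.2 :=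
      lineDeriv_add ((hΦ₂ p).differentiableAt two_ne_zero)
        ((hΨ₂ p).differentiableAt two_ne_zero) v
    refine ⟨K + N, add_nonneg hK hN, ?_, fun p => ?_⟩
    · rintro (k | k) p
      · simpa [EllipticOp.prod, hsecond] using (hΦK k p.1).trans (le_add_of_nonneg_right hN)
      · simpa [EllipticOp.prod, hsecond] using (hΨN k p.2).trans (le_add_of_nonneg_left hK)
    · exact (hfirst p _).trans_le (add_le_add (hΦK' p.1) (hΨN' p.2))

variable [Fintype κ] [Fintype κ']

lemma op_prod (L : EllipticOp κ X) (M : EllipticOp κ' Y) {f : X × Y → ℝ} {p : X × Y}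
    (hf : DifferentiableAt ℝ f p) :
    (L.prod M).op f p =
      L.op (fun x => f (x, p.2)) p.1 + M.op (fun y => f (p.1, y)) p.2 := by
  simp only [op, prod, Fintype.sum_sum_type, Sum.elim_inl, Sum.elim_inr, secondLineDeriv_inl,
    secondLineDeriv_inr, lineDeriv_prod hf]
  ring

end Product

section Reflection

variable [DecidableEq κ]

/-- The operator governing `G (p - h • v) - G (p + h • v)` as a function of `(p, h)`, where
`v = L.dir k₀`: the second derivative along `v` is traded for one in the separation variable `h`,
while all the other terms act on `p` alone. -/
def reflect (L : EllipticOp κ X) (k₀ : κ) : EllipticOp κ (X × ℝ) where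
  coeff k z := L.coeff k z.1
  coeff_nonneg k z := L.coeff_nonneg k z.1
  dir k := if k = k₀ then (0, 1) else (L.dir k, 0)
  drift := (L.drift, 0)

variable [Fintype κ] [Fintype κ']

lemma reflect_op_comp_add_smul (L : EllipticOp κ X) {k₀ : κ}
    (hcoeff : ∀ k p (t : ℝ), L.coeff k (p + t • L.dir k₀) = L.coeff k p) (G : X → ℝ) {σ : ℝ}
    (hσ : σ = 1 ∨ σ = -1) (p : X) (h : ℝ) :
    (L.reflect k₀).op (fun z => G (z.1 + (σ * z.2) • L.dir k₀)) (p, h) =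
      L.op G (p + (σ * h) • L.dir k₀) := by
  have hfirst : lineDeriv ℝ (fun z : X × ℝ => G (z.1 + (σ * z.2) • L.dir k₀)) (p, h)
      (L.reflect k₀).drift = lineDeriv ℝ G (p + (σ * h) • L.dir k₀) L.drift := by
    simp [reflect, lineDeriv, add_right_comm]
  have hsign (q : X) : secondLineDeriv G q (σ • L.dir k₀) = secondLineDeriv G q (L.dir k₀) := by
    rcases hσ with rfl | rfl <;> simp
  have hsecond (k : κ) : secondLineDeriv (fun z : X × ℝ => G (z.1 + (σ * z.2) • L.dir k₀)) (p, h)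
      ((L.reflect k₀).dir k) = secondLineDeriv G (p + (σ * h) • L.dir k₀) (L.dir k) := by
    by_cases hk : k = k₀
    · rw [hk, ← hsign]
      simp [reflect, secondLineDeriv, mul_add, add_smul, add_assoc, smul_smul, mul_comm]
    · simp [reflect, hk, secondLineDeriv, add_right_comm]
  simp only [op, hfirst, hsecond, hcoeff]
  simp only [reflect]

lemma IsExhaustion.exists_reflect_op_le {L : EllipticOp κ X} {Φ : X → ℝ} (hΦ : L.IsExhaustion Φ)
    (k₀ : κ) : ∃ K, ∀ z : X × ℝ, (L.reflect k₀).op (fun z => Φ z.1) z ≤ K := by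
  obtain ⟨K, hK, hsecond, hdrift⟩ := hΦ.exists_bound
  refine ⟨∑ _k : κ, K + K, fun z => add_le_add (Finset.sum_le_sum fun k _ => ?_) (hdrift z.1)⟩
  change L.coeff k z.1 * secondLineDeriv Φ z.1 ((L.reflect k₀).dir k).1 ≤ K
  by_cases hk : k = k₀
  · simpa [reflect, hk] using hK
  · simpa [reflect, hk] using hsecond k z.1

/-- A barrier for the reflected operator: a nonnegative `θ (p, h)`, controlling `h` over compact
sets of `p`, which is a strict supersolution on each of its sublevel sets. -/
structure IsGauge (L : EllipticOp κ X) (k₀ : κ) (θ : X × ℝ → ℝ) : Prop where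
  continuousOn : ContinuousOn θ {z | 0 ≤ z.2}
  contDiffOn : ContDiffOn ℝ 2 θ {z | 0 < z.2}
  nonneg : ∀ z, 0 ≤ z.2 → 0 ≤ θ z
  exists_le : ∀ M, ∃ R : X → ℝ, Continuous R ∧ ∀ z, 0 ≤ z.2 → θ z ≤ M → z.2 ≤ R z.1
  exists_op_le : ∀ N, ∃ c > 0, ∀ z, 0 < z.2 → θ z ≤ N → (L.reflect k₀).op θ z ≤ -c

variable {L : EllipticOp κ X} {k₀ : κ} {Φ : X → ℝ} {θ : X × ℝ → ℝ}

lemma IsGauge.tendsto_add_exhaustion (hθ : L.IsGauge k₀ θ) (hΦ : L.IsExhaustion Φ) :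
    Tendsto (fun z => θ z + Φ z.1) (cocompact (X × ℝ) ⊓ 𝓟 {z | 0 ≤ z.2}) atTop := by
  refine tendsto_atTop.2 fun M => ?_
  obtain ⟨R, hR, hθR⟩ := hθ.exists_le M
  obtain ⟨Q, hQ, hΦQ⟩ := mem_cocompact.1 (hΦ.tendsto_atTop.eventually_gt_atTop M)
  obtain ⟨B, hB⟩ := hQ.bddAbove_image hR.continuousOn
  rw [eventually_inf_principal]
  filter_upwards [(hQ.prod (isCompact_Icc (a := 0) (b := B))).compl_mem_cocompact] with z hz hz₀
  by_contra! hlt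
  have hΦz : Φ z.1 ≤ M := by linarith [hθ.nonneg z hz₀]
  have hθz : θ z ≤ M := by linarith [hΦ.nonneg z.1]
  have hzQ : z.1 ∈ Q := by
    by_contra hzQ
    exact hΦz.not_gt (hΦQ hzQ)
  exact hz ⟨hzQ, hz₀, (hθR z hz₀ hθz).trans (hB (mem_image_of_mem R hzQ))⟩

lemma IsGauge.le_reflection (hθ : L.IsGauge k₀ θ) (hΦ : L.IsExhaustion Φ)
    (hcoeff : ∀ k p (t : ℝ), L.coeff k (p + t • L.dir k₀) = L.coeff k p) {G : X → ℝ} {C : ℝ}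
    (hG : ContDiff ℝ 2 G) (hGC : ∀ p, |G p| ≤ C) (hLG : ∀ p, L.op G p = 0) (p : X) {h : ℝ}
    (hh : 0 ≤ h) : G (p - h • L.dir k₀) ≤ G (p + h • L.dir k₀) := by
  obtain ⟨K, hK⟩ := hΦ.exists_reflect_op_le k₀
  set D : X × ℝ → ℝ := fun z => G (z.1 - z.2 • L.dir k₀) - G (z.1 + z.2 • L.dir k₀)
  have hsub : ContDiff ℝ 2 fun z : X × ℝ => G (z.1 - z.2 • L.dir k₀) := hG.comp (by fun_prop)
  have hadd : ContDiff ℝ 2 fun z : X × ℝ => G (z.1 + z.2 • L.dir k₀) := hG.comp (by fun_prop)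
  have hD : ContDiff ℝ 2 D := hsub.sub hadd
  have hΦ₂ : ContDiff ℝ 2 fun z : X × ℝ => Φ z.1 := hΦ.contDiff.comp contDiff_fst
  have hLD (z : X × ℝ) : (L.reflect k₀).op D z = 0 := by
    have hLsub := L.reflect_op_comp_add_smul hcoeff G (.inr rfl) z.1 z.2
    have hLadd := L.reflect_op_comp_add_smul hcoeff G (.inl rfl) z.1 z.2
    simp only [neg_one_mul, neg_smul, ← sub_eq_add_neg, one_mul, hLG] at hLsub hLadd
    rw [op_sub _ hsub.contDiffAt hadd.contDiffAt, hLsub, hLadd, sub_zero]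
  have hDC (z : X × ℝ) : D z ≤ C + C :=
    (le_abs_self _).trans ((abs_sub _ _).trans (add_le_add (hGC _) (hGC _)))
  have hD_boundary : ∀ z ∈ {z : X × ℝ | 0 ≤ z.2} \ {z | 0 < z.2}, D z ≤ 0 := by
    rintro ⟨q, s⟩ ⟨hs, hs'⟩
    obtain rfl : s = 0 := le_antisymm (not_lt.1 hs') hs
    simp [D]
  refine sub_nonpos.1 ((L.reflect k₀).nonpos_of_barrier (D := D)
    (isClosed_le continuous_const continuous_snd) (isOpen_lt continuous_const continuous_snd)
    (fun z (hz : 0 < z.2) => hz.le) hD.continuous.continuousOn hθ.continuousOn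
    hΦ₂.continuous.continuousOn hD.contDiffOn hθ.contDiffOn hΦ₂.contDiffOn (fun z _ => hDC z)
    hθ.nonneg (fun z _ => hΦ.nonneg z.1) hD_boundary (fun z _ => (hLD z).ge) (fun z _ => hK z)
    hθ.exists_op_le (hθ.tendsto_add_exhaustion hΦ) (p, h) hh)

theorem IsGauge.apply_add_smul_eq (hθ : L.IsGauge k₀ θ) (hΦ : L.IsExhaustion Φ)
    (hcoeff : ∀ k p (t : ℝ), L.coeff k (p + t • L.dir k₀) = L.coeff k p) {G : X → ℝ} {C : ℝ}
    (hG : ContDiff ℝ 2 G) (hGC : ∀ p, |G p| ≤ C) (hLG : ∀ p, L.op G p = 0) (p : X) (t : ℝ) :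
    G (p + t • L.dir k₀) = G p := by
  have hLG' (p : X) : L.op (fun q => -G q) p = 0 := by
    simpa [hLG] using L.op_const_mul (-1) G p
  have hreflect (p : X) (h : ℝ) (hh : 0 ≤ h) :
      G (p - h • L.dir k₀) = G (p + h • L.dir k₀) :=
    le_antisymm (hθ.le_reflection hΦ hcoeff hG hGC hLG p hh)
      (neg_le_neg_iff.1 (hθ.le_reflection hΦ hcoeff hG.neg (by simpa using hGC) hLG' p hh))
  rcases le_total 0 t with ht | ht
  · convert (hreflect (p + (t / 2) • L.dir k₀) (t / 2) (by linarith)).symm using 2 <;> module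
  · convert hreflect (p + (t / 2) • L.dir k₀) (-(t / 2)) (by linarith) using 2 <;> module

lemma IsGauge.prod (hθ : L.IsGauge k₀ θ) [DecidableEq κ'] (M : EllipticOp κ' Y) :
    (L.prod M).IsGauge (.inl k₀) fun z => θ (z.1.1, z.2) where
  continuousOn := hθ.continuousOn.comp (by fun_prop) fun _ hz => hz
  contDiffOn := hθ.contDiffOn.comp (by fun_prop) fun _ hz => hz
  nonneg z hz := hθ.nonneg _ hz
  exists_le N := by
    obtain ⟨R, hR, hθR⟩ := hθ.exists_le N
    exact ⟨fun p => R p.1, hR.comp continuous_fst, fun z hz => hθR (z.1.1, z.2) hz⟩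
  exists_op_le N := by
    obtain ⟨c, hc, hθc⟩ := hθ.exists_op_le N
    refine ⟨c, hc, fun z hz hzN => (hθc (z.1.1, z.2) hz hzN).trans_eq' ?_⟩
    have hsecond (v : (X × Y) × ℝ) : secondLineDeriv (fun z => θ (z.1.1, z.2)) z v =
        secondLineDeriv θ (z.1.1, z.2) (v.1.1, v.2) := rfl
    have hfirst : lineDeriv ℝ (fun z : (X × Y) × ℝ => θ (z.1.1, z.2)) z
        ((L.drift, M.drift), 0) = lineDeriv ℝ θ (z.1.1, z.2) (L.drift, 0) := rfl
    simp only [op, reflect, EllipticOp.prod, Fintype.sum_sum_type, hsecond, hfirst, Sum.inl.injEq,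
      reduceCtorEq, Sum.elim_inl, Sum.elim_inr, if_false, apply_ite]
    have hzero : ((0, 0) : X × ℝ) = 0 := rfl
    simp [hzero]

end Reflection

section LogGauge

variable {κ X : Type*} [Fintype κ] [DecidableEq κ] [NormedAddCommGroup X] [NormedSpace ℝ X]

lemma reflect_op_comp_snd (L : EllipticOp κ X) (k₀ : κ) (φ : ℝ → ℝ) (z : X × ℝ) :
    (L.reflect k₀).op (fun z => φ z.2) z = L.coeff k₀ z.1 * iteratedDeriv 2 φ z.2 := by
  have hfirst : lineDeriv ℝ (fun z : X × ℝ => φ z.2) z (L.reflect k₀).drift = 0 :=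
    lineDeriv_zero (f := φ) (x := z.2)
  have hsecond (k : κ) : secondLineDeriv (fun z : X × ℝ => φ z.2) z ((L.reflect k₀).dir k) =
      if k = k₀ then iteratedDeriv 2 φ z.2 else 0 := by
    change secondLineDeriv φ z.2 ((L.reflect k₀).dir k).2 = _
    by_cases hk : k = k₀ <;> simp [reflect, hk, secondLineDeriv_one]
  simp only [op, hfirst, hsecond, mul_ite, mul_zero, Finset.sum_ite_eq', Finset.mem_univ, if_true,
    add_zero]
  rfl

lemma iteratedDeriv_two_log_one_add {h : ℝ} (hh : 0 < h) :
    iteratedDeriv 2 (fun t => log (1 + t)) h = -(exp (-log (1 + h))) ^ 2 := by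
  rw [iteratedDeriv_two_log (ρ := fun t => 1 + t) (ρ' := fun _ => 1) (by linarith)
    (.of_forall fun s => (hasDerivAt_id s).const_add 1) (hasDerivAt_const h 1), exp_neg,
    exp_log (by linarith)]
  simp

lemma isGauge_log_one_add {L : EllipticOp κ X} {k₀ : κ} (hcoeff : ∀ p, 1 ≤ L.coeff k₀ p) :
    L.IsGauge k₀ fun z => log (1 + z.2) where
  continuousOn := ContinuousOn.log (by fun_prop) fun z hz => by
    have hz : 0 ≤ z.2 := hz
    positivity
  contDiffOn := ContDiffOn.log (by fun_prop) fun z hz => by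
    have hz : 0 < z.2 := hz
    positivity
  nonneg z hz := log_nonneg (by linarith)
  exists_le M := ⟨fun _ => exp M, continuous_const, fun z hz hzM => by
    linarith [(log_le_iff_le_exp (by linarith)).1 hzM]⟩
  exists_op_le N := by
    refine ⟨exp (-N) ^ 2, by positivity, fun z hz hzN => ?_⟩
    rw [L.reflect_op_comp_snd k₀ (fun h => log (1 + h)), iteratedDeriv_two_log_one_add hz,
      mul_neg, neg_le_neg_iff]
    have hexp : exp (-N) ^ 2 ≤ exp (-log (1 + z.2)) ^ 2 := by gcongr
    nlinarith [hcoeff z.1, sq_nonneg (exp (-log (1 + z.2)))]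

end LogGauge

section Warped

variable {ι : Type*} [DecidableEq ι]

/-- The operator `b(s)² Δ_x + ∂_s² + 2γ ∂_s` on functions of `(x, s)`. For `b = exp` it is the
hyperbolic Laplacian in the logarithmic height `s = log y`, conjugated by a power of `y`. -/
noncomputable def warped (b : ℝ → ℝ) (γ : ℝ) :
    EllipticOp (Option ι) (EuclideanSpace ℝ ι × ℝ) where
  coeff k p := k.elim 1 fun _ => b p.2 ^ 2
  coeff_nonneg k p := by
    cases k
    exacts [zero_le_one, sq_nonneg (b p.2)]
  dir k := k.elim (0, 1) fun i => (EuclideanSpace.single i 1, 0)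
  drift := (0, 2 * γ)

variable [Fintype ι]

lemma warped_op (b : ℝ → ℝ) (γ : ℝ) (f : EuclideanSpace ℝ ι × ℝ → ℝ) (x : EuclideanSpace ℝ ι)
    (s : ℝ) :
    (warped b γ).op f (x, s) =
      b s ^ 2 * ∑ i, secondLineDeriv (fun x => f (x, s)) x (EuclideanSpace.single i 1) +
        iteratedDeriv 2 (fun s => f (x, s)) s + 2 * γ * deriv (fun s => f (x, s)) s := by
  simp only [op, warped, Fintype.sum_option, Option.elim_none, Option.elim_some,
    secondLineDeriv_inl, secondLineDeriv_inr, secondLineDeriv_one, lineDeriv_inr, lineDeriv_real,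
    Finset.mul_sum]
  ring

end Warped

section Exhaustion

variable {ι : Type*} [Fintype ι]

/-- `2 cosh` of the hyperbolic distance between the points `(x, eˢ)` and `(0, 1)` of the half-space
model. -/
noncomputable def twoCoshDist (p : EuclideanSpace ℝ ι × ℝ) : ℝ :=
  exp p.2 + exp (-p.2) * (1 + ‖p.1‖ ^ 2)

lemma two_le_twoCoshDist (p : EuclideanSpace ℝ ι × ℝ) : 2 ≤ twoCoshDist p := by
  have hcosh := one_le_cosh p.2
  rw [cosh_eq] at hcosh
  have hx : 0 ≤ exp (-p.2) * ‖p.1‖ ^ 2 := by positivity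
  rw [twoCoshDist]
  linarith

lemma twoCoshDist_pos (p : EuclideanSpace ℝ ι × ℝ) : 0 < twoCoshDist p :=
  two_pos.trans_le (two_le_twoCoshDist p)

lemma norm_le_twoCoshDist (p : EuclideanSpace ℝ ι × ℝ) : ‖p‖ ≤ twoCoshDist p := by
  have hinv : exp p.2 * exp (-p.2) = 1 := by rw [← exp_add, add_neg_cancel, exp_zero]
  have hs := exp_pos p.2
  have hs' := exp_pos (-p.2)
  refine max_le ?_ ?_
  · have hsq : exp p.2 * (1 - exp (-p.2) * ‖p.1‖) ^ 2 =
        exp p.2 + exp (-p.2) * ‖p.1‖ ^ 2 - 2 * ‖p.1‖ := by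
      linear_combination (exp (-p.2) * ‖p.1‖ ^ 2 - 2 * ‖p.1‖) * hinv
    have hsq₀ : 0 ≤ exp p.2 * (1 - exp (-p.2) * ‖p.1‖) ^ 2 := by positivity
    rw [twoCoshDist]
    linarith [norm_nonneg p.1]
  · have hx : 0 ≤ exp (-p.2) * ‖p.1‖ ^ 2 := by positivity
    rw [norm_eq_abs, twoCoshDist, abs_le]
    constructor <;> linarith [add_one_le_exp p.2, add_one_le_exp (-p.2)]

lemma contDiff_log_twoCoshDist :
    ContDiff ℝ 2 fun p : EuclideanSpace ℝ ι × ℝ => log (twoCoshDist p) := by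
  have hnorm : ContDiff ℝ 2 fun p : EuclideanSpace ℝ ι × ℝ => ‖p.1‖ ^ 2 :=
    (contDiff_norm_sq ℝ).comp contDiff_fst
  refine ContDiff.log ?_ fun p => (twoCoshDist_pos p).ne'
  unfold twoCoshDist
  fun_prop

lemma tendsto_log_twoCoshDist :
    Tendsto (fun p : EuclideanSpace ℝ ι × ℝ => log (twoCoshDist p)) (cocompact _) atTop :=
  tendsto_log_atTop.comp
    (tendsto_atTop_mono norm_le_twoCoshDist tendsto_norm_cocompact_atTop)

lemma hasDerivAt_twoCoshDist_right (x : EuclideanSpace ℝ ι) (s : ℝ) :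
    HasDerivAt (fun s => twoCoshDist (x, s)) (exp s - exp (-s) * (1 + ‖x‖ ^ 2)) s := by
  unfold twoCoshDist
  exact ((hasDerivAt_exp s).add ((hasDerivAt_neg s).exp.mul_const (1 + ‖x‖ ^ 2))).congr_deriv
    (by ring)

lemma secondLineDeriv_log_twoCoshDist_inr_le (x : EuclideanSpace ℝ ι) (s : ℝ) :
    secondLineDeriv (fun p => log (twoCoshDist p)) (x, s) (0, 1) ≤ 1 := by
  have hρ' : HasDerivAt (fun s => exp s - exp (-s) * (1 + ‖x‖ ^ 2)) (twoCoshDist (x, s)) s := by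
    unfold twoCoshDist
    exact ((hasDerivAt_exp s).sub ((hasDerivAt_neg s).exp.mul_const (1 + ‖x‖ ^ 2))).congr_deriv
      (by ring)
  rw [secondLineDeriv_inr, secondLineDeriv_one,
    iteratedDeriv_two_log (ρ := fun s => twoCoshDist (x, s)) (twoCoshDist_pos _)
      (.of_forall (hasDerivAt_twoCoshDist_right x)) hρ', div_self (twoCoshDist_pos _).ne']
  exact sub_le_self _ (sq_nonneg _)

lemma lineDeriv_log_twoCoshDist_inr_le (x : EuclideanSpace ℝ ι) (s v : ℝ) :
    lineDeriv ℝ (fun p => log (twoCoshDist p)) (x, s) (0, v) ≤ |v| := by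
  have hpos := twoCoshDist_pos (x, s)
  have hle : |exp s - exp (-s) * (1 + ‖x‖ ^ 2)| ≤ twoCoshDist (x, s) :=
    (abs_sub _ _).trans_eq (by rw [abs_of_pos (by positivity), abs_of_nonneg (by positivity)]; rfl)
  rw [lineDeriv_inr, lineDeriv_real, ((hasDerivAt_twoCoshDist_right x s).log hpos.ne').deriv]
  refine (le_abs_self _).trans ?_
  rw [abs_mul, abs_div, abs_of_pos hpos]
  exact mul_le_of_le_one_right (abs_nonneg v) (div_le_one_of_le₀ hle hpos.le)

variable [DecidableEq ι]

lemma secondLineDeriv_log_twoCoshDist_inl_le (x : EuclideanSpace ℝ ι) (s : ℝ) (i : ι) :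
    exp s ^ 2 * secondLineDeriv (fun p => log (twoCoshDist p)) (x, s)
      (EuclideanSpace.single i 1, 0) ≤ 2 := by
  set e : EuclideanSpace ℝ ι := EuclideanSpace.single i 1
  have hline (t : ℝ) : HasDerivAt (fun t : ℝ => x + t • e) e t := by
    simpa using ((hasDerivAt_id t).smul_const e).const_add x
  have hρ (t : ℝ) : HasDerivAt (fun t : ℝ => twoCoshDist (x + t • e, s))
      (exp (-s) * (2 * inner ℝ (x + t • e) e)) t :=
    (((hline t).norm_sq.const_add 1).const_mul (exp (-s))).const_add (exp s)
  have hρ' : HasDerivAt (fun t : ℝ => exp (-s) * (2 * inner ℝ (x + t • e) e))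
      (exp (-s) * 2) 0 := by
    have hinner := ((hline 0).inner ℝ (hasDerivAt_const (0 : ℝ) e)).const_mul 2
    simpa [e] using hinner.const_mul (exp (-s))
  have hexp : exp s ^ 2 * exp (-s) = exp s := by
    rw [sq, mul_assoc, ← exp_add, add_neg_cancel, exp_zero, mul_one]
  have hle : exp s ≤ twoCoshDist (x + (0 : ℝ) • e, s) :=
    le_add_of_nonneg_right (by positivity)
  rw [secondLineDeriv_inl, secondLineDeriv,
    iteratedDeriv_two_log (ρ := fun t => twoCoshDist (x + t • e, s)) (twoCoshDist_pos _)
      (.of_forall hρ) hρ']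
  calc _ ≤ exp s ^ 2 * (exp (-s) * 2 / twoCoshDist (x + (0 : ℝ) • e, s)) := by
        gcongr
        exact sub_le_self _ (sq_nonneg _)
    _ = 2 * (exp s / twoCoshDist (x + (0 : ℝ) • e, s)) := by
        rw [← mul_div_assoc, ← mul_assoc, hexp]
        ring
    _ ≤ 2 := mul_le_of_le_one_right zero_le_two (div_le_one_of_le₀ hle (twoCoshDist_pos _).le)

lemma isExhaustion_log_twoCoshDist {b : ℝ → ℝ} (hb : ∀ s, |b s| ≤ exp s) (γ : ℝ) :
    (warped b γ).IsExhaustion fun p : EuclideanSpace ℝ ι × ℝ => log (twoCoshDist p) where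
  contDiff := contDiff_log_twoCoshDist
  nonneg p := log_nonneg (one_le_two.trans (two_le_twoCoshDist p))
  tendsto_atTop := tendsto_log_twoCoshDist
  exists_bound := by
    refine ⟨2 + |2 * γ|, by positivity, ?_, fun p =>
      (lineDeriv_log_twoCoshDist_inr_le p.1 p.2 _).trans (le_add_of_nonneg_left zero_le_two)⟩
    have hγ := abs_nonneg (2 * γ)
    rintro (_ | i) ⟨x, s⟩
    · refine (one_mul (secondLineDeriv _ _ _)).trans_le ?_
      exact (secondLineDeriv_log_twoCoshDist_inr_le x s).trans (by linarith)
    · have hx := secondLineDeriv_log_twoCoshDist_inl_le x s i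
      have hb' : b s ^ 2 ≤ exp s ^ 2 := sq_le_sq' (abs_le.1 (hb s)).1 (abs_le.1 (hb s)).2
      change b s ^ 2 * secondLineDeriv _ (x, s) (EuclideanSpace.single i 1, 0) ≤ _
      rcases le_total 0 (secondLineDeriv (fun p => log (twoCoshDist p)) (x, s)
        (EuclideanSpace.single i 1, 0)) with h₀ | h₀
      · exact ((mul_le_mul_of_nonneg_right hb' h₀).trans hx).trans (le_add_of_nonneg_right hγ)
      · exact (mul_nonpos_of_nonneg_of_nonpos (sq_nonneg (b s)) h₀).trans (by positivity)

end Exhaustion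

section HyperbolicGauge

lemma hasDerivAt_log_one_add_arsinh {r : ℝ} (hr : 0 ≤ r) :
    HasDerivAt (fun r => log (1 + arsinh r)) (((1 + arsinh r) * √(1 + r ^ 2))⁻¹) r := by
  have hτ : 0 < 1 + arsinh r := by linarith [arsinh_nonneg_iff.2 hr]
  convert ((hasDerivAt_arsinh r).const_add 1).log hτ.ne' using 1
  rw [mul_inv, div_eq_mul_inv, mul_comm]

lemma hasDerivAt_deriv_log_one_add_arsinh {r : ℝ} (hr : 0 ≤ r) :
    HasDerivAt (fun r => ((1 + arsinh r) * √(1 + r ^ 2))⁻¹)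
      (-(((1 + arsinh r)⁻¹) ^ 2 + r * ((1 + arsinh r) * √(1 + r ^ 2))⁻¹) / (1 + r ^ 2)) r := by
  have hτ : 0 < 1 + arsinh r := by linarith [arsinh_nonneg_iff.2 hr]
  have hq : 0 < 1 + r ^ 2 := by positivity
  have hsq : √(1 + r ^ 2) ^ 2 = 1 + r ^ 2 := sq_sqrt hq.le
  have hroot : 0 < √(1 + r ^ 2) := sqrt_pos.2 hq
  have hsqrt : HasDerivAt (fun r => √(1 + r ^ 2)) (r / √(1 + r ^ 2)) r := by
    refine (((hasDerivAt_pow 2 r).const_add 1).sqrt hq.ne').congr_deriv ?_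
    field_simp
    norm_num
  refine ((((hasDerivAt_arsinh r).const_add 1).mul hsqrt).inv
    (mul_pos hτ hroot).ne').congr_deriv ?_
  simp only [Pi.mul_apply]
  field_simp
  rw [hsq]

variable {ι : Type*} [Fintype ι] [DecidableEq ι]

lemma warped_reflect_op (b : ℝ → ℝ) (γ : ℝ) (i : ι) (F : ℝ → ℝ → ℝ) (x : EuclideanSpace ℝ ι)
    (s h : ℝ) :
    ((warped b γ).reflect (some i)).op (fun z => F z.1.2 z.2) ((x, s), h) =
      iteratedDeriv 2 (fun s => F s h) s + b s ^ 2 * iteratedDeriv 2 (F s) h +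
        2 * γ * deriv (fun s => F s h) s := by
  let f : ℝ × ℝ → ℝ := fun q => F q.1 q.2
  have hsecond (v : (EuclideanSpace ℝ ι × ℝ) × ℝ) :
      secondLineDeriv (fun z => F z.1.2 z.2) ((x, s), h) v =
        secondLineDeriv f (s, h) (v.1.2, v.2) := rfl
  have hfirst : lineDeriv ℝ (fun z : (EuclideanSpace ℝ ι × ℝ) × ℝ => F z.1.2 z.2) ((x, s), h)
      ((0, 2 * γ), 0) = lineDeriv ℝ f (s, h) (2 * γ, 0) := rfl
  have hdir (k : Option ι) : secondLineDeriv f (s, h)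
      ((((warped b γ).reflect (some i)).dir k).1.2, (((warped b γ).reflect (some i)).dir k).2) =
        k.elim (iteratedDeriv 2 (fun s => F s h) s)
          fun j => if j = i then iteratedDeriv 2 (F s) h else 0 := by
    cases k with
    | none => simp [reflect, warped, secondLineDeriv_inl, secondLineDeriv_one, f]
    | some j =>
      by_cases hj : j = i
      · simp [reflect, hj, secondLineDeriv_inr, secondLineDeriv_one, f]
      · have hzero : ((0, 0) : ℝ × ℝ) = 0 := rfl
        simp [reflect, warped, hj, hzero]
  simp only [op, hsecond, hdir]
  simp [reflect, warped, hfirst, lineDeriv_inl, lineDeriv_real, f]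

lemma warped_exp_reflect_op_comp (γ : ℝ) (i : ι) (x : EuclideanSpace ℝ ι) (s h : ℝ)
    {φ φ' : ℝ → ℝ} {φ'' : ℝ} (hφ : ∀ᶠ r in 𝓝 (h * exp (-s)), HasDerivAt φ (φ' r) r)
    (hφ' : HasDerivAt φ' φ'' (h * exp (-s))) :
    ((warped exp γ).reflect (some i)).op (fun z => φ (z.2 * exp (-z.1.2))) ((x, s), h) =
      (1 + (h * exp (-s)) ^ 2) * φ'' +
        (1 - 2 * γ) * (h * exp (-s) * φ' (h * exp (-s))) := by
  have hs (s : ℝ) : HasDerivAt (fun s => h * exp (-s)) (-(h * exp (-s))) s :=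
    ((hasDerivAt_neg s).exp.const_mul h).congr_deriv (by ring)
  have hs' : HasDerivAt (fun s => -(h * exp (-s))) (h * exp (-s)) s :=
    (hs s).neg.congr_deriv (neg_neg _)
  have hh (h : ℝ) : HasDerivAt (fun h => h * exp (-s)) (exp (-s)) h := hasDerivAt_mul_const _
  have hexp : exp s ^ 2 * exp (-s) ^ 2 = 1 := by
    rw [← mul_pow, ← exp_add, add_neg_cancel, exp_zero, one_pow]
  have hderiv : deriv (fun s => φ (h * exp (-s))) s =
      φ' (h * exp (-s)) * -(h * exp (-s)) := (hφ.self_of_nhds.comp s (hs s)).deriv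
  rw [warped_reflect_op exp γ i fun s h => φ (h * exp (-s)), hderiv,
    iteratedDeriv_two_comp (g := fun s => h * exp (-s)) hφ hφ' (.of_forall hs) hs',
    iteratedDeriv_two_comp (g := fun h => h * exp (-s)) hφ hφ' (.of_forall hh)
      (hasDerivAt_const h _)]
  linear_combination φ'' * hexp

lemma warped_exp_reflect_op_log_arsinh_le {γ : ℝ} (hγ : 0 ≤ γ) (i : ι) (x : EuclideanSpace ℝ ι)
    (s : ℝ) {h : ℝ} (hh : 0 < h) :
    ((warped exp γ).reflect (some i)).op (fun z => log (1 + arsinh (z.2 * exp (-z.1.2))))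
      ((x, s), h) ≤ -((1 + arsinh (h * exp (-s)))⁻¹) ^ 2 := by
  have hr : 0 < h * exp (-s) := by positivity
  have hφ : ∀ᶠ r in 𝓝 (h * exp (-s)), HasDerivAt (fun r => log (1 + arsinh r))
      (((1 + arsinh r) * √(1 + r ^ 2))⁻¹) r := by
    filter_upwards [lt_mem_nhds hr] with r hr using hasDerivAt_log_one_add_arsinh hr.le
  rw [warped_exp_reflect_op_comp γ i x s h hφ (hasDerivAt_deriv_log_one_add_arsinh hr.le)]
  have hτ : 0 ≤ arsinh (h * exp (-s)) := arsinh_nonneg_iff.2 hr.le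
  set r := h * exp (-s)
  have hq : 1 + r ^ 2 ≠ 0 := by positivity
  have hdrift : 0 ≤ 2 * γ * (r * ((1 + arsinh r) * √(1 + r ^ 2))⁻¹) := by positivity
  rw [mul_div_cancel₀ _ hq]
  linarith

lemma isGauge_log_one_add_arsinh {γ : ℝ} (hγ : 0 ≤ γ) (i : ι) :
    (warped exp γ).IsGauge (some i) fun z : (EuclideanSpace ℝ ι × ℝ) × ℝ =>
      log (1 + arsinh (z.2 * exp (-z.1.2))) := by
  have hτ (z : (EuclideanSpace ℝ ι × ℝ) × ℝ) (hz : 0 ≤ z.2) :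
      0 ≤ arsinh (z.2 * exp (-z.1.2)) := arsinh_nonneg_iff.2 (by positivity)
  have hτ' (z : (EuclideanSpace ℝ ι × ℝ) × ℝ) (hz : 0 ≤ z.2) :
      0 < 1 + arsinh (z.2 * exp (-z.1.2)) := by linarith [hτ z hz]
  have hcont : ContDiff ℝ 2 fun z : (EuclideanSpace ℝ ι × ℝ) × ℝ =>
      1 + arsinh (z.2 * exp (-z.1.2)) :=
    contDiff_const.add (contDiff_arsinh.comp (by fun_prop))
  refine ⟨hcont.continuous.continuousOn.log fun z hz => (hτ' z hz).ne',
    hcont.contDiffOn.log fun z (hz : 0 < z.2) => (hτ' z hz.le).ne',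
    fun z hz => log_nonneg (by linarith [hτ z hz]), fun M => ?_, fun N => ?_⟩
  · refine ⟨fun p => sinh (exp M) * exp p.2, by fun_prop, fun z hz hzM => ?_⟩
    have hle : arsinh (z.2 * exp (-z.1.2)) ≤ exp M := by
      linarith [(log_le_iff_le_exp (hτ' z hz)).1 hzM]
    rw [← sinh_le_sinh, sinh_arsinh, exp_neg, ← div_eq_mul_inv] at hle
    exact (div_le_iff₀ (exp_pos _)).1 hle
  · refine ⟨exp (-N) ^ 2, by positivity, fun z hz hzN => ?_⟩
    refine (warped_exp_reflect_op_log_arsinh_le hγ i z.1.1 z.1.2 hz).trans (neg_le_neg ?_)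
    rw [← exp_log (hτ' z hz.le), ← exp_neg]
    gcongr

end HyperbolicGauge

section Liouville

variable {ι κ Y : Type*} [Fintype ι] [DecidableEq ι] [Fintype κ]
  [NormedAddCommGroup Y] [NormedSpace ℝ Y] {M : EllipticOp κ Y} {Ψ : Y → ℝ} {γ C : ℝ}
  {G : (EuclideanSpace ℝ ι × ℝ) × Y → ℝ}

lemma apply_eq_of_warped_exp_prod (hγ : 0 ≤ γ) (hΨ : M.IsExhaustion Ψ) (hG : ContDiff ℝ 2 G)
    (hGC : ∀ p, |G p| ≤ C) (hLG : ∀ p, ((warped exp γ).prod M).op G p = 0)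
    (x : EuclideanSpace ℝ ι) (s : ℝ) (y : Y) : G ((x, s), y) = G ((0, s), y) := by
  classical
  have hΦ : ((warped exp γ).prod M).IsExhaustion
      fun p : (EuclideanSpace ℝ ι × ℝ) × Y => log (twoCoshDist p.1) + Ψ p.2 :=
    (isExhaustion_log_twoCoshDist (fun s => (abs_exp s).le) γ).prod hΨ
  let e := (EuclideanSpace.basisFun ι ℝ).toBasis
  let T : EuclideanSpace ℝ ι →ₗ[ℝ] (EuclideanSpace ℝ ι × ℝ) × Y :=
    LinearMap.inl ℝ _ _ ∘ₗ LinearMap.inl ℝ _ _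
  have hdir (i : ι) : T (e i) = ((warped exp γ).prod M).dir (.inl (some i)) := by
    simp [T, e, EllipticOp.prod, warped]
  have htranslate (i : ι) (p : (EuclideanSpace ℝ ι × ℝ) × Y) (t : ℝ) :
      G (p + t • T (e i)) = G p := by
    rw [hdir]
    refine ((isGauge_log_one_add_arsinh hγ i).prod M).apply_add_smul_eq hΦ ?_ hG hGC hLG p t
    rintro ((_ | j) | k) p t <;> simp [EllipticOp.prod, warped]
  simpa [T] using apply_add_map_eq_of_basis e T htranslate ((0, s), y) x

theorem apply_eq_apply_zero_of_warped_exp_prod (hγ : 0 ≤ γ) (hΨ : M.IsExhaustion Ψ)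
    (hG : ContDiff ℝ 2 G) (hGC : ∀ p, |G p| ≤ C)
    (hLG : ∀ p, ((warped exp γ).prod M).op G p = 0) (p : EuclideanSpace ℝ ι × ℝ) (y : Y) :
    G (p, y) = G (0, y) := by
  classical
  have hx := apply_eq_of_warped_exp_prod hγ hΨ hG hGC hLG
  have hΦ : ((warped 0 γ).prod M).IsExhaustion
      fun p : (EuclideanSpace ℝ ι × ℝ) × Y => log (twoCoshDist p.1) + Ψ p.2 :=
    (isExhaustion_log_twoCoshDist (fun s => by simpa using (exp_pos s).le) γ).prod hΨ
  have hLG₀ (q : (EuclideanSpace ℝ ι × ℝ) × Y) : ((warped 0 γ).prod M).op G q = 0 := by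
    have hdiff : DifferentiableAt ℝ G q := hG.differentiable two_ne_zero q
    rw [← hLG q, op_prod _ _ hdiff, op_prod _ _ hdiff, warped_op, warped_op]
    simp [hx, secondLineDeriv, iteratedDeriv_const]
  have hθ : ((warped 0 γ).prod M).IsGauge (.inl none)
      fun z : ((EuclideanSpace ℝ ι × ℝ) × Y) × ℝ => log (1 + z.2) :=
    isGauge_log_one_add fun _ => le_rfl
  have hs := hθ.apply_add_smul_eq hΦ
    (by rintro ((_ | j) | k) p t <;> simp [EllipticOp.prod, warped]) hG hGC hLG₀ ((0, 0), y) p.2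
  calc G (p, y) = G ((0, p.2), y) := hx p.1 p.2 y
    _ = G ((0, 0), y) := by simpa [EllipticOp.prod, warped] using hs
    _ = G (0, y) := rfl

end Liouville

end EllipticOp

section Conjugation

/-- The quotient of `u (x, y)` by `y ^ a` as a function of the logarithmic height `s = log y`, in
which the conjugated hyperbolic Laplacian becomes `warped exp`. -/
noncomputable def logConj {E : Type*} (a : ℝ) (u : E → ℝ → ℝ) (p : E × ℝ) : ℝ :=
  exp (-(a * p.2)) * u p.1 (exp p.2)

lemma hasDerivAt_exp_mul_comp_exp (a : ℝ) {w : ℝ → ℝ} {w' s : ℝ}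
    (hw : HasDerivAt w w' (exp s)) :
    HasDerivAt (fun s => exp (-(a * s)) * w (exp s))
      (exp (-(a * s)) * (exp s * w' - a * w (exp s))) s :=
  (((hasDerivAt_id s).const_mul a).neg.exp.mul (hw.comp s (hasDerivAt_exp s))).congr_deriv
    (by simp only [Pi.neg_apply, id_eq, Function.comp_apply]; ring)

lemma iteratedDeriv_two_exp_mul_comp_exp (a : ℝ) {w : ℝ → ℝ} (hw : ContDiffOn ℝ 2 w (Ioi 0))
    (s : ℝ) :
    iteratedDeriv 2 (fun s => exp (-(a * s)) * w (exp s)) s =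
      exp (-(a * s)) * (exp s ^ 2 * iteratedDeriv 2 w (exp s) +
        (1 - 2 * a) * (exp s * deriv w (exp s)) + a ^ 2 * w (exp s)) := by
  have hw₁ (y : ℝ) (hy : 0 < y) : HasDerivAt w (deriv w y) y :=
    ((hw.differentiableOn two_ne_zero).differentiableAt (Ioi_mem_nhds hy)).hasDerivAt
  have hw₂ (y : ℝ) (hy : 0 < y) : HasDerivAt (deriv w) (iteratedDeriv 2 w y) y := by
    rw [iteratedDeriv_succ, iteratedDeriv_one]
    have hderiv : ContDiffOn ℝ 1 (deriv w) (Ioi 0) := hw.deriv_of_isOpen isOpen_Ioi (by norm_num)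
    exact ((hderiv.differentiableOn one_ne_zero).differentiableAt (Ioi_mem_nhds hy)).hasDerivAt
  have hinner : HasDerivAt (fun y => y * deriv w y - a * w y)
      (deriv w (exp s) + exp s * iteratedDeriv 2 w (exp s) - a * deriv w (exp s)) (exp s) :=
    (((hasDerivAt_id _).mul (hw₂ _ (exp_pos s))).sub ((hw₁ _ (exp_pos s)).const_mul a)).congr_deriv
      (by simp only [one_mul])
  rw [iteratedDeriv_two_eq_of_hasDerivAt
    (.of_forall fun s => hasDerivAt_exp_mul_comp_exp a (hw₁ _ (exp_pos s)))
    (hasDerivAt_exp_mul_comp_exp a hinner)]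
  ring

lemma warped_op_logConj {n : ℕ} {γ μ : ℝ} (hγ : γ ^ 2 = (n : ℝ) ^ 2 / 4 - μ)
    {u : EuclideanSpace ℝ (Fin n) → ℝ → ℝ} {x : EuclideanSpace ℝ (Fin n)}
    (hu : ContDiffOn ℝ 2 (u x) (Ioi 0)) (s : ℝ) :
    (EllipticOp.warped exp γ).op (logConj (n / 2 + γ) u) (x, s) =
      exp (-((n / 2 + γ) * s)) * (hypLap n u x (exp s) + μ * u x (exp s)) := by
  have hdiff : HasDerivAt (u x) (deriv (u x) (exp s)) (exp s) :=
    ((hu.differentiableOn two_ne_zero).differentiableAt (Ioi_mem_nhds (exp_pos s))).hasDerivAt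
  have hx : ∑ i, secondLineDeriv (fun x => u x (exp s)) x (EuclideanSpace.single i 1) =
    lapX u x (exp s) := rfl
  simp only [EllipticOp.warped_op, logConj, secondLineDeriv_const_mul, ← Finset.mul_sum, hx,
    iteratedDeriv_two_exp_mul_comp_exp _ hu, (hasDerivAt_exp_mul_comp_exp _ hdiff).deriv, hypLap]
  linear_combination (exp (-((n / 2 + γ) * s)) * u x (exp s)) * -hγ

variable {n₁ n₂ : ℕ} {u : EuclideanSpace ℝ (Fin n₁) → ℝ → EuclideanSpace ℝ (Fin n₂) → ℝ → ℝ}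

/-- The conjugation `logConj` applied in both half-space factors at once, with exponents `a₁` and
`a₂`. -/
noncomputable def logConj₂ (a₁ a₂ : ℝ)
    (u : EuclideanSpace ℝ (Fin n₁) → ℝ → EuclideanSpace ℝ (Fin n₂) → ℝ → ℝ)
    (p : (EuclideanSpace ℝ (Fin n₁) × ℝ) × (EuclideanSpace ℝ (Fin n₂) × ℝ)) : ℝ :=
  exp (-(a₁ * p.1.2)) * logConj a₂ (u p.1.1 (exp p.1.2)) p.2

lemma contDiff_logConj₂ (a₁ a₂ : ℝ)
    (hu : ContDiffOn ℝ 2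
      (fun p : (EuclideanSpace ℝ (Fin n₁) × ℝ) × (EuclideanSpace ℝ (Fin n₂) × ℝ) =>
        u p.1.1 p.1.2 p.2.1 p.2.2) {p | 0 < p.1.2 ∧ 0 < p.2.2}) :
    ContDiff ℝ 2 (logConj₂ a₁ a₂ u) := by
  have hcomp := hu.comp_contDiff
    (f := fun p : (EuclideanSpace ℝ (Fin n₁) × ℝ) × (EuclideanSpace ℝ (Fin n₂) × ℝ) =>
      ((p.1.1, exp p.1.2), (p.2.1, exp p.2.2)))
    (by fun_prop) (fun p => ⟨exp_pos _, exp_pos _⟩)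
  exact ContDiff.mul (by fun_prop) (ContDiff.mul (by fun_prop) hcomp)

lemma abs_logConj₂_le {a₁ a₂ C : ℝ}
    (hC : ∀ x₁, ∀ y₁ : ℝ, 0 < y₁ → ∀ x₂, ∀ y₂ : ℝ, 0 < y₂ →
      |u x₁ y₁ x₂ y₂| ≤ C * y₁ ^ a₁ * y₂ ^ a₂)
    (p : (EuclideanSpace ℝ (Fin n₁) × ℝ) × (EuclideanSpace ℝ (Fin n₂) × ℝ)) :
    |logConj₂ a₁ a₂ u p| ≤ C := by
  have hinv (a s : ℝ) : exp (-(a * s)) * exp s ^ a = 1 := by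
    rw [← exp_mul, ← exp_add, mul_comm, neg_add_cancel, exp_zero]
  simp only [logConj₂, logConj, abs_mul, abs_exp]
  calc _ ≤ exp (-(a₁ * p.1.2)) * (exp (-(a₂ * p.2.2)) *
        (C * exp p.1.2 ^ a₁ * exp p.2.2 ^ a₂)) := by
        gcongr
        exact hC _ _ (exp_pos _) _ _ (exp_pos _)
    _ = C * (exp (-(a₁ * p.1.2)) * exp p.1.2 ^ a₁) *
        (exp (-(a₂ * p.2.2)) * exp p.2.2 ^ a₂) := by ring
    _ = C := by rw [hinv, hinv, mul_one, mul_one]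

lemma warped_op_logConj₂_left {γ₁ a₂ μ₁ : ℝ} (hγ₁ : γ₁ ^ 2 = (n₁ : ℝ) ^ 2 / 4 - μ₁)
    (hu : ContDiffOn ℝ 2
      (fun p : (EuclideanSpace ℝ (Fin n₁) × ℝ) × (EuclideanSpace ℝ (Fin n₂) × ℝ) =>
        u p.1.1 p.1.2 p.2.1 p.2.2) {p | 0 < p.1.2 ∧ 0 < p.2.2})
    (x₁ : EuclideanSpace ℝ (Fin n₁)) (s₁ : ℝ) (x₂ : EuclideanSpace ℝ (Fin n₂)) (s₂ : ℝ) :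
    (EllipticOp.warped exp γ₁).op (fun p => logConj₂ (n₁ / 2 + γ₁) a₂ u (p, (x₂, s₂)))
        (x₁, s₁) =
      exp (-((n₁ / 2 + γ₁) * s₁)) * exp (-(a₂ * s₂)) *
        (hypLap1 n₁ n₂ u x₁ (exp s₁) x₂ (exp s₂) + μ₁ * u x₁ (exp s₁) x₂ (exp s₂)) := by
  have hslice : ContDiffOn ℝ 2 (fun y => u x₁ y x₂ (exp s₂)) (Ioi 0) :=
    hu.comp (f := fun y : ℝ => ((x₁, y), (x₂, exp s₂))) (by fun_prop)
      fun y hy => ⟨hy, exp_pos s₂⟩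
  have hfactor : (fun p => logConj₂ (n₁ / 2 + γ₁) a₂ u (p, (x₂, s₂))) = fun p =>
      exp (-(a₂ * s₂)) * logConj (n₁ / 2 + γ₁) (fun x y => u x y x₂ (exp s₂)) p := by
    funext p
    exact mul_left_comm _ _ _
  rw [hfactor, EllipticOp.op_const_mul,
    warped_op_logConj hγ₁ (u := fun x y => u x y x₂ (exp s₂)) hslice, hypLap1]
  ring

lemma warped_op_logConj₂_right {γ₂ a₁ μ₂ : ℝ} (hγ₂ : γ₂ ^ 2 = (n₂ : ℝ) ^ 2 / 4 - μ₂)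
    (hu : ContDiffOn ℝ 2
      (fun p : (EuclideanSpace ℝ (Fin n₁) × ℝ) × (EuclideanSpace ℝ (Fin n₂) × ℝ) =>
        u p.1.1 p.1.2 p.2.1 p.2.2) {p | 0 < p.1.2 ∧ 0 < p.2.2})
    (x₁ : EuclideanSpace ℝ (Fin n₁)) (s₁ : ℝ) (x₂ : EuclideanSpace ℝ (Fin n₂)) (s₂ : ℝ) :
    (EllipticOp.warped exp γ₂).op (fun p => logConj₂ a₁ (n₂ / 2 + γ₂) u ((x₁, s₁), p))
        (x₂, s₂) =
      exp (-(a₁ * s₁)) * exp (-((n₂ / 2 + γ₂) * s₂)) *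
        (hypLap2 n₁ n₂ u x₁ (exp s₁) x₂ (exp s₂) + μ₂ * u x₁ (exp s₁) x₂ (exp s₂)) := by
  have hslice : ContDiffOn ℝ 2 (u x₁ (exp s₁) x₂) (Ioi 0) :=
    hu.comp (f := fun y : ℝ => ((x₁, exp s₁), (x₂, y))) (by fun_prop)
      fun y hy => ⟨exp_pos s₁, hy⟩
  change EllipticOp.op _ (fun p => exp (-(a₁ * s₁)) * logConj (n₂ / 2 + γ₂) (u x₁ (exp s₁)) p) _ = _
  rw [EllipticOp.op_const_mul, warped_op_logConj hγ₂ hslice, hypLap2]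
  ring

end Conjugation

theorem weak_with_decay_is_strong_general {n₁ n₂ : ℕ} {μ₁ μ₂ γ₁ γ₂ μ : ℝ} (hγ₁_nonneg : 0 ≤ γ₁)
    (hγ₁ : γ₁ ^ 2 = (n₁ : ℝ) ^ 2 / 4 - μ₁) (hγ₂ : γ₂ ^ 2 = (n₂ : ℝ) ^ 2 / 4 - μ₂)
    (hμ : μ = μ₁ + μ₂)
    {u : EuclideanSpace ℝ (Fin n₁) → ℝ → EuclideanSpace ℝ (Fin n₂) → ℝ → ℝ}
    (huC2 : ContDiffOn ℝ 2
      (fun p : (EuclideanSpace ℝ (Fin n₁) × ℝ) × (EuclideanSpace ℝ (Fin n₂) × ℝ) =>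
        u p.1.1 p.1.2 p.2.1 p.2.2) {p | 0 < p.1.2 ∧ 0 < p.2.2})
    (hweak : ∀ x₁, ∀ y₁ : ℝ, 0 < y₁ → ∀ x₂, ∀ y₂ : ℝ, 0 < y₂ →
      -(hypLap1 n₁ n₂ u x₁ y₁ x₂ y₂ + hypLap2 n₁ n₂ u x₁ y₁ x₂ y₂) = μ * u x₁ y₁ x₂ y₂)
    (hbound : ∃ C : ℝ, ∀ x₁, ∀ y₁ : ℝ, 0 < y₁ → ∀ x₂, ∀ y₂ : ℝ, 0 < y₂ →
      |u x₁ y₁ x₂ y₂| ≤ C * y₁ ^ ((n₁ : ℝ) / 2 + γ₁) * y₂ ^ ((n₂ : ℝ) / 2 + γ₂)) :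
    ∀ x₁, ∀ y₁ : ℝ, 0 < y₁ → ∀ x₂, ∀ y₂ : ℝ, 0 < y₂ →
      -(hypLap1 n₁ n₂ u x₁ y₁ x₂ y₂) = μ₁ * u x₁ y₁ x₂ y₂ ∧
      -(hypLap2 n₁ n₂ u x₁ y₁ x₂ y₂) = μ₂ * u x₁ y₁ x₂ y₂ := by
  obtain ⟨C, hC⟩ := hbound
  set G := logConj₂ (n₁ / 2 + γ₁) (n₂ / 2 + γ₂) u with hG_def
  have hG : ContDiff ℝ 2 G := contDiff_logConj₂ _ _ huC2
  have hLG (p) : ((EllipticOp.warped exp γ₁).prod (EllipticOp.warped exp γ₂)).op G p = 0 := by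
    obtain ⟨⟨x₁, s₁⟩, x₂, s₂⟩ := p
    rw [EllipticOp.op_prod _ _ (hG.differentiable two_ne_zero _), hG_def,
      warped_op_logConj₂_left hγ₁ huC2, warped_op_logConj₂_right hγ₂ huC2]
    have hw := hweak x₁ _ (exp_pos s₁) x₂ _ (exp_pos s₂)
    rw [hμ] at hw
    linear_combination
      -(exp (-((n₁ / 2 + γ₁) * s₁)) * exp (-((n₂ / 2 + γ₂) * s₂))) * hw
  have hindep := EllipticOp.apply_eq_apply_zero_of_warped_exp_prod hγ₁_nonneg
    (EllipticOp.isExhaustion_log_twoCoshDist (fun s => (abs_exp s).le) γ₂) hG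
    (abs_logConj₂_le hC) hLG
  intro x₁ y₁ hy₁ x₂ y₂ hy₂
  have hleft := warped_op_logConj₂_left (a₂ := n₂ / 2 + γ₂) hγ₁ huC2 x₁ (log y₁) x₂ (log y₂)
  simp only [← hG_def, hindep, EllipticOp.op_const, exp_log hy₁, exp_log hy₂] at hleft
  have hstrong := (mul_eq_zero.1 hleft.symm).resolve_left (by positivity)
  constructor <;> linarith [hweak x₁ y₁ hy₁ x₂ y₂ hy₂, congrArg (· * u x₁ y₁ x₂ y₂) hμ]

/-- a positive weakly `μ`-harmonic C² function on `ℍ^{n₁+1} × ℍ^{n₂+1}`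
bounded by `C·y₁^{n₁/2+γ₁} y₂^{n₂/2+γ₂}` is strongly `(μ₁,μ₂)`-harmonic. -/
theorem weak_with_decay_is_strong
    (n₁ n₂ : ℕ) (hn₁ : 1 ≤ n₁) (hn₂ : 1 ≤ n₂)
    (μ₁ μ₂ γ₁ γ₂ μ : ℝ)
    (hμ₁ : μ₁ < (n₁ : ℝ)^2/4) (hμ₂ : μ₂ < (n₂ : ℝ)^2/4)
    (hγ₁ : γ₁ = Real.sqrt ((n₁ : ℝ)^2/4 - μ₁)) (hγ₂ : γ₂ = Real.sqrt ((n₂ : ℝ)^2/4 - μ₂))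
    (hμ : μ = μ₁ + μ₂)
    (u : EuclideanSpace ℝ (Fin n₁) → ℝ → EuclideanSpace ℝ (Fin n₂) → ℝ → ℝ)
    (hupos : ∀ x₁, ∀ y₁ : ℝ, 0 < y₁ → ∀ x₂, ∀ y₂ : ℝ, 0 < y₂ → 0 < u x₁ y₁ x₂ y₂)
    (huC2 : ContDiffOn ℝ 2
      (fun p : (EuclideanSpace ℝ (Fin n₁) × ℝ) × (EuclideanSpace ℝ (Fin n₂) × ℝ) =>
        u p.1.1 p.1.2 p.2.1 p.2.2)
      {p : (EuclideanSpace ℝ (Fin n₁) × ℝ) × (EuclideanSpace ℝ (Fin n₂) × ℝ) |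
        0 < p.1.2 ∧ 0 < p.2.2})
    (hweak : ∀ x₁, ∀ y₁ : ℝ, 0 < y₁ → ∀ x₂, ∀ y₂ : ℝ, 0 < y₂ →
      -(hypLap1 n₁ n₂ u x₁ y₁ x₂ y₂ + hypLap2 n₁ n₂ u x₁ y₁ x₂ y₂) = μ * u x₁ y₁ x₂ y₂)
    (hbound : ∃ C : ℝ, 0 < C ∧ ∀ x₁, ∀ y₁ : ℝ, 0 < y₁ → ∀ x₂, ∀ y₂ : ℝ, 0 < y₂ →
      u x₁ y₁ x₂ y₂ ≤ C * y₁ ^ ((n₁ : ℝ)/2 + γ₁) * y₂ ^ ((n₂ : ℝ)/2 + γ₂)) :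
    ∀ x₁, ∀ y₁ : ℝ, 0 < y₁ → ∀ x₂, ∀ y₂ : ℝ, 0 < y₂ →
      -(hypLap1 n₁ n₂ u x₁ y₁ x₂ y₂) = μ₁ * u x₁ y₁ x₂ y₂ ∧
      -(hypLap2 n₁ n₂ u x₁ y₁ x₂ y₂) = μ₂ * u x₁ y₁ x₂ y₂ := by
  obtain ⟨C, -, hC⟩ := hbound
  refine weak_with_decay_is_strong_general (hγ₁ ▸ Real.sqrt_nonneg _)
    (hγ₁ ▸ Real.sq_sqrt (sub_nonneg.2 hμ₁.le)) (hγ₂ ▸ Real.sq_sqrt (sub_nonneg.2 hμ₂.le)) hμ huC2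
    hweak ⟨C, fun x₁ y₁ hy₁ x₂ y₂ hy₂ => ?_⟩
  simpa only [abs_of_pos (hupos x₁ y₁ hy₁ x₂ y₂ hy₂)] using hC x₁ y₁ hy₁ x₂ y₂ hy₂
end
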